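/- (Bourgain–Kontorovich) For every alphabet 𝒜 with δ_𝒜 > 1 − 5/312, there exist a constant c > 0 and N₀ such that for every integer N ≥ N₀ one has #𝔇_𝒜(N) ≥ c·N. -/

import Mathlib

open Real Filter

noncomputable section

/-- The continuant `⟨d₁,…,d_k⟩`, with `⟨⟩ = 1`, satisfying
`⟨d₁,…,d_k⟩ = d₁·⟨d₂,…,d_k⟩ + ⟨d₃,…,d_k⟩`. -/
def cont : List ℕ → ℕ
  | [] => 1
  | [d] => d
  | d :: e :: l => d * cont (e :: l) + cont l

/-- The value of the finite continued fraction `[d₁,…,d_k] = ⟨d₂,…,d_k⟩ / ⟨d₁,…,d_k⟩`. -/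
def cfVal (l : List ℕ) : ℝ := (cont l.tail : ℝ) / (cont l : ℝ)

/-- The set `E_𝒜` of values of infinite continued fractions `[0; d₁, d₂, …]`
with all partial quotients in `𝒜`. -/
def cfSet (A : Finset ℕ) : Set ℝ :=
  {x | ∃ d : ℕ → ℕ, (∀ i, d i ∈ A) ∧
    Tendsto (fun k => cfVal ((List.range k).map d)) atTop (nhds x)}

/-- `δ_𝒜`, the Hausdorff dimension of `E_𝒜` (as a real number). -/
def hdim (A : Finset ℕ) : ℝ := (dimH (cfSet A)).toReal

/-- `𝔇_𝒜(N)`: the set of positive integers `d ≤ N` representable as a continuant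
of a finite sequence with entries in `𝒜`. -/
def DD (A : Finset ℕ) (N : ℕ) : Set ℕ :=
  {d | 0 < d ∧ d ≤ N ∧ ∃ l : List ℕ, l ≠ [] ∧ (∀ x ∈ l, x ∈ A) ∧ cont l = d}

/-!
The size of `DD A N` is bounded below by Fourier analysis modulo `R = N + 1`. For a set `Ω` of words
with continuants in `[N / C, N]` and `S(k) = ∑ w ∈ Ω, exp (2πi k ⟨w⟩ / R)`, Parseval and
Cauchy–Schwarz give `R |Ω|² ≤ #DD A N * ∑ k, ‖S(k)‖²`, so it suffices to find `Ω` with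
`∑ k, ‖S(k)‖² ≪ |Ω|²`.

The Hausdorff dimension enters through a covering argument: for `s < δ`, the sum of `⟨w⟩ ^ (-2 s)`
over the words `w` of length `k` is not small. Pigeonholing yields, for every large `k`, a set of
at least `W ^ 1.9` words of length `k` with nearly equal continuants of size about `W`.
Concatenating such blocks for consecutive `k` gives a family of words of size about `√N`, and `Ω`
consists of the words `u F v` with `u` and the reversal of `v` in this family, the short filler `F`
adjusting the size. A word of `Ω` can be cut at any scale near its left end, and by symmetry near
its right end.

By Dirichlet, write `k / R = a / q + b / (q R)`. For any cut `w = u v`, the continuant of `w` is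
bilinear in vectors attached to `u` and `v`, and a two-dimensional large sieve over `u` bounds the
sum of `‖S(k)‖²` over a set of frequencies by the number of pairs `(k, v)` whose points
`k (⟨v⟩, ⟨v⁻⟩) mod R` collide, where `v⁻` is `v` without its first letter. If all `q` and `|b|` are
at most `P`, cutting when `u` has size a little above `P²` makes every collision of `(k, v)` with
`(k', v')` force `q` to divide the determinant `⟨v⟩⟨v'⁻⟩ - ⟨v⁻⟩⟨v'⟩` and the determinant to be at
most about `q L² / |b|`, where `L` is the size of `v`, while each `v'` occurs with boundedly many
`k'`. So `v'` is confined to a congruence class modulo `q` and, through `⟨v'⁻⟩ / ⟨v'⟩`, to an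
interval of length about `q / |b|`, which saves a power of `P` if `q` or `|b| / q` is at least `√P`.
A dyadic sum over `P` handles `q, |b| ≤ N ^ 0.12`. For the other frequencies, `v` is taken of size
about `N ^ 0.12`, where the bounds `q ≤ √R` and `|b| ≤ √R` suffice to analyse the collisions.
-/

namespace Continuant

/-! ### Continuants as matrix entries -/

/-- The matrix `∏ [[dᵢ, 1], [1, 0]]` of a word `d₁ … d_k`; its entries are the four continuants
`⟨d₁,…,d_k⟩`, `⟨d₁,…,d_{k-1}⟩`, `⟨d₂,…,d_k⟩`, `⟨d₂,…,d_{k-1}⟩`. -/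
def mat (l : List ℕ) : Matrix (Fin 2) (Fin 2) ℤ :=
  (l.map fun d : ℕ => !![(d : ℤ), 1; 1, 0]).prod

/-- The continuant `⟨d₁,…,d_k⟩`: the denominator of `[d₁,…,d_k]`. -/
def den (l : List ℕ) : ℤ := mat l 0 0

/-- The continuant `⟨d₁,…,d_{k-1}⟩`: the denominator of the previous convergent
(`0` for the empty word). -/
def prevDen (l : List ℕ) : ℤ := mat l 0 1

/-- The continuant `⟨d₂,…,d_k⟩`: the numerator of `[d₁,…,d_k]` (`0` for the empty word). -/
def num (l : List ℕ) : ℤ := mat l 1 0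

/-- The continuant `⟨d₂,…,d_{k-1}⟩`: the numerator of the previous convergent
(`1` for the empty word). -/
def prevNum (l : List ℕ) : ℤ := mat l 1 1

/-- A word all of whose letters are positive. -/
def IsPositive (l : List ℕ) : Prop := ∀ d ∈ l, 0 < d

/-- The value `num l / den l` of the continued fraction `[d₁,…,d_k]`. -/
def value (l : List ℕ) : ℝ := num l / den l

/-- The value of the continued fraction `[d_k,…,d₁]` of the reversed word. -/
def revValue (l : List ℕ) : ℝ := prevDen l / den l

section Algebra

variable (d : ℕ) (l m : List ℕ)

lemma mat_cons : mat (d :: l) = !![(d : ℤ), 1; 1, 0] * mat l := by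
  simp [mat]

lemma mat_append : mat (l ++ m) = mat l * mat m := by
  simp [mat]

lemma mat_reverse : mat l.reverse = (mat l).transpose := by
  induction l with
  | nil => simp [mat]
  | cons d l ih =>
    rw [List.reverse_cons, mat_append, ih, mat_cons d l, Matrix.transpose_mul]
    congr 1
    ext i j
    fin_cases i <;> fin_cases j <;> simp [mat]

@[simp] lemma den_nil : den [] = 1 := by simp [den, mat]
@[simp] lemma prevDen_nil : prevDen [] = 0 := by simp [prevDen, mat]
@[simp] lemma num_nil : num [] = 0 := by simp [num, mat]
@[simp] lemma prevNum_nil : prevNum [] = 1 := by simp [prevNum, mat]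

lemma den_cons : den (d :: l) = d * den l + num l := by
  simp [den, num, mat_cons, Matrix.mul_apply, Fin.sum_univ_two]

lemma prevDen_cons : prevDen (d :: l) = d * prevDen l + prevNum l := by
  simp [prevDen, prevNum, mat_cons, Matrix.mul_apply, Fin.sum_univ_two]

lemma num_cons : num (d :: l) = den l := by
  simp [den, num, mat_cons, Matrix.mul_apply, Fin.sum_univ_two]

lemma prevNum_cons : prevNum (d :: l) = prevDen l := by
  simp [prevDen, prevNum, mat_cons, Matrix.mul_apply, Fin.sum_univ_two]

lemma den_append : den (l ++ m) = den l * den m + prevDen l * num m := by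
  simp [den, prevDen, num, mat_append, Matrix.mul_apply, Fin.sum_univ_two]

lemma num_append : num (l ++ m) = num l * den m + prevNum l * num m := by
  simp [den, prevNum, num, mat_append, Matrix.mul_apply, Fin.sum_univ_two]

lemma den_reverse : den l.reverse = den l := by simp [den, mat_reverse]
lemma num_reverse : num l.reverse = prevDen l := by simp [prevDen, num, mat_reverse]

lemma revValue_eq_value_reverse : revValue l = value l.reverse := by
  simp [revValue, value, num_reverse, den_reverse]

lemma cont_eq_den : (cont l : ℤ) = den l := by
  induction l using cont.induct with
  | case1 => simp [cont]
  | case2 d => simp [cont, den_cons]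
  | case3 d e l ih₁ ih₂ =>
    rw [cont, den_cons, num_cons]
    push_cast
    rw [ih₁, ih₂]

variable {l} in
lemma cfVal_eq_value (hl : l ≠ []) : cfVal l = value l := by
  obtain ⟨d, l, rfl⟩ := List.exists_cons_of_ne_nil hl
  rw [cfVal, value, num_cons, ← cont_eq_den, ← cont_eq_den]
  simp

lemma den_mul_prevNum_sub : den l * prevNum l - prevDen l * num l = (-1) ^ l.length := by
  induction l with
  | nil => simp
  | cons d l ih =>
    rw [den_cons, prevDen_cons, num_cons, prevNum_cons, List.length_cons, pow_succ, ← ih]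
    ring

lemma isCoprime_den_num : IsCoprime (den l) (num l) := by
  have hdet := den_mul_prevNum_sub l
  rcases neg_one_pow_eq_or ℤ l.length with h | h <;> rw [h] at hdet
  · exact ⟨prevNum l, -prevDen l, by linarith⟩
  · exact ⟨-prevNum l, prevDen l, by linarith⟩

lemma entries_nonneg : 0 ≤ den l ∧ 0 ≤ prevDen l ∧ 0 ≤ num l ∧ 0 ≤ prevNum l := by
  induction l with
  | nil => simp
  | cons d l ih =>
    obtain ⟨hden, hprevDen, hnum, hprevNum⟩ := ih
    rw [den_cons, prevDen_cons, num_cons, prevNum_cons]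
    exact ⟨by positivity, by positivity, hden, hprevDen⟩

lemma den_nonneg : 0 ≤ den l := (entries_nonneg l).1
lemma prevDen_nonneg : 0 ≤ prevDen l := (entries_nonneg l).2.1
lemma num_nonneg : 0 ≤ num l := (entries_nonneg l).2.2.1

lemma abs_num_append_mul_den_sub :
    |num (l ++ m) * den l - num l * den (l ++ m)| = num m := by
  have hfactor : num (l ++ m) * den l - num l * den (l ++ m) =
      (den l * prevNum l - prevDen l * num l) * num m := by
    rw [num_append, den_append]
    ring
  rw [hfactor, den_mul_prevNum_sub, abs_mul, abs_neg_one_pow, one_mul,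
    abs_of_nonneg (num_nonneg m)]

lemma den_mul_den_le : den l * den m ≤ den (l ++ m) := by
  rw [den_append]
  exact le_add_of_nonneg_right (mul_nonneg (prevDen_nonneg l) (num_nonneg m))

end Algebra

namespace IsPositive

variable {d : ℕ} {l m : List ℕ}

lemma append (hl : IsPositive l) (hm : IsPositive m) : IsPositive (l ++ m) :=
  List.forall_mem_append.2 ⟨hl, hm⟩

lemma reverse (hl : IsPositive l) : IsPositive l.reverse :=
  fun d hd => hl d (List.mem_reverse.1 hd)

lemma tail (hl : IsPositive (d :: l)) : IsPositive l :=
  (List.forall_mem_cons.1 hl).2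

lemma one_le_head (hl : IsPositive (d :: l)) : 1 ≤ (d : ℤ) :=
  mod_cast (List.forall_mem_cons.1 hl).1

lemma one_le_den (hl : IsPositive l) : 1 ≤ den l := by
  induction l with
  | nil => simp
  | cons d l ih =>
    rw [den_cons]
    nlinarith [ih hl.tail, hl.one_le_head, num_nonneg l]

lemma den_pos (hl : IsPositive l) : (0 : ℝ) < den l :=
  mod_cast hl.one_le_den

lemma num_le_den (hl : IsPositive l) : num l ≤ den l := by
  cases l with
  | nil => simp
  | cons d l =>
    rw [den_cons, num_cons]
    nlinarith [hl.one_le_head, num_nonneg l, den_nonneg l]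

lemma prevDen_le_den (hl : IsPositive l) : prevDen l ≤ den l := by
  simpa only [num_reverse, den_reverse] using hl.reverse.num_le_den

lemma den_append_le (hl : IsPositive l) (hm : IsPositive m) :
    den (l ++ m) ≤ 2 * (den l * den m) := by
  have := mul_le_mul hl.prevDen_le_den hm.num_le_den (num_nonneg m) (den_nonneg l)
  rw [den_append]
  linarith

lemma two_pow_le_den (hl : IsPositive l) : (2 : ℤ) ^ (l.length / 2) ≤ den l := by
  induction l using cont.induct with
  | case1 => simp
  | case2 d => simpa using hl.one_le_den
  | case3 d e l _ ih =>
    have htail : den l ≤ e * den l + num l := by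
      nlinarith [hl.tail.one_le_head, den_nonneg l, num_nonneg l]
    have hlen : (d :: e :: l).length / 2 = l.length / 2 + 1 := by
      simp only [List.length_cons]
      omega
    rw [hlen, pow_succ, den_cons, num_cons, den_cons]
    nlinarith [ih hl.tail.tail, hl.one_le_head, den_nonneg l]

lemma den_le_pow (hl : IsPositive l) {K : ℕ} (hK : ∀ x ∈ l, x ≤ K) :
    den l ≤ ((K : ℤ) + 1) ^ l.length := by
  induction l with
  | nil => simp
  | cons d l ih =>
    obtain ⟨hd, hK⟩ := List.forall_mem_cons.1 hK
    have hd : (d : ℤ) ≤ K := mod_cast hd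
    rw [den_cons, List.length_cons, pow_succ]
    nlinarith [ih hl.tail hK, hl.tail.num_le_den, den_nonneg l, hd]

lemma abs_value_append_sub_le (hl : IsPositive l) (hm : IsPositive m) :
    |value (l ++ m) - value l| ≤ 1 / (den l : ℝ) ^ 2 := by
  have hl₀ := hl.den_pos
  have hlm₀ := (hl.append hm).den_pos
  have hdiff : value (l ++ m) - value l =
      ((num (l ++ m) * den l - num l * den (l ++ m) : ℤ) : ℝ) / (den (l ++ m) * den l) := by
    rw [value, value, div_sub_div _ _ hlm₀.ne' hl₀.ne']
    push_cast
    ring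
  have hnum : (num m : ℝ) * den l ≤ den (l ++ m) := by
    have : num m * den l ≤ den (l ++ m) :=
      (mul_le_mul_of_nonneg_right hm.num_le_den (den_nonneg l)).trans
        ((mul_comm _ _).trans_le (den_mul_den_le l m))
    exact_mod_cast this
  rw [hdiff, abs_div, ← Int.cast_abs, abs_num_append_mul_den_sub, abs_of_pos (mul_pos hlm₀ hl₀),
    div_le_div_iff₀ (mul_pos hlm₀ hl₀) (pow_pos hl₀ 2)]
  nlinarith

lemma abs_revValue_append_sub_le (hl : IsPositive l) (hm : IsPositive m) :
    |revValue (l ++ m) - revValue m| ≤ 1 / (den m : ℝ) ^ 2 := by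
  simpa only [revValue_eq_value_reverse, List.reverse_append, den_reverse] using
    hm.reverse.abs_value_append_sub_le hl.reverse

lemma value_mem_Icc (hl : IsPositive l) : value l ∈ Set.Icc 0 1 := by
  have hnum : (0 : ℝ) ≤ num l := mod_cast num_nonneg l
  exact ⟨div_nonneg hnum hl.den_pos.le,
    (div_le_one hl.den_pos).2 (mod_cast hl.num_le_den)⟩

lemma revValue_mem_Icc (hl : IsPositive l) : revValue l ∈ Set.Icc 0 1 :=
  revValue_eq_value_reverse l ▸ hl.reverse.value_mem_Icc

lemma den_append_eq (hl : IsPositive l) (hm : IsPositive m) :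
    (den (l ++ m) : ℝ) = den l * den m * (1 + revValue l * value m) := by
  have := hl.den_pos
  have := hm.den_pos
  rw [den_append, revValue, value]
  push_cast
  field_simp

lemma num_lt_den (hl : IsPositive l) (hlen : l.length ≠ 1) : num l < den l := by
  match l, hlen with
  | [], _ => simp
  | [_], hlen => simp at hlen
  | d :: e :: l, _ =>
    rw [den_cons, num_cons, num_cons]
    nlinarith [hl.one_le_head, hl.tail.one_le_den, hl.tail.tail.one_le_den]

/-- Words of different lengths can share both continuants, as `[…, d, 1] = […, d + 1]`. -/
lemma eq_of_den_eq_of_num_eq {l' : List ℕ} (hl : IsPositive l) (hl' : IsPositive l')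
    (hlen : l.length = l'.length) (hden : den l = den l') (hnum : num l = num l') : l = l' := by
  induction l generalizing l' with
  | nil => exact (List.length_eq_zero_iff.1 hlen.symm).symm
  | cons d l ih =>
    obtain ⟨d', l', rfl⟩ := List.exists_cons_of_length_eq_add_one hlen.symm
    rw [List.length_cons, List.length_cons, Nat.add_right_cancel_iff] at hlen
    rw [num_cons, num_cons] at hnum
    rw [den_cons, den_cons, ← hnum] at hden
    by_cases hone : l.length = 1
    · obtain ⟨x, rfl⟩ := List.length_eq_one_iff.1 hone
      obtain ⟨x', rfl⟩ := List.length_eq_one_iff.1 (hlen ▸ hone)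
      obtain rfl : x = x' := by simpa [den_cons] using hnum
      have hx : x ≠ 0 := (hl.tail x (by simp)).ne'
      obtain rfl : d = d' := by simpa [den_cons, num_cons, hx] using hden
      rfl
    · have hlt := hl.tail.num_lt_den hone
      have hlt' := hnum ▸ hl'.tail.num_lt_den (hlen ▸ hone)
      have hd : (d : ℤ) = d' := by
        have := num_nonneg l
        have := num_nonneg l'
        rcases lt_trichotomy (d : ℤ) d' with h | h | h
        · nlinarith [Int.add_one_le_iff.2 h]
        · exact h
        · nlinarith [Int.add_one_le_iff.2 h]
      have hnum' : num l = num l' := by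
        rw [hd] at hden
        exact add_left_cancel hden
      rw [ih hl.tail hl'.tail hlen hnum hnum', Nat.cast_injective hd]

end IsPositive

/-! ### Words and the Hausdorff dimension -/

/-- The words of length `k` over the alphabet `A`. -/
def words (A : Finset ℕ) : ℕ → Finset (List ℕ)
  | 0 => {[]}
  | k + 1 => (A ×ˢ words A k).image fun p => p.1 :: p.2

section Words

variable {A : Finset ℕ}

lemma mem_words {k : ℕ} {l : List ℕ} : l ∈ words A k ↔ l.length = k ∧ ∀ x ∈ l, x ∈ A := by
  induction k generalizing l with
  | zero => cases l <;> simp [words]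
  | succ k ih => cases l <;> simp [words, ih, and_left_comm]

lemma ediam_closedBall_value (w : List ℕ) :
    Metric.ediam (Metric.closedBall (value w) (1 / (den w : ℝ) ^ 2)) =
      ENNReal.ofReal (2 / (den w : ℝ) ^ 2) := by
  rw [Real.closedBall_eq_Icc, Real.ediam_Icc]
  congr 1
  ring

variable (hpos : ∀ a ∈ A, 0 < a)
include hpos

lemma isPositive_of_mem_words {k : ℕ} {w : List ℕ} (hw : w ∈ words A k) : IsPositive w :=
  fun x hx => hpos x ((mem_words.1 hw).2 x hx)

lemma two_pow_le_den_of_mem_words {k : ℕ} {w : List ℕ} (hw : w ∈ words A k) :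
    (2 : ℝ) ^ (k / 2) ≤ den w := by
  have := (isPositive_of_mem_words hpos hw).two_pow_le_den
  rw [(mem_words.1 hw).1] at this
  exact_mod_cast this

lemma exists_word_mem_closedBall {k : ℕ} (hk : 0 < k) {x : ℝ} (hx : x ∈ cfSet A) :
    ∃ w ∈ words A k, x ∈ Metric.closedBall (value w) (1 / (den w : ℝ) ^ 2) := by
  obtain ⟨d, hd, hlim⟩ := hx
  have hw : (List.range k).map d ∈ words A k := mem_words.2 ⟨by simp, by simp [hd]⟩
  refine ⟨_, hw, Metric.isClosed_closedBall.mem_of_tendsto hlim ?_⟩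
  filter_upwards [eventually_ge_atTop k] with n hn
  obtain ⟨m, rfl⟩ := Nat.exists_eq_add_of_le hn
  have hne : (List.range (k + m)).map d ≠ [] := by simp; lia
  rw [cfVal_eq_value hne, List.range_add, List.map_append, Metric.mem_closedBall, Real.dist_eq]
  refine (isPositive_of_mem_words hpos hw).abs_value_append_sub_le fun x hx => ?_
  obtain ⟨i, -, rfl⟩ := List.mem_map.1 hx
  exact hpos _ (hd i)

lemma eventually_one_le_sum_rpow {s : ℝ} (hs₀ : 0 ≤ s) (hs : s < hdim A) :
    ∀ᶠ k : ℕ in atTop, 1 ≤ ∑ w ∈ words A k, (2 / (den w : ℝ) ^ 2) ^ s := by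
  lift s to NNReal using hs₀
  have hinf : MeasureTheory.Measure.hausdorffMeasure (s : ℝ) (cfSet A) = ⊤ := by
    apply hausdorffMeasure_of_lt_dimH
    rwa [← ENNReal.toReal_lt_toReal ENNReal.coe_ne_top (Real.dimH_ne_top _)]
  have hmesh : Tendsto (fun k : ℕ => ENNReal.ofReal (2 / ((2 : ℝ) ^ (k / 2)) ^ 2)) atTop
      (nhds 0) := by
    rw [← ENNReal.ofReal_zero]
    have hpow : Tendsto (fun k : ℕ => (2 : ℝ) ^ (k / 2)) atTop atTop :=
      (tendsto_pow_atTop_atTop_of_one_lt one_lt_two).comp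
        (Nat.tendsto_div_const_atTop two_ne_zero)
    exact ENNReal.tendsto_ofReal
      (((tendsto_pow_atTop two_ne_zero).comp hpow).const_div_atTop 2)
  have hcover := MeasureTheory.Measure.hausdorffMeasure_le_liminf_sum (s : ℝ) (cfSet A) _ hmesh
    (fun k (w : words A k) => Metric.closedBall (value w) (1 / (den (w : List ℕ) : ℝ) ^ 2))
    (.of_forall fun k w => by
      rw [ediam_closedBall_value]
      have := two_pow_le_den_of_mem_words (A := A) hpos w.2
      gcongr)
    (by
      filter_upwards [eventually_gt_atTop 0] with k hk x hx
      obtain ⟨w, hw, hx⟩ := exists_word_mem_closedBall hpos hk hx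
      exact Set.mem_iUnion.2 ⟨⟨w, hw⟩, hx⟩)
  rw [hinf, top_le_iff] at hcover
  filter_upwards [eventually_lt_of_lt_liminf (ENNReal.one_lt_top.trans_eq hcover.symm)] with k hk
  simp only [ediam_closedBall_value] at hk
  rw [Finset.sum_coe_sort (words A k) fun w => ENNReal.ofReal (2 / (den w : ℝ) ^ 2) ^ (s : ℝ)] at hk
  have hsum : ∑ w ∈ words A k, ENNReal.ofReal (2 / (den w : ℝ) ^ 2) ^ (s : ℝ) =
      ENNReal.ofReal (∑ w ∈ words A k, (2 / (den w : ℝ) ^ 2) ^ (s : ℝ)) := by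
    rw [ENNReal.ofReal_sum_of_nonneg fun w _ => by positivity]
    exact Finset.sum_congr rfl fun w _ => ENNReal.ofReal_rpow_of_nonneg (by positivity) s.2
  rw [hsum, ← ENNReal.ofReal_one, ENNReal.ofReal_lt_ofReal_iff_of_nonneg zero_le_one] at hk
  exact hk.le

end Words

/-! ### Blocks of comparable words -/

/-- A set `B` of words of length `k` over `A` whose continuants have size about `W` and agree, as do
the values of the words and of their reversals, up to errors of order `1 / k²`, and which has at
least `W ^ 1.9` elements. `K` stands for a bound on the letters and only serves to bound `W`. -/
structure IsBlock (A : Finset ℕ) (K k : ℕ) (B : Finset (List ℕ)) (W : ℝ) : Prop where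
  subset_words : B ⊆ words A k
  den_le_exp_mul : ∀ w ∈ B, ∀ w' ∈ B, (den w : ℝ) ≤ exp (1 / (k : ℝ) ^ 2) * den w'
  abs_revValue_sub_le : ∀ w ∈ B, ∀ w' ∈ B, |revValue w - revValue w'| ≤ 1 / (k : ℝ) ^ 2
  abs_value_sub_le : ∀ w ∈ B, ∀ w' ∈ B, |value w - value w'| ≤ 1 / (k : ℝ) ^ 2
  two_mul_den_le : ∀ w ∈ B, 2 * (den w : ℝ) ≤ W
  rpow_le_den : ∀ w ∈ B, W ^ (0.999 : ℝ) ≤ den w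
  rpow_le_card : W ^ (1.9 : ℝ) ≤ B.card
  two_pow_le : (2 : ℝ) ^ (k / 2) ≤ W
  le_mul_pow : W ≤ 6 * ((K : ℝ) + 1) ^ k
  length_le_den : ∀ w ∈ B, (k : ℝ) ≤ den w

lemma eventually_mul_pow_le_rpow (C : ℝ) (n : ℕ) {e : ℝ} (he : 0 < e) :
    ∀ᶠ k : ℕ in atTop, C * (k : ℝ) ^ n ≤ ((2 : ℝ) ^ (k / 2)) ^ e := by
  have hbase : (1 : ℝ) < 2 ^ (e / 2) := Real.one_lt_rpow one_lt_two (half_pos he)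
  have hlim := (tendsto_pow_const_div_const_pow_of_one_lt n hbase).const_mul (2 ^ (e / 2) * C)
  rw [mul_zero] at hlim
  filter_upwards [hlim.eventually_lt_const one_pos] with k hk
  have hhalf : (k : ℝ) ≤ 2 * ((k / 2 : ℕ) : ℝ) + 1 := by
    have : k ≤ 2 * (k / 2) + 1 := by lia
    exact_mod_cast this
  rw [mul_div_assoc', div_lt_one (by positivity)] at hk
  have hpow : ((2 : ℝ) ^ (e / 2)) ^ k ≤ 2 ^ (e / 2) * ((2 : ℝ) ^ (k / 2)) ^ e := by
    rw [← Real.rpow_natCast, ← Real.rpow_natCast, ← Real.rpow_mul two_pos.le,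
      ← Real.rpow_mul two_pos.le, ← Real.rpow_add two_pos]
    exact Real.rpow_le_rpow_of_exponent_le one_le_two (by nlinarith)
  rw [mul_assoc] at hk
  exact le_of_mul_le_mul_left (hk.le.trans hpow) (by positivity)

section Cells

/-- The cell of a word in the subdivision of the ranges of `log (den w)`, `revValue w` and
`value w` into intervals of length `1 / k²`. -/
def cell (k : ℕ) (w : List ℕ) : ℕ × ℕ × ℕ :=
  (⌊(k : ℝ) ^ 2 * log (den w)⌋₊, ⌊(k : ℝ) ^ 2 * revValue w⌋₊, ⌊(k : ℝ) ^ 2 * value w⌋₊)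

/-- The cells that can contain a word of length `k` with letters at most `K`. -/
def cells (K k : ℕ) : Finset (ℕ × ℕ × ℕ) :=
  Finset.range (⌊(k : ℝ) ^ 2 * (k * log (K + 1))⌋₊ + 1) ×ˢ
    Finset.range (k ^ 2 + 1) ×ˢ Finset.range (k ^ 2 + 1)

/-- The words of length `k` over `A` in the cell `c`. -/
def cellWords (A : Finset ℕ) (k : ℕ) (c : ℕ × ℕ × ℕ) : Finset (List ℕ) :=
  {w ∈ words A k | cell k w = c}

/-- Twice an upper bound for the continuants of the words in the cell `c`. -/
def cellScale (k : ℕ) (c : ℕ × ℕ × ℕ) : ℝ := 2 * exp ((c.1 + 1) / (k : ℝ) ^ 2)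

variable {A : Finset ℕ} {K k : ℕ} {c : ℕ × ℕ × ℕ} {w w' : List ℕ}

lemma cells_nonempty : (cells K k).Nonempty :=
  ⟨(0, 0, 0), by simp [cells]⟩

lemma card_cells_le (hk : 1 ≤ k) : ((cells K k).card : ℝ) ≤ 4 * (log (K + 1) + 1) * k ^ 7 := by
  have hk : (1 : ℝ) ≤ k := mod_cast hk
  have hlog : 0 ≤ log ((K : ℝ) + 1) := log_nonneg (by simp)
  have hden : (⌊(k : ℝ) ^ 2 * (k * log (K + 1))⌋₊ : ℝ) + 1 ≤ (log (K + 1) + 1) * k ^ 3 := by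
    have := Nat.floor_le (show 0 ≤ (k : ℝ) ^ 2 * (k * log (K + 1)) by positivity)
    have : (1 : ℝ) ≤ (k : ℝ) ^ 3 := one_le_pow₀ hk
    linarith
  have hval : (k : ℝ) ^ 2 + 1 ≤ 2 * k ^ 2 := by
    have : (1 : ℝ) ≤ (k : ℝ) ^ 2 := one_le_pow₀ hk
    linarith
  calc ((cells K k).card : ℝ)
      = (⌊(k : ℝ) ^ 2 * (k * log (K + 1))⌋₊ + 1) * ((k ^ 2 + 1) * (k ^ 2 + 1)) := by simp [cells]
    _ ≤ (log (K + 1) + 1) * k ^ 3 * ((2 * k ^ 2) * (2 * k ^ 2)) := by gcongr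
    _ = 4 * (log (K + 1) + 1) * k ^ 7 := by ring

lemma abs_sub_le_of_floor_eq {r x y : ℝ} (hr : 0 < r) (hx : 0 ≤ x) (hy : 0 ≤ y)
    (h : ⌊r * x⌋₊ = ⌊r * y⌋₊) : |x - y| ≤ 1 / r := by
  have hfloor : ⌊r * x⌋ = ⌊r * y⌋ := by
    rw [← Int.natCast_floor_eq_floor (by positivity), h,
      Int.natCast_floor_eq_floor (by positivity)]
  have := Int.abs_sub_lt_one_of_floor_eq_floor hfloor
  rw [← mul_sub, abs_mul, abs_of_pos hr] at this
  exact (le_div_iff₀' hr).2 this.le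

variable (hpos : ∀ a ∈ A, 0 < a)
include hpos

lemma den_le_pow_of_mem_words (hK : ∀ a ∈ A, a ≤ K) (hw : w ∈ words A k) :
    (den w : ℝ) ≤ ((K : ℝ) + 1) ^ k := by
  obtain ⟨rfl, hA⟩ := mem_words.1 hw
  exact_mod_cast (isPositive_of_mem_words hpos hw).den_le_pow fun x hx => hK x (hA x hx)

lemma cell_mem_cells (hK : ∀ a ∈ A, a ≤ K) (hw : w ∈ words A k) : cell k w ∈ cells K k := by
  have hw' := isPositive_of_mem_words hpos hw
  have hlog : log (den w) ≤ k * log (K + 1) := by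
    rw [← log_pow]
    exact log_le_log hw'.den_pos (den_le_pow_of_mem_words hpos hK hw)
  have hfloor {x : ℝ} (hx : x ≤ 1) : ⌊(k : ℝ) ^ 2 * x⌋₊ ≤ k ^ 2 := by
    refine Nat.floor_le_of_le ?_
    push_cast
    exact mul_le_of_le_one_right (by positivity) hx
  simp only [cell, cells, Finset.mem_product, Finset.mem_range, Nat.lt_succ_iff]
  exact ⟨by gcongr, hfloor hw'.revValue_mem_Icc.2, hfloor hw'.value_mem_Icc.2⟩

lemma isPositive_of_mem_cellWords (hw : w ∈ cellWords A k c) : IsPositive w :=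
  isPositive_of_mem_words hpos (Finset.mem_filter.1 hw).1

lemma den_mem_Icc_of_mem_cellWords (hk : 1 ≤ k) (hw : w ∈ cellWords A k c) :
    (den w : ℝ) ∈ Set.Icc (exp (c.1 / (k : ℝ) ^ 2)) (exp ((c.1 + 1) / (k : ℝ) ^ 2)) := by
  have hw' := isPositive_of_mem_cellWords hpos hw
  have hc : ⌊(k : ℝ) ^ 2 * log (den w)⌋₊ = c.1 := congrArg Prod.fst (Finset.mem_filter.1 hw).2
  have hk2 : (0 : ℝ) < (k : ℝ) ^ 2 := by positivity
  have hlog : 0 ≤ log (den w) := log_nonneg (mod_cast hw'.one_le_den)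
  have hlower := Nat.floor_le (mul_nonneg hk2.le hlog)
  have hupper := (Nat.lt_floor_add_one ((k : ℝ) ^ 2 * log (den w))).le
  rw [hc] at hlower hupper
  rw [Set.mem_Icc, ← le_log_iff_exp_le hw'.den_pos, ← log_le_iff_le_exp hw'.den_pos,
    div_le_iff₀' hk2, le_div_iff₀' hk2]
  exact ⟨hlower, hupper⟩

lemma den_le_exp_mul_den (hk : 1 ≤ k) (hw : w ∈ cellWords A k c) (hw' : w' ∈ cellWords A k c) :
    (den w : ℝ) ≤ exp (1 / (k : ℝ) ^ 2) * den w' :=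
  calc (den w : ℝ) ≤ exp ((c.1 + 1) / (k : ℝ) ^ 2) := (den_mem_Icc_of_mem_cellWords hpos hk hw).2
    _ = exp (1 / (k : ℝ) ^ 2) * exp (c.1 / (k : ℝ) ^ 2) := by rw [← exp_add]; ring_nf
    _ ≤ _ := by gcongr; exact (den_mem_Icc_of_mem_cellWords hpos hk hw').1

lemma cellScale_le_six_mul_den (hk : 1 ≤ k) (hw : w ∈ cellWords A k c) :
    cellScale k c ≤ 6 * den w := by
  have hk2 : 1 / (k : ℝ) ^ 2 ≤ 1 :=
    div_le_self one_pos.le (one_le_pow₀ (by exact_mod_cast hk))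
  have hexp : exp (1 / (k : ℝ) ^ 2) ≤ 3 :=
    (exp_le_exp.2 hk2).trans (exp_one_lt_d9.le.trans (by norm_num))
  have hsplit : exp ((c.1 + 1) / (k : ℝ) ^ 2) =
      exp (1 / (k : ℝ) ^ 2) * exp (c.1 / (k : ℝ) ^ 2) := by
    rw [← exp_add]
    ring_nf
  have hden := (den_mem_Icc_of_mem_cellWords hpos hk hw).1
  have := mul_le_mul hexp hden (exp_pos _).le three_pos.le
  rw [cellScale, hsplit]
  linarith

lemma exists_cell_inv_card_le_sum {s : ℝ} (hK : ∀ a ∈ A, a ≤ K)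
    (hsum : 1 ≤ ∑ w ∈ words A k, (2 / (den w : ℝ) ^ 2) ^ s) :
    ∃ c, ((cells K k).card : ℝ)⁻¹ ≤ ∑ w ∈ cellWords A k c, (2 / (den w : ℝ) ^ 2) ^ s := by
  have hcard : ((cells K k).card : ℝ) ≠ 0 := mod_cast cells_nonempty.card_pos.ne'
  obtain ⟨c, -, hc⟩ := Finset.exists_le_sum_fiber_of_maps_to_of_nsmul_le_sum
    (fun w => cell_mem_cells hpos hK (w := w)) cells_nonempty
    (w := fun w => (2 / (den w : ℝ) ^ 2) ^ s) (by rwa [nsmul_eq_mul, mul_inv_cancel₀ hcard])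
  exact ⟨c, hc⟩

lemma rpow_le_card_cellWords {s t : ℝ} (hs₀ : 0 ≤ s) (hs₁ : s ≤ 1) (hk : 1 ≤ k)
    (hsum : ((cells K k).card : ℝ)⁻¹ ≤ ∑ w ∈ cellWords A k c, (2 / (den w : ℝ) ^ 2) ^ s)
    (hcells : 72 * ((cells K k).card : ℝ) ≤ cellScale k c ^ (2 * s - t)) :
    cellScale k c ^ t ≤ (cellWords A k c).card := by
  have hcard : (0 : ℝ) < (cells K k).card := mod_cast cells_nonempty.card_pos
  set W := cellScale k c with hW
  have hW₀ : 0 < W := by rw [hW, cellScale]; positivity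
  have hterm : ∀ w ∈ cellWords A k c, (2 / (den w : ℝ) ^ 2) ^ s ≤ 72 * W ^ (-(2 * s)) := by
    intro w hw
    have hden := (isPositive_of_mem_cellWords hpos hw).den_pos
    have hWden := cellScale_le_six_mul_den hpos hk hw
    calc (2 / (den w : ℝ) ^ 2) ^ s = (72 / (6 * den w : ℝ) ^ 2) ^ s := by
          congr 1; field_simp; norm_num
      _ ≤ (72 / W ^ 2) ^ s := by gcongr
      _ = 72 ^ s * W ^ (-(2 * s)) := by
          rw [div_rpow (by norm_num) (by positivity), ← rpow_natCast_mul hW₀.le, rpow_neg hW₀.le]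
          rfl
      _ ≤ 72 * W ^ (-(2 * s)) := by
          gcongr
          exact rpow_le_self_of_one_le (by norm_num) hs₁
  have hle := hsum.trans (Finset.sum_le_card_nsmul _ _ _ hterm)
  rw [nsmul_eq_mul, inv_le_iff_one_le_mul₀ hcard] at hle
  have hsplit : W ^ t = W ^ (2 * s) / W ^ (2 * s - t) := by
    rw [← rpow_sub hW₀, sub_sub_cancel]
  rw [rpow_neg hW₀.le] at hle
  rw [hsplit, div_le_iff₀ (by positivity)]
  calc W ^ (2 * s) = W ^ (2 * s) * 1 := (mul_one _).symm
    _ ≤ W ^ (2 * s) * ((cellWords A k c).card * (72 * (W ^ (2 * s))⁻¹) * (cells K k).card) := by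
        gcongr
    _ = (cellWords A k c).card * (72 * (cells K k).card) := by field_simp
    _ ≤ _ := by gcongr

end Cells

lemma rpow_cellScale_le_den (hpos : ∀ a ∈ A, 0 < a) (hk : 1 ≤ k) (hw : w ∈ cellWords A k c)
    (hsix : 6 ≤ cellScale k c ^ (0.001 : ℝ)) : cellScale k c ^ (0.999 : ℝ) ≤ den w := by
  have hW₀ : 0 < cellScale k c := by
    unfold cellScale
    positivity
  have hsplit : cellScale k c = cellScale k c ^ (0.001 : ℝ) * cellScale k c ^ (0.999 : ℝ) := by
    rw [← rpow_add hW₀]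
    norm_num
  have hle := hsplit ▸ cellScale_le_six_mul_den hpos hk hw
  exact le_of_mul_le_mul_left ((mul_le_mul_of_nonneg_right hsix (by positivity)).trans hle)
    (by norm_num)

lemma IsBlock.of_cell {A : Finset ℕ} (hpos : ∀ a ∈ A, 0 < a) {K k : ℕ} (hK : ∀ a ∈ A, a ≤ K)
    (hk : 1 ≤ k) {c : ℕ × ℕ × ℕ} (hne : (cellWords A k c).Nonempty)
    (hcard : cellScale k c ^ (1.9 : ℝ) ≤ (cellWords A k c).card)
    (hsix : 6 ≤ ((2 : ℝ) ^ (k / 2)) ^ (0.001 : ℝ)) (hlen : (k : ℝ) ≤ 2 ^ (k / 2)) :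
    IsBlock A K k (cellWords A k c) (cellScale k c) := by
  have hk2 : (0 : ℝ) < (k : ℝ) ^ 2 := by positivity
  have hmem : ∀ w ∈ cellWords A k c, w ∈ words A k := fun w hw => (Finset.mem_filter.1 hw).1
  have hpos' : ∀ w ∈ cellWords A k c, IsPositive w := fun w => isPositive_of_mem_cellWords hpos
  have hcell : ∀ w ∈ cellWords A k c, ∀ w' ∈ cellWords A k c, cell k w = cell k w' :=
    fun w hw w' hw' => (Finset.mem_filter.1 hw).2.trans (Finset.mem_filter.1 hw').2.symm
  have htwo_mul : ∀ w ∈ cellWords A k c, 2 * (den w : ℝ) ≤ cellScale k c := fun w hw =>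
    mul_le_mul_of_nonneg_left (den_mem_Icc_of_mem_cellWords hpos hk hw).2 two_pos.le
  have hpow : ∀ w ∈ cellWords A k c, (2 : ℝ) ^ (k / 2) ≤ den w := fun w hw =>
    two_pow_le_den_of_mem_words hpos (hmem w hw)
  obtain ⟨w₀, hw₀⟩ := hne
  have htwo_pow : (2 : ℝ) ^ (k / 2) ≤ cellScale k c := by
    linarith [htwo_mul w₀ hw₀, hpow w₀ hw₀, (hpos' w₀ hw₀).den_pos]
  exact
    { subset_words := fun w hw => hmem w hw
      den_le_exp_mul := fun w hw w' hw' => den_le_exp_mul_den hpos hk hw hw'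
      abs_revValue_sub_le := fun w hw w' hw' =>
        abs_sub_le_of_floor_eq hk2 (hpos' w hw).revValue_mem_Icc.1 (hpos' w' hw').revValue_mem_Icc.1
          (congrArg (·.2.1) (hcell w hw w' hw'))
      abs_value_sub_le := fun w hw w' hw' =>
        abs_sub_le_of_floor_eq hk2 (hpos' w hw).value_mem_Icc.1 (hpos' w' hw').value_mem_Icc.1
          (congrArg (·.2.2) (hcell w hw w' hw'))
      two_mul_den_le := htwo_mul
      rpow_le_den := fun w hw => rpow_cellScale_le_den hpos hk hw (hsix.trans (by gcongr))
      rpow_le_card := hcard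
      two_pow_le := htwo_pow
      le_mul_pow := (cellScale_le_six_mul_den hpos hk hw₀).trans
        (by gcongr; exact den_le_pow_of_mem_words hpos hK (hmem w₀ hw₀))
      length_le_den := fun w hw => hlen.trans (hpow w hw) }

lemma eventually_exists_isBlock {A : Finset ℕ} (hpos : ∀ a ∈ A, 0 < a) {K : ℕ}
    (hK : ∀ a ∈ A, a ≤ K) (hδ : 19 / 20 < hdim A) :
    ∀ᶠ k : ℕ in atTop, ∃ B W, IsBlock A K k B W := by
  obtain ⟨s, hs, hs'⟩ := exists_between (lt_min hδ (by norm_num : (19 / 20 : ℝ) < 1))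
  obtain ⟨hsA, hs₁⟩ := lt_min_iff.1 hs'
  have hs₀ : 0 ≤ s := by linarith
  have he : 0 < 2 * s - 1.9 := by norm_num; linarith
  filter_upwards [eventually_one_le_sum_rpow hpos hs₀ hsA,
    eventually_mul_pow_le_rpow (72 * (4 * (log (K + 1) + 1))) 7 he,
    eventually_mul_pow_le_rpow 6 0 (show (0 : ℝ) < 0.001 by norm_num),
    eventually_mul_pow_le_rpow 1 1 one_pos, eventually_ge_atTop 1] with k hsum hcells hsix hlen hk
  rw [pow_zero, mul_one] at hsix
  rw [one_mul, pow_one, rpow_one] at hlen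
  obtain ⟨c, hc⟩ := exists_cell_inv_card_le_sum hpos hK hsum
  have hcard : (0 : ℝ) < ((cells K k).card : ℝ)⁻¹ :=
    inv_pos.2 (mod_cast cells_nonempty.card_pos)
  obtain ⟨w, hw⟩ : (cellWords A k c).Nonempty :=
    Finset.nonempty_of_sum_ne_zero (hcard.trans_le hc).ne'
  have htwo_pow : (2 : ℝ) ^ (k / 2) ≤ cellScale k c := by
    have hle := (two_pow_le_den_of_mem_words hpos (Finset.mem_filter.1 hw).1).trans
      (den_mem_Icc_of_mem_cellWords hpos hk hw).2
    have := exp_pos ((c.1 + 1 : ℝ) / (k : ℝ) ^ 2)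
    rw [cellScale]
    linarith
  have hcells' : 72 * ((cells K k).card : ℝ) ≤ cellScale k c ^ (2 * s - 1.9) :=
    calc 72 * ((cells K k).card : ℝ) ≤ 72 * (4 * (log (K + 1) + 1) * k ^ 7) := by
          gcongr; exact card_cells_le hk
      _ = 72 * (4 * (log (K + 1) + 1)) * k ^ 7 := by ring
      _ ≤ ((2 : ℝ) ^ (k / 2)) ^ (2 * s - 1.9) := hcells
      _ ≤ _ := by gcongr
  exact ⟨_, _, .of_cell hpos hK hk ⟨w, hw⟩
    (rpow_le_card_cellWords hpos hs₀ hs₁.le hk hc hcells') hsix hlen⟩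

/-! ### Concatenation and chains of blocks -/

/-- The set of concatenations of a word of `U` and a word of `V`. -/
def concat (U V : Finset (List ℕ)) : Finset (List ℕ) := Finset.image₂ (· ++ ·) U V

section Concat

variable {U V Z : Finset (List ℕ)} {w : List ℕ}

lemma mem_concat : w ∈ concat U V ↔ ∃ u ∈ U, ∃ v ∈ V, u ++ v = w :=
  Finset.mem_image₂

lemma concat_assoc : concat (concat U V) Z = concat U (concat V Z) :=
  Finset.image₂_assoc List.append_assoc

lemma image_reverse_concat :
    (concat U V).image List.reverse = concat (V.image List.reverse) (U.image List.reverse) :=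
  Finset.image_image₂_antidistrib fun _ _ => List.reverse_append

variable {a : ℕ} (hU : ∀ u ∈ U, u.length = a)
include hU

lemma injOn_append : Set.InjOn (fun p : List ℕ × List ℕ => p.1 ++ p.2) (U ×ˢ V : Set _) := by
  rintro ⟨u, v⟩ ⟨hu, -⟩ ⟨u', v'⟩ ⟨hu', -⟩ h
  obtain ⟨h₁, h₂⟩ := List.append_inj h ((hU u hu).trans (hU u' hu').symm)
  exact Prod.ext h₁ h₂

lemma card_concat : (concat U V).card = U.card * V.card :=
  Finset.card_image₂_iff.2 (injOn_append hU)

lemma sum_concat {M : Type*} [AddCommMonoid M] (f : List ℕ → M) :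
    ∑ w ∈ concat U V, f w = ∑ u ∈ U, ∑ v ∈ V, f (u ++ v) := by
  rw [concat, ← Finset.image_uncurry_product, Finset.sum_image, Finset.sum_product]
  · rfl
  · rw [Finset.coe_product]
    exact injOn_append hU

end Concat

/-- The words obtained by concatenating one word of each of `B i, …, B (i + n - 1)`. -/
def chainWords (B : ℕ → Finset (List ℕ)) (i : ℕ) : ℕ → Finset (List ℕ)
  | 0 => {[]}
  | n + 1 => concat (chainWords B i n) (B (i + n))

/-- The product of the sizes `W i, …, W (i + n - 1)` of consecutive blocks. -/
def chainScale (W : ℕ → ℝ) (i n : ℕ) : ℝ := ∏ j ∈ Finset.range n, W (i + j)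

/-- A sequence of blocks whose words have consecutive lengths `k₀, k₀ + 1, …`. -/
structure IsBlockChain (A : Finset ℕ) (K k₀ : ℕ) (B : ℕ → Finset (List ℕ)) (W : ℕ → ℝ) : Prop where
  letter_pos : ∀ a ∈ A, 0 < a
  four_le : 4 ≤ k₀
  isBlock : ∀ i, IsBlock A K (k₀ + i) (B i) (W i)

lemma exists_isBlockChain {A : Finset ℕ} (hpos : ∀ a ∈ A, 0 < a) {K : ℕ} (hK : ∀ a ∈ A, a ≤ K)
    (hδ : 19 / 20 < hdim A) : ∃ k₀ B W, IsBlockChain A K k₀ B W := by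
  obtain ⟨k₀, h⟩ := eventually_atTop.1
    ((eventually_exists_isBlock hpos hK hδ).and (eventually_ge_atTop 4))
  choose B W hBW using fun i : ℕ => (h (k₀ + i) (by lia)).1
  exact ⟨k₀, B, W, hpos, (h k₀ le_rfl).2, hBW⟩

section ChainScale

variable (B : ℕ → Finset (List ℕ)) (W : ℕ → ℝ) (i m n : ℕ)

@[simp] lemma chainScale_zero : chainScale W i 0 = 1 := by simp [chainScale]

lemma chainScale_succ : chainScale W i (n + 1) = chainScale W i n * W (i + n) :=
  Finset.prod_range_succ _ _

lemma chainScale_add : chainScale W i (m + n) = chainScale W i m * chainScale W (i + m) n := by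
  simp only [chainScale, Finset.prod_range_add, add_assoc]

lemma chainWords_add :
    chainWords B i (m + n) = concat (chainWords B i m) (chainWords B (i + m) n) := by
  induction n with
  | zero => simp [chainWords, concat]
  | succ n ih => rw [← add_assoc, chainWords, ih, concat_assoc, chainWords, add_assoc i m n]

end ChainScale

lemma one_add_mul_le_exp {y y' z z' a b : ℝ} (hy' : y' ∈ Set.Icc 0 1) (hz : z ∈ Set.Icc 0 1)
    (hz' : z' ∈ Set.Icc 0 1) (hyy' : |y - y'| ≤ a) (hzz' : |z - z'| ≤ b) :
    1 + y * z ≤ exp (a + b) * (1 + y' * z') := by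
  have hdiff : y * z - y' * z' ≤ a + b :=
    calc y * z - y' * z' = (y - y') * z + y' * (z - z') := by ring
      _ ≤ |y - y'| * z + y' * |z - z'| := by
          gcongr
          exacts [hz.1, le_abs_self _, hy'.1, le_abs_self _]
      _ ≤ a + b := add_le_add
          ((mul_le_of_le_one_right (abs_nonneg _) hz.2).trans hyy')
          ((mul_le_of_le_one_left (abs_nonneg _) hy'.2).trans hzz')
  have hab : 0 ≤ a + b := add_nonneg ((abs_nonneg _).trans hyy') ((abs_nonneg _).trans hzz')
  have hyz' : 0 ≤ y' * z' := mul_nonneg hy'.1 hz'.1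
  nlinarith [add_one_le_exp (a + b)]

/-- The exponents `10 - 5 / (κ - 2)` absorb the errors `O(1 / κ²)` of successive blocks. -/
lemma exponent_step {κ : ℝ} (hκ : 4 ≤ κ) :
    10 - 5 / (κ - 2) + 1 / κ ^ 2 + (3 / (κ - 1) ^ 2 + 1 / κ ^ 2) ≤ 10 - 5 / (κ - 1) := by
  have hsq : 1 / κ ^ 2 ≤ 1 / (κ - 1) ^ 2 :=
    one_div_le_one_div_of_le (by nlinarith) (by nlinarith)
  have htelescope : 5 / (κ - 2) - 5 / (κ - 1) = 5 / ((κ - 2) * (κ - 1)) := by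
    rw [div_sub_div _ _ (by linarith) (by linarith)]
    ring
  have hmul : 5 / (κ - 1) ^ 2 ≤ 5 / ((κ - 2) * (κ - 1)) :=
    div_le_div_of_nonneg_left (by norm_num) (by nlinarith) (by nlinarith)
  have hsum : 5 / (κ - 1) ^ 2 = 3 / (κ - 1) ^ 2 + 1 / (κ - 1) ^ 2 + 1 / (κ - 1) ^ 2 := by ring
  linarith

namespace IsBlockChain

variable {A : Finset ℕ} {K k₀ i n : ℕ} {B : ℕ → Finset (List ℕ)} {W : ℕ → ℝ} {w w' : List ℕ}
  (h : IsBlockChain A K k₀ B W)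
include h

lemma one_le_scale (i : ℕ) : 1 ≤ W i :=
  (one_le_pow₀ one_le_two).trans (h.isBlock i).two_pow_le

lemma one_le_chainScale (i n : ℕ) : 1 ≤ chainScale W i n :=
  Finset.one_le_prod fun _ _ => h.one_le_scale _

lemma chainScale_pos (i n : ℕ) : 0 < chainScale W i n :=
  one_pos.trans_le (h.one_le_chainScale i n)

lemma isPositive_block (hw : w ∈ B i) : IsPositive w :=
  isPositive_of_mem_words h.letter_pos ((h.isBlock i).subset_words hw)

lemma letter_mem (hw : w ∈ chainWords B i n) : ∀ x ∈ w, x ∈ A := by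
  induction n generalizing w with
  | zero =>
    rw [Finset.mem_singleton.1 hw]
    simp
  | succ n ih =>
    obtain ⟨u, hu, v, hv, rfl⟩ := mem_concat.1 hw
    exact List.forall_mem_append.2 ⟨ih hu, (mem_words.1 ((h.isBlock _).subset_words hv)).2⟩

lemma isPositive (hw : w ∈ chainWords B i n) : IsPositive w :=
  fun x hx => h.letter_pos x (h.letter_mem hw x hx)

lemma length_eq (hw : w ∈ chainWords B i n) :
    w.length = ∑ j ∈ Finset.range n, (k₀ + (i + j)) := by
  induction n generalizing w with
  | zero => rw [Finset.mem_singleton.1 hw, List.length_nil, Finset.sum_range_zero]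
  | succ n ih =>
    obtain ⟨u, hu, v, hv, rfl⟩ := mem_concat.1 hw
    rw [List.length_append, ih hu, (mem_words.1 ((h.isBlock _).subset_words hv)).1,
      Finset.sum_range_succ]

lemma den_le_chainScale (hw : w ∈ chainWords B i n) : (den w : ℝ) ≤ chainScale W i n := by
  induction n generalizing w with
  | zero => rw [Finset.mem_singleton.1 hw, den_nil, chainScale_zero, Int.cast_one]
  | succ n ih =>
    obtain ⟨u, hu, v, hv, rfl⟩ := mem_concat.1 hw
    have happend : (den (u ++ v) : ℝ) ≤ 2 * (den u * den v) :=
      mod_cast (h.isPositive hu).den_append_le (h.isPositive_block hv)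
    have hmul := mul_le_mul (ih hu) ((h.isBlock _).two_mul_den_le v hv)
      (by linarith [(h.isPositive_block hv).den_pos]) (h.chainScale_pos i n).le
    rw [chainScale_succ]
    linarith

lemma rpow_le_den (hw : w ∈ chainWords B i n) : chainScale W i n ^ (0.999 : ℝ) ≤ den w := by
  induction n generalizing w with
  | zero => rw [Finset.mem_singleton.1 hw, chainScale_zero, one_rpow, den_nil, Int.cast_one]
  | succ n ih =>
    obtain ⟨u, hu, v, hv, rfl⟩ := mem_concat.1 hw
    have hW := zero_le_one.trans (h.one_le_scale (i + n))
    rw [chainScale_succ, mul_rpow (h.chainScale_pos i n).le hW]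
    calc _ ≤ (den u : ℝ) * den v :=
          mul_le_mul (ih hu) ((h.isBlock _).rpow_le_den v hv) (by positivity)
            (h.isPositive hu).den_pos.le
      _ ≤ den (u ++ v) := mod_cast den_mul_den_le u v

lemma rpow_le_card (i n : ℕ) : chainScale W i n ^ (1.9 : ℝ) ≤ (chainWords B i n).card := by
  induction n with
  | zero => simp [chainWords]
  | succ n ih =>
    have hW := zero_le_one.trans (h.one_le_scale (i + n))
    rw [chainScale_succ, mul_rpow (h.chainScale_pos i n).le hW, chainWords,
      card_concat fun u hu => h.length_eq hu, Nat.cast_mul]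
    exact mul_le_mul ih (h.isBlock _).rpow_le_card (by positivity) (by positivity)

lemma four_le_level (i n : ℕ) : (4 : ℝ) ≤ k₀ + i + n := by
  have : (4 : ℝ) ≤ k₀ := mod_cast h.four_le
  linarith [i.cast_nonneg (α := ℝ), n.cast_nonneg (α := ℝ)]

lemma abs_revValue_append_sub_le {u u' v v' : List ℕ} (hu : IsPositive u) (hu' : IsPositive u')
    (hv : v ∈ B i) (hv' : v' ∈ B i) :
    |revValue (u ++ v) - revValue (u' ++ v')| ≤ 3 / ((k₀ : ℝ) + i) ^ 2 := by
  have hκ : (0 : ℝ) < k₀ + i := by linarith [h.four_le_level i 0, Nat.cast_zero (R := ℝ)]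
  have hcast : (((k₀ + i : ℕ)) : ℝ) = k₀ + i := by push_cast; rfl
  have hblock := h.isBlock i
  have hsmall : ∀ v ∈ B i, 1 / (den v : ℝ) ^ 2 ≤ 1 / ((k₀ : ℝ) + i) ^ 2 := fun v hv => by
    have := hcast ▸ hblock.length_le_den v hv
    gcongr
  have huv := (hu.abs_revValue_append_sub_le (h.isPositive_block hv)).trans (hsmall v hv)
  have huv' := (hu'.abs_revValue_append_sub_le (h.isPositive_block hv')).trans (hsmall v' hv')
  have hvv' := hcast ▸ hblock.abs_revValue_sub_le v hv v' hv'
  have hthree : 3 / ((k₀ : ℝ) + i) ^ 2 =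
    1 / ((k₀ : ℝ) + i) ^ 2 + 1 / ((k₀ : ℝ) + i) ^ 2 + 1 / ((k₀ : ℝ) + i) ^ 2 := by ring
  rw [hthree]
  rw [abs_le] at *
  constructor <;> linarith

lemma abs_revValue_sub_le (hw : w ∈ chainWords B i n) (hw' : w' ∈ chainWords B i n) :
    |revValue w - revValue w'| ≤ 3 / ((k₀ : ℝ) + i + n - 1) ^ 2 := by
  cases n with
  | zero =>
    rw [Finset.mem_singleton.1 hw, Finset.mem_singleton.1 hw', sub_self, abs_zero]
    positivity
  | succ n =>
    obtain ⟨u, hu, v, hv, rfl⟩ := mem_concat.1 hw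
    obtain ⟨u', hu', v', hv', rfl⟩ := mem_concat.1 hw'
    convert h.abs_revValue_append_sub_le (h.isPositive hu) (h.isPositive hu') hv hv' using 3
    push_cast
    ring

lemma den_append_le_exp_sub_mul {u u' v v' : List ℕ} (hu : u ∈ chainWords B i n)
    (hu' : u' ∈ chainWords B i n) (hv : v ∈ B (i + n)) (hv' : v' ∈ B (i + n))
    (hle : (den u : ℝ) ≤ exp (10 - 5 / ((k₀ : ℝ) + i + n - 2)) * den u') :
    (den (u ++ v) : ℝ) ≤ exp (10 - 5 / ((k₀ : ℝ) + i + n - 1)) * den (u' ++ v') := by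
  obtain ⟨pu, pu'⟩ := And.intro (h.isPositive hu) (h.isPositive hu')
  obtain ⟨pv, pv'⟩ := And.intro (h.isPositive_block hv) (h.isPositive_block hv')
  have hblock := h.isBlock (i + n)
  have hratio := hblock.den_le_exp_mul v hv v' hv'
  have hvalue := hblock.abs_value_sub_le v hv v' hv'
  set κ : ℝ := k₀ + i + n with hκ
  have hcast : (((k₀ + (i + n) : ℕ)) : ℝ) = κ := by push_cast; ring
  rw [hcast] at hratio hvalue
  have hcross := one_add_mul_le_exp pu'.revValue_mem_Icc pv.value_mem_Icc pv'.value_mem_Icc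
    (h.abs_revValue_sub_le hu hu') hvalue
  have hnonneg : 0 ≤ revValue u * value v :=
    mul_nonneg pu.revValue_mem_Icc.1 pv.value_mem_Icc.1
  have hnonneg' : 0 ≤ revValue u' * value v' :=
    mul_nonneg pu'.revValue_mem_Icc.1 pv'.value_mem_Icc.1
  have := pu.den_pos.le
  have := pu'.den_pos.le
  have := pv.den_pos.le
  have := pv'.den_pos.le
  rw [pu.den_append_eq pv, pu'.den_append_eq pv']
  calc (den u : ℝ) * den v * (1 + revValue u * value v)
      ≤ exp (10 - 5 / (κ - 2)) * den u' * (exp (1 / κ ^ 2) * den v') *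
          (exp (3 / (κ - 1) ^ 2 + 1 / κ ^ 2) * (1 + revValue u' * value v')) := by gcongr
    _ = exp (10 - 5 / (κ - 2) + 1 / κ ^ 2 + (3 / (κ - 1) ^ 2 + 1 / κ ^ 2)) *
          (den u' * den v' * (1 + revValue u' * value v')) := by
        rw [exp_add _ (3 / (κ - 1) ^ 2 + 1 / κ ^ 2), exp_add (10 - 5 / (κ - 2))]
        ring
    _ ≤ exp (10 - 5 / (κ - 1)) * (den u' * den v' * (1 + revValue u' * value v')) := by
        gcongr
        exact exponent_step (h.four_le_level i n)

lemma den_le_exp_sub_mul (hw : w ∈ chainWords B i n) (hw' : w' ∈ chainWords B i n) :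
    (den w : ℝ) ≤ exp (10 - 5 / ((k₀ : ℝ) + i + n - 2)) * den w' := by
  induction n generalizing w w' with
  | zero =>
    have hκ := h.four_le_level i 0
    have hfrac : 5 / ((k₀ : ℝ) + i + (0 : ℕ) - 2) ≤ 5 :=
      div_le_self (by norm_num) (by linarith)
    rw [Finset.mem_singleton.1 hw, Finset.mem_singleton.1 hw', den_nil, Int.cast_one, mul_one]
    exact one_le_exp (by linarith)
  | succ n ih =>
    obtain ⟨u, hu, v, hv, rfl⟩ := mem_concat.1 hw
    obtain ⟨u', hu', v', hv', rfl⟩ := mem_concat.1 hw'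
    have hlevel : (k₀ : ℝ) + i + (n + 1 : ℕ) - 2 = k₀ + i + n - 1 := by push_cast; ring
    rw [hlevel]
    exact h.den_append_le_exp_sub_mul hu hu' hv hv' (ih hu hu')

lemma den_le_exp_mul (hw : w ∈ chainWords B i n) (hw' : w' ∈ chainWords B i n) :
    (den w : ℝ) ≤ exp 10 * den w' := by
  have := (h.isPositive hw').den_pos.le
  refine (h.den_le_exp_sub_mul hw hw').trans ?_
  gcongr
  exact sub_le_self _ (div_nonneg (by norm_num) (by linarith [h.four_le_level i n]))

lemma two_rpow_le_chainScale (n : ℕ) : (2 : ℝ) ^ ((n : ℝ) ^ 2 / 4) ≤ chainScale W 0 n := by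
  induction n with
  | zero => simp
  | succ n ih =>
    have hstep : (2 : ℝ) ^ ((2 * (n : ℝ) + 1) / 4) ≤ W (0 + n) := by
      refine le_trans ?_ (h.isBlock (0 + n)).two_pow_le
      rw [← rpow_natCast]
      refine rpow_le_rpow_of_exponent_le one_le_two ?_
      rw [div_le_iff₀ (by norm_num)]
      have : 2 * n + 1 ≤ (k₀ + (0 + n)) / 2 * 4 := by
        have := h.four_le
        lia
      exact_mod_cast this
    have hexp : ((n + 1 : ℕ) : ℝ) ^ 2 / 4 = (n : ℝ) ^ 2 / 4 + (2 * n + 1) / 4 := by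
      push_cast
      ring
    rw [chainScale_succ, hexp, rpow_add two_pos]
    exact mul_le_mul ih hstep (by positivity) (h.chainScale_pos 0 n).le

/-- `W n` is exponential in `n` while the product of its predecessors is exponential in `n²`. -/
lemma exists_scale_le_mul_rpow :
    ∃ C : ℝ, 1 ≤ C ∧ ∀ n, W n ≤ C * chainScale W 0 n ^ (0.001 : ℝ) := by
  set b : ℝ := log (K + 1)
  set c : ℝ := log 2 * (0.001 / 4) with hc
  have hc₀ : 0 < c := mul_pos (log_pos one_lt_two) (by norm_num)
  have hb₀ : 0 ≤ b := log_nonneg (by simp)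
  refine ⟨6 * exp (k₀ * b + b ^ 2 / (4 * c)), ?_, fun n => ?_⟩
  · linarith [one_le_exp (show 0 ≤ k₀ * b + b ^ 2 / (4 * c) by positivity)]
  have hupper : W n ≤ 6 * exp (k₀ * b + n * b) := by
    have hK : (K : ℝ) + 1 = exp b := (exp_log (by positivity)).symm
    refine (h.isBlock n).le_mul_pow.trans_eq ?_
    rw [hK, ← exp_nat_mul]
    push_cast
    ring_nf
  have hlower : exp (c * (n : ℝ) ^ 2) ≤ chainScale W 0 n ^ (0.001 : ℝ) := by
    refine le_trans (le_of_eq ?_)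
      (rpow_le_rpow (by positivity) (h.two_rpow_le_chainScale n) (by norm_num))
    rw [← rpow_mul two_pos.le, rpow_def_of_pos two_pos, hc]
    ring_nf
  have hsquare : n * b ≤ b ^ 2 / (4 * c) + c * (n : ℝ) ^ 2 := by
    have : 0 ≤ (2 * c * n - b) ^ 2 / (4 * c) := by positivity
    have hexpand : (2 * c * n - b) ^ 2 / (4 * c) = c * (n : ℝ) ^ 2 - n * b + b ^ 2 / (4 * c) := by
      field_simp
      ring
    linarith
  calc W n ≤ 6 * exp (k₀ * b + n * b) := hupper
    _ ≤ 6 * exp (k₀ * b + b ^ 2 / (4 * c) + c * (n : ℝ) ^ 2) := by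
        rw [add_assoc]
        gcongr
    _ = 6 * exp (k₀ * b + b ^ 2 / (4 * c)) * exp (c * (n : ℝ) ^ 2) := by
        rw [exp_add, ← mul_assoc]
    _ ≤ _ := by gcongr

lemma exists_le_chainScale (X : ℝ) : ∃ n, X ≤ chainScale W 0 n := by
  have hlim : Tendsto (fun n : ℕ => (2 : ℝ) ^ ((n : ℝ) ^ 2 / 4)) atTop atTop :=
    (tendsto_rpow_atTop_of_base_gt_one 2 one_lt_two).comp
      (((tendsto_pow_atTop two_ne_zero).comp tendsto_natCast_atTop_atTop).atTop_div_const
        (by norm_num))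
  obtain ⟨n, hn⟩ := (hlim.eventually_ge_atTop X).exists
  exact ⟨n, hn.trans (h.two_rpow_le_chainScale n)⟩

/-- The scales of the initial chains are logarithmically dense. -/
lemma exists_least_chainScale : ∃ C : ℝ, 1 ≤ C ∧ ∀ X : ℝ, 1 ≤ X → ∃ n, X ≤ chainScale W 0 n ∧
    chainScale W 0 n ≤ C * X ^ (1.001 : ℝ) ∧ ∀ m, X ≤ chainScale W 0 m → n ≤ m := by
  classical
  obtain ⟨C, hC₁, hC⟩ := h.exists_scale_le_mul_rpow
  refine ⟨C, hC₁, fun X hX => ?_⟩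
  have hex := h.exists_le_chainScale X
  refine ⟨Nat.find hex, Nat.find_spec hex, ?_, fun m hm => Nat.find_min' hex hm⟩
  cases hn : Nat.find hex with
  | zero =>
    rw [chainScale_zero]
    exact one_le_mul_of_one_le_of_one_le hC₁ (one_le_rpow hX (by norm_num))
  | succ n =>
    have hlt : chainScale W 0 n < X := not_le.1 (Nat.find_min hex (hn ▸ n.lt_succ_self))
    have hscale := h.chainScale_pos 0 n
    rw [chainScale_succ, zero_add]
    calc chainScale W 0 n * W n ≤ X * (C * X ^ (0.001 : ℝ)) := by
          refine mul_le_mul hlt.le ((hC n).trans ?_) (zero_le_one.trans (h.one_le_scale n))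
            (by linarith)
          gcongr
      _ = C * (X ^ (1 : ℝ) * X ^ (0.001 : ℝ)) := by rw [rpow_one]; ring
      _ = C * X ^ (1.001 : ℝ) := by rw [← rpow_add (by linarith)]; norm_num

end IsBlockChain

/-! ### A two-dimensional large sieve -/

section LargeSieve

variable {R : ℕ} [NeZero R]

/-- The additive character `x ↦ exp (2πi x / R)` of `ℤ/R`. -/
def expChar : AddChar (ZMod R) ℂ := ZMod.stdAddChar

lemma conj_expChar_mul (x y : ZMod R) :
    (starRingEnd ℂ) (expChar x) * expChar y = expChar (y - x) := by
  rw [← AddChar.map_neg_eq_conj, sub_eq_neg_add, AddChar.map_add_eq_mul]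

lemma sum_expChar_mul (x : ZMod R) :
    ∑ u : ZMod R, (expChar (u * x) : ℂ) = if x = 0 then (R : ℂ) else 0 := by
  rw [expChar, AddChar.sum_mulShift _ (ZMod.isPrimitive_stdAddChar R), ZMod.card]
  split_ifs <;> simp

lemma sum_normSq_expChar (g : ZMod R → ℂ) :
    ∑ u : ZMod R, ‖∑ z, g z * expChar (u * z)‖ ^ 2 = R * ∑ z, ‖g z‖ ^ 2 := by
  have orthogonality (z w : ZMod R) :
      ∑ u : ZMod R, (starRingEnd ℂ) (g z * expChar (u * z)) * (g w * expChar (u * w)) =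
        if w = z then R * ((starRingEnd ℂ) (g z) * g z) else 0 := by
    have hterm (u : ZMod R) :
        (starRingEnd ℂ) (g z * expChar (u * z)) * (g w * expChar (u * w)) =
          (starRingEnd ℂ) (g z) * g w * expChar (u * (w - z)) := by
      rw [mul_sub, ← conj_expChar_mul, map_mul]
      ring
    simp_rw [hterm, ← Finset.mul_sum, sum_expChar_mul, sub_eq_zero]
    split_ifs with h
    · rw [h, mul_comm]
    · rw [mul_zero]
  have hcomplex : ((∑ u : ZMod R, ‖∑ z, g z * expChar (u * z)‖ ^ 2 : ℝ) : ℂ) =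
      ((R * ∑ z, ‖g z‖ ^ 2 : ℝ) : ℂ) := by
    push_cast
    simp_rw [← Complex.conj_mul', map_sum, Finset.sum_mul_sum]
    rw [Finset.sum_comm, Finset.mul_sum]
    refine Finset.sum_congr rfl fun z _ => ?_
    rw [Finset.sum_comm]
    simp only [orthogonality, Finset.sum_ite_eq', Finset.mem_univ, if_true]
  exact_mod_cast hcomplex

lemma sum_normSq_expChar_prod (g : ZMod R × ZMod R → ℂ) :
    ∑ u : ZMod R × ZMod R, ‖∑ z, g z * expChar (u.1 * z.1 + u.2 * z.2)‖ ^ 2 =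
      (R : ℝ) ^ 2 * ∑ z, ‖g z‖ ^ 2 := by
  have hfst (v : ZMod R) :
      ∑ u, ‖∑ z : ZMod R × ZMod R, g z * expChar (u * z.1 + v * z.2)‖ ^ 2 =
        R * ∑ x, ‖∑ y, g (x, y) * expChar (v * y)‖ ^ 2 := by
    rw [← sum_normSq_expChar]
    refine Finset.sum_congr rfl fun u _ => ?_
    simp_rw [Fintype.sum_prod_type, Finset.sum_mul, AddChar.map_add_eq_mul]
    refine congrArg (‖·‖ ^ 2) (Finset.sum_congr rfl fun x _ => Finset.sum_congr rfl fun y _ => ?_)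
    ring
  rw [Fintype.sum_prod_type_right]
  simp_rw [hfst]
  rw [← Finset.mul_sum, Finset.sum_comm]
  simp_rw [fun x => sum_normSq_expChar fun y => g (x, y)]
  rw [← Finset.mul_sum, Fintype.sum_prod_type]
  ring

lemma sum_normSq_expChar_family {σ : Type*} (S : Finset σ) (x : σ → ZMod R × ZMod R)
    (c : σ → ℂ) :
    ∑ u : ZMod R × ZMod R, ‖∑ s ∈ S, c s * expChar (u.1 * (x s).1 + u.2 * (x s).2)‖ ^ 2 =
      (R : ℝ) ^ 2 * ∑ z, ‖∑ s ∈ S with x s = z, c s‖ ^ 2 := by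
  rw [← sum_normSq_expChar_prod]
  refine Finset.sum_congr rfl fun u _ => ?_
  congr 2
  rw [← Finset.sum_fiberwise S x]
  refine Finset.sum_congr rfl fun z _ => ?_
  rw [Finset.sum_mul]
  refine Finset.sum_congr rfl fun s hs => ?_
  rw [(Finset.mem_filter.1 hs).2]

lemma half_le_re_expChar {n : ℕ} (hn : 6 * n ≤ R) : 1 / 2 ≤ (expChar (n : ZMod R) : ℂ).re := by
  have hR : (0 : ℝ) < R := by exact_mod_cast Nat.pos_of_ne_zero (NeZero.ne R)
  have hn' : 6 * (n : ℝ) ≤ R := by exact_mod_cast hn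
  have hangle : 2 * (π : ℂ) * Complex.I * ((n : ℤ) : ℂ) / R =
      ((2 * π * n / R : ℝ) : ℂ) * Complex.I := by
    push_cast
    ring
  rw [← Int.cast_natCast n, expChar, ZMod.stdAddChar_coe, hangle, Complex.exp_ofReal_mul_I_re,
    ← cos_pi_div_three]
  refine cos_le_cos_of_nonneg_of_le_pi (by positivity) (by linarith [pi_pos]) ?_
  rw [div_le_iff₀ hR]
  nlinarith [pi_pos]

/-- The Fourier transform of the indicator function of `{0, …, H - 1}`. -/
def geomSum (H : ℕ) (n : ZMod R) : ℂ := ∑ m ∈ Finset.range H, expChar (n * (m : ZMod R))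

variable {M H : ℕ}

lemma half_le_norm_geomSum {n : ℕ} (hn : n ≤ M) (hH : (H - 1) * (6 * M) ≤ R) :
    (H : ℝ) / 2 ≤ ‖geomSum H (n : ZMod R)‖ := by
  have hterm : ∀ m ∈ Finset.range H, (1 : ℝ) / 2 ≤ (expChar (n * m : ZMod R) : ℂ).re := by
    intro m hm
    rw [← Nat.cast_mul]
    apply half_le_re_expChar
    calc 6 * (n * m) ≤ 6 * (M * (H - 1)) := by
          gcongr
          exact Nat.le_sub_one_of_lt (Finset.mem_range.1 hm)
      _ = (H - 1) * (6 * M) := by ring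
      _ ≤ R := hH
  calc (H : ℝ) / 2 = ∑ m ∈ Finset.range H, (1 : ℝ) / 2 := by
        rw [Finset.sum_const, Finset.card_range, nsmul_eq_mul, mul_one_div]
    _ ≤ (geomSum H (n : ZMod R)).re := by
        rw [geomSum, Complex.re_sum]
        exact Finset.sum_le_sum hterm
    _ ≤ _ := Complex.re_le_norm _

variable {σ : Type*} (Q : Finset σ) (q : σ → ZMod R × ZMod R) (c : σ → ℂ)

/-- The two-dimensional exponential sum with coefficients `c` and frequencies `q`. -/
def trigSum (u : ZMod R × ZMod R) : ℂ := ∑ t ∈ Q, c t * expChar (u.1 * (q t).1 + u.2 * (q t).2)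

/-- The points `q t`, for `t ∈ Q`, lying in the square `z - {0, …, H - 1}²`. -/
def nearby (H : ℕ) (z : ZMod R × ZMod R) : Finset σ :=
  open Classical in
  Q.filter fun t => ∃ m < H, ∃ n < H, (q t).1 + m = z.1 ∧ (q t).2 + n = z.2

lemma trigSum_mul_geomSum (u : ZMod R × ZMod R) :
    trigSum Q q c u * (geomSum H u.1 * geomSum H u.2) =
      ∑ s ∈ Q ×ˢ (Finset.range H ×ˢ Finset.range H),
        c s.1 * expChar (u.1 * ((q s.1).1 + (s.2.1 : ZMod R)) +
          u.2 * ((q s.1).2 + (s.2.2 : ZMod R))) := by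
  rw [trigSum, geomSum, geomSum, Finset.sum_mul_sum, ← Finset.sum_product', Finset.sum_mul_sum,
    ← Finset.sum_product']
  refine Finset.sum_congr rfl fun s _ => ?_
  simp only [mul_add, AddChar.map_add_eq_mul]
  ring

omit [NeZero R] in
lemma card_filter_translate_le (hHR : H ≤ R) (z : ZMod R × ZMod R) :
    {s ∈ Q ×ˢ (Finset.range H ×ˢ Finset.range H) |
      ((q s.1).1 + s.2.1, (q s.1).2 + s.2.2) = z}.card ≤ (nearby Q q H z).card := by
  have hcast {a b : ℕ} (ha : a < H) (hb : b < H) (h : (a : ZMod R) = b) : a = b := by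
    rw [ZMod.natCast_eq_natCast_iff'] at h
    rwa [Nat.mod_eq_of_lt (ha.trans_le hHR), Nat.mod_eq_of_lt (hb.trans_le hHR)] at h
  refine Finset.card_le_card_of_injOn Prod.fst ?_ ?_
  · rintro ⟨t, m, n⟩ hs
    simp only [Finset.coe_filter, Finset.mem_product, Finset.mem_range, Set.mem_ofPred_eq] at hs
    obtain ⟨⟨ht, hm, hn⟩, rfl⟩ := hs
    exact Finset.mem_filter.2 ⟨ht, m, hm, n, hn, rfl, rfl⟩
  · rintro ⟨t, m, n⟩ hs ⟨t', m', n'⟩ hs' h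
    simp only [Finset.coe_filter, Finset.mem_product, Finset.mem_range, Set.mem_ofPred_eq]
      at hs hs' h
    subst h
    have heq := hs.2.trans hs'.2.symm
    simp only [Prod.mk.injEq, add_right_inj] at heq
    rw [hcast hs.1.2.1 hs'.1.2.1 heq.1, hcast hs.1.2.2 hs'.1.2.2 heq.2]

variable {D : ℝ}

lemma sum_normSq_trigSum_mul_geomSum_le (hHR : H ≤ R)
    (hD : ∀ z, ((nearby Q q H z).card : ℝ) ≤ D) :
    ∑ u, ‖trigSum Q q c u * (geomSum H u.1 * geomSum H u.2)‖ ^ 2 ≤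
      (R : ℝ) ^ 2 * (D * ((H : ℝ) ^ 2 * ∑ t ∈ Q, ‖c t‖ ^ 2)) := by
  set S := Q ×ˢ (Finset.range H ×ˢ Finset.range H) with hS
  set x : σ × ℕ × ℕ → ZMod R × ZMod R := fun s => ((q s.1).1 + s.2.1, (q s.1).2 + s.2.2)
  have hfiber (z : ZMod R × ZMod R) :
      ‖∑ s ∈ S with x s = z, c s.1‖ ^ 2 ≤ D * ∑ s ∈ S with x s = z, ‖c s.1‖ ^ 2 := by
    calc ‖∑ s ∈ S with x s = z, c s.1‖ ^ 2
        ≤ (∑ s ∈ S with x s = z, ‖c s.1‖) ^ 2 := by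
          gcongr
          exact norm_sum_le _ _
      _ ≤ (S.filter fun s => x s = z).card * ∑ s ∈ S with x s = z, ‖c s.1‖ ^ 2 :=
          sq_sum_le_card_mul_sum_sq
      _ ≤ _ := by
          gcongr
          exact (Nat.cast_le.2 (card_filter_translate_le Q q hHR z)).trans (hD z)
  simp_rw [trigSum_mul_geomSum]
  rw [sum_normSq_expChar_family S x fun s => c s.1]
  gcongr
  calc _ ≤ ∑ z, D * ∑ s ∈ S with x s = z, ‖c s.1‖ ^ 2 := Finset.sum_le_sum fun z _ => hfiber z
    _ = D * ∑ s ∈ S, ‖c s.1‖ ^ 2 := by rw [← Finset.mul_sum, Finset.sum_fiberwise]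
    _ = _ := by
        rw [hS, Finset.sum_product]
        simp only [Finset.sum_const, Finset.card_product, Finset.card_range, nsmul_eq_mul]
        rw [← Finset.mul_sum]
        push_cast
        ring

lemma sum_normSq_trigSum_le_mul {ι : Type*} {U : Finset ι} {p : ι → ℕ × ℕ}
    (hp : Set.InjOn p U) (hM : ∀ u ∈ U, (p u).1 ≤ M ∧ (p u).2 ≤ M) (hMR : M < R)
    (hH : (H - 1) * (6 * M) ≤ R) :
    (H : ℝ) ^ 4 / 16 * ∑ u ∈ U, ‖trigSum Q q c ((p u).1, (p u).2)‖ ^ 2 ≤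
      ∑ u, ‖trigSum Q q c u * (geomSum H u.1 * geomSum H u.2)‖ ^ 2 := by
  set r : ι → ZMod R × ZMod R := fun u => ((p u).1, (p u).2)
  have hinj : Set.InjOn r U := by
    intro u hu v hv h
    simp only [r, Prod.mk.injEq, ZMod.natCast_eq_natCast_iff'] at h
    have hu' := hM u hu
    have hv' := hM v hv
    rw [Nat.mod_eq_of_lt (by lia), Nat.mod_eq_of_lt (by lia), Nat.mod_eq_of_lt (by lia),
      Nat.mod_eq_of_lt (by lia)] at h
    exact hp hu hv (Prod.ext h.1 h.2)
  have hlower : ∀ u ∈ U, (H : ℝ) ^ 4 / 16 * ‖trigSum Q q c (r u)‖ ^ 2 ≤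
      ‖trigSum Q q c (r u) * (geomSum H (r u).1 * geomSum H (r u).2)‖ ^ 2 := by
    intro u hu
    have h₁ := half_le_norm_geomSum (hM u hu).1 hH
    have h₂ := half_le_norm_geomSum (hM u hu).2 hH
    calc _ = (‖trigSum Q q c (r u)‖ * ((H : ℝ) / 2 * (H / 2))) ^ 2 := by ring
      _ ≤ _ := by
          rw [norm_mul, norm_mul]
          gcongr
  rw [Finset.mul_sum]
  refine (Finset.sum_le_sum hlower).trans ?_
  rw [← Finset.sum_image (f := fun y => ‖trigSum Q q c y * (geomSum H y.1 * geomSum H y.2)‖ ^ 2)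
    hinj]
  exact Finset.sum_le_univ_sum_of_nonneg fun _ => by positivity

lemma sum_normSq_trigSum_le {ι : Type*} {U : Finset ι} {p : ι → ℕ × ℕ}
    (hp : Set.InjOn p U) (hM : ∀ u ∈ U, (p u).1 ≤ M ∧ (p u).2 ≤ M) (hMR : M < R)
    (hH : (H - 1) * (6 * M) ≤ R) (hRH : R ≤ 6 * M * H)
    (hD : ∀ z, ((nearby Q q H z).card : ℝ) ≤ D) :
    ∑ u ∈ U, ‖trigSum Q q c ((p u).1, (p u).2)‖ ^ 2 ≤
      576 * (M : ℝ) ^ 2 * D * ∑ t ∈ Q, ‖c t‖ ^ 2 := by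
  have hR := Nat.pos_of_ne_zero (NeZero.ne R)
  obtain ⟨hM₀, hH₀⟩ : 0 < M ∧ 0 < H := by
    rw [← Nat.mul_pos_iff_of_pos_left (show 0 < 6 by lia)]
    constructor <;> by_contra! h <;> simp_all
  have hHR : H ≤ R := by
    have : H - 1 ≤ (H - 1) * M := Nat.le_mul_of_pos_right _ hM₀
    lia
  have hD₀ : 0 ≤ D := (Nat.cast_nonneg _).trans (hD 0)
  have hRH' : (R : ℝ) ≤ 6 * M * H := by exact_mod_cast hRH
  refine le_of_mul_le_mul_left ?_ (show 0 < (H : ℝ) ^ 4 / 16 by positivity)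
  calc _ ≤ (R : ℝ) ^ 2 * (D * ((H : ℝ) ^ 2 * ∑ t ∈ Q, ‖c t‖ ^ 2)) :=
        (sum_normSq_trigSum_le_mul Q q c hp hM hMR hH).trans
          (sum_normSq_trigSum_mul_geomSum_le Q q c hHR hD)
    _ ≤ (6 * M * H) ^ 2 * (D * ((H : ℝ) ^ 2 * ∑ t ∈ Q, ‖c t‖ ^ 2)) := by gcongr
    _ = _ := by ring

end LargeSieve

/-! ### The bilinear estimate -/

section Bilinear

variable {R : ℕ} [NeZero R]

/-- The exponential sum over the continuants of the words in `Ω`. -/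
def wordSum (R : ℕ) [NeZero R] (Ω : Finset (List ℕ)) (k : ZMod R) : ℂ :=
  ∑ w ∈ Ω, expChar (k * (den w : ZMod R))

/-- The first row of the matrix of `u`, which determines `u` once its length is known. -/
def firstRow (u : List ℕ) : ℕ × ℕ := ((den u).toNat, (prevDen u).toNat)

lemma injOn_firstRow {U : Finset (List ℕ)} {a : ℕ} (hU : ∀ u ∈ U, u.length = a)
    (hpos : ∀ u ∈ U, IsPositive u) : Set.InjOn firstRow U := by
  intro u hu v hv h
  have hden : den u = den v := by
    rw [← Int.toNat_of_nonneg (den_nonneg u), ← Int.toNat_of_nonneg (den_nonneg v)]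
    exact congrArg (fun p : ℕ × ℕ => (p.1 : ℤ)) h
  have hprev : prevDen u = prevDen v := by
    rw [← Int.toNat_of_nonneg (prevDen_nonneg u), ← Int.toNat_of_nonneg (prevDen_nonneg v)]
    exact congrArg (fun p : ℕ × ℕ => (p.2 : ℤ)) h
  refine List.reverse_injective ((hpos u hu).reverse.eq_of_den_eq_of_num_eq (hpos v hv).reverse
    ?_ ?_ ?_)
  · rw [List.length_reverse, List.length_reverse, hU u hu, hU v hv]
  · rw [den_reverse, den_reverse, hden]
  · rw [num_reverse, num_reverse, hprev]

lemma firstRow_le {u : List ℕ} (hu : IsPositive u) {M : ℕ} (hM : den u ≤ M) :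
    (firstRow u).1 ≤ M ∧ (firstRow u).2 ≤ M :=
  ⟨Int.toNat_le.2 hM, Int.toNat_le.2 (hu.prevDen_le_den.trans hM)⟩

omit [NeZero R] in
lemma den_append_eq_firstRow (u v : List ℕ) :
    (den (u ++ v) : ZMod R) = (firstRow u).1 * den v + (firstRow u).2 * num v := by
  have h₁ : ((firstRow u).1 : ℤ) = den u := Int.toNat_of_nonneg (den_nonneg u)
  have h₂ : ((firstRow u).2 : ℤ) = prevDen u := Int.toNat_of_nonneg (prevDen_nonneg u)
  rw [den_append, ← h₁, ← h₂]
  push_cast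
  ring

variable {U V : Finset (List ℕ)} {a : ℕ} (hU : ∀ u ∈ U, u.length = a) (Θ : Finset (ZMod R))

/-- The frequency in the large sieve contributed by the frequency `t.1` and the suffix `t.2`. -/
def suffixPoint (t : ZMod R × List ℕ) : ZMod R × ZMod R := (t.1 * den t.2, t.1 * num t.2)

include hU in
lemma ofReal_sum_normSq_wordSum :
    ((∑ k ∈ Θ, ‖wordSum R (concat U V) k‖ ^ 2 : ℝ) : ℂ) =
      ∑ u ∈ U, trigSum (Θ ×ˢ V) suffixPoint
        (fun t => (starRingEnd ℂ) (wordSum R (concat U V) t.1))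
          ((firstRow u).1, (firstRow u).2) := by
  have hexpand (k : ZMod R) : (‖wordSum R (concat U V) k‖ : ℂ) ^ 2 = ∑ u ∈ U, ∑ v ∈ V,
      (starRingEnd ℂ) (wordSum R (concat U V) k) * expChar (k * (den (u ++ v) : ZMod R)) := by
    simp_rw [← Complex.conj_mul', ← Finset.mul_sum]
    rw [← sum_concat hU (fun w => (expChar (k * (den w : ZMod R)) : ℂ)), ← wordSum]
  push_cast
  simp_rw [hexpand]
  rw [Finset.sum_comm]
  refine Finset.sum_congr rfl fun u _ => ?_
  rw [trigSum, Finset.sum_product]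
  refine Finset.sum_congr rfl fun k _ => Finset.sum_congr rfl fun v _ => ?_
  rw [den_append_eq_firstRow, suffixPoint]
  congr 2
  ring

include hU in
/-- Duality: expanding one factor of `‖S(k)‖²` bilinearly, Cauchy–Schwarz over the prefixes `u` and
the large sieve over the pairs `(k, v)` give the square of the left side times itself. -/
lemma sum_normSq_wordSum_le (hpos : ∀ u ∈ U, IsPositive u) {M H : ℕ} (hM : ∀ u ∈ U, den u ≤ M)
    (hMR : M < R) (hH : (H - 1) * (6 * M) ≤ R) (hRH : R ≤ 6 * M * H) {D : ℝ}
    (hD : ∀ z, ((nearby (Θ ×ˢ V) suffixPoint H z).card : ℝ) ≤ D) :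
    ∑ k ∈ Θ, ‖wordSum R (concat U V) k‖ ^ 2 ≤ 576 * (M : ℝ) ^ 2 * U.card * V.card * D := by
  set c : ZMod R × List ℕ → ℂ := fun t => (starRingEnd ℂ) (wordSum R (concat U V) t.1)
  set T : List ℕ → ℂ :=
    fun u => trigSum (Θ ×ˢ V) suffixPoint c ((firstRow u).1, (firstRow u).2)
  set E := ∑ k ∈ Θ, ‖wordSum R (concat U V) k‖ ^ 2 with hE
  have hE₀ : 0 ≤ E := Finset.sum_nonneg fun _ _ => by positivity
  have hD₀ : 0 ≤ D := (Nat.cast_nonneg _).trans (hD 0)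
  have hE_le : E ≤ ∑ u ∈ U, ‖T u‖ := by
    rw [← Complex.norm_of_nonneg hE₀, ofReal_sum_normSq_wordSum hU]
    exact norm_sum_le _ _
  have hc : ∑ t ∈ Θ ×ˢ V, ‖c t‖ ^ 2 = V.card * E := by
    rw [Finset.sum_product, hE, Finset.mul_sum]
    simp only [c, RCLike.norm_conj, Finset.sum_const, nsmul_eq_mul]
  have hsieve := sum_normSq_trigSum_le _ _ c (injOn_firstRow hU hpos)
    (fun u hu => firstRow_le (hpos u hu) (hM u hu)) hMR hH hRH hD
  have hsq : E * E ≤ 576 * (M : ℝ) ^ 2 * U.card * V.card * D * E := by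
    calc E * E ≤ (∑ u ∈ U, ‖T u‖) ^ 2 := by
          rw [← sq]
          gcongr
      _ ≤ U.card * ∑ u ∈ U, ‖T u‖ ^ 2 := sq_sum_le_card_mul_sum_sq
      _ ≤ U.card * (576 * (M : ℝ) ^ 2 * D * (V.card * E)) := by
          rw [← hc]
          gcongr
      _ = _ := by ring
  rcases hE₀.eq_or_lt with h | h
  · rw [← h]
    positivity
  · exact le_of_mul_le_mul_right hsq h

end Bilinear

/-! ### Rational approximations and collisions modulo `R` -/

/-- The rational approximation `k / R = a / q + b / (q R)` with `q ≤ Q` and remainder as small as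
Dirichlet's theorem allows. -/
structure IsApprox (R Q : ℕ) (k q a b : ℤ) : Prop where
  one_le : 1 ≤ q
  le : q ≤ Q
  isCoprime : IsCoprime a q
  mul_eq : q * k = a * R + b
  abs_mul_le : |b| * (Q + 1) ≤ R

lemma exists_isApprox {R Q : ℕ} (hR : 0 < R) (hQ : 0 < Q) (k : ℤ) :
    ∃ q a b, IsApprox R Q k q a b := by
  obtain ⟨r, hr, hden⟩ := Real.exists_rat_abs_sub_le_and_den_le ((k : ℝ) / R) hQ
  have hR' : (0 : ℝ) < R := by exact_mod_cast hR
  have hr' : (0 : ℝ) < r.den := by exact_mod_cast r.den_pos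
  refine ⟨r.den, r.num, r.den * k - r.num * R, ⟨by exact_mod_cast r.den_pos,
    by exact_mod_cast hden, ?_, by ring, ?_⟩⟩
  · rw [Int.isCoprime_iff_nat_coprime]
    exact r.reduced
  · have hsub : (k : ℝ) / R - r = ((r.den * k - r.num * R : ℤ) : ℝ) / (r.den * R) := by
      rw [Rat.cast_def]
      push_cast
      field_simp
    rw [hsub, abs_div, abs_of_pos (mul_pos hr' hR'),
      div_le_div_iff₀ (by positivity) (by positivity)] at hr
    have hb : |((r.den * k - r.num * R : ℤ) : ℝ)| * ((Q : ℝ) + 1) ≤ R :=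
      le_of_mul_le_mul_right (by linarith) hr'
    exact_mod_cast hb

lemma eq_zero_of_mul_eq_of_abs_lt {R e m : ℤ} (h : R * m = e) (he : |e| < R) :
    m = 0 ∧ e = 0 := by
  have he₀ : e = 0 := Int.eq_zero_of_abs_lt_dvd (Dvd.intro m h) he
  refine ⟨(mul_eq_zero.1 (h.trans he₀)).resolve_left ?_, he₀⟩
  exact ((abs_nonneg e).trans_lt he).ne'

lemma dvd_of_dvd_mul_of_isCoprime {q c x y : ℤ} (h : IsCoprime x y) (hx : q ∣ c * x)
    (hy : q ∣ c * y) : q ∣ c := by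
  obtain ⟨s, t, hst⟩ := h
  have hc : c = s * (c * x) + t * (c * y) := by linear_combination -c * hst
  rw [hc]
  exact dvd_add (hx.mul_left _) (hy.mul_left _)

lemma abs_mul_le_mul {a b A B : ℤ} (ha : |a| ≤ A) (hb : |b| ≤ B) : |a * b| ≤ A * B := by
  rw [abs_mul]
  exact mul_le_mul ha hb (abs_nonneg _) ((abs_nonneg _).trans ha)

lemma abs_mul_sub_mul_le {a b c d A B : ℤ} (ha : |a| ≤ A) (hb : |b| ≤ A) (hc : |c| ≤ B)
    (hd : |d| ≤ B) : |a * d - b * c| ≤ 2 * (A * B) := by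
  linarith [abs_sub (a * d) (b * c), abs_mul_le_mul ha hd, abs_mul_le_mul hb hc]

/-- The points `k (x, y)` and `k' (x', y')`, with `(x, y)` and `(x', y')` primitive of size at most
`L`, are within `H` of each other modulo `R`. -/
structure IsCollision (R : ℕ) (L H k x y k' x' y' : ℤ) : Prop where
  isCoprime : IsCoprime x y
  isCoprime' : IsCoprime x' y'
  abs_fst_le : |x| ≤ L
  abs_snd_le : |y| ≤ L
  abs_fst_le' : |x'| ≤ L
  abs_snd_le' : |y'| ≤ L
  sub_fst : ∃ h n, |h| ≤ H ∧ k * x - k' * x' = h + R * n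
  sub_snd : ∃ h n, |h| ≤ H ∧ k * y - k' * y' = h + R * n

section Collision

variable {R Q : ℕ} {k q a b k' q' a' b' x y x' y' h h₁ h₂ n n₁ n₂ L H T : ℤ}

lemma abs_mul_abs_le (hD : b * x = q * (h₁ * y' - h₂ * x')) (hq : 1 ≤ q) (h₁_le : |h₁| ≤ H)
    (h₂_le : |h₂| ≤ H) (hx' : |x'| ≤ L) (hy' : |y'| ≤ L) : |b| * |x| ≤ q * (2 * (L * H)) := by
  rw [← abs_mul, hD, abs_mul, abs_of_pos (by linarith), mul_comm L]
  exact mul_le_mul_of_nonneg_left (abs_mul_sub_mul_le h₁_le h₂_le hx' hy') (by linarith)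

section Small

variable (hk : IsApprox R Q k q a b) (hk' : IsApprox R Q k' q' a' b')
  (hq : q ≤ T) (hq' : q' ≤ T) (hb : |b| ≤ T) (hb' : |b'| ≤ T) (hsmall : T ^ 2 * (H + 2 * L) < R)

include hk hk' hq hq' hb hb' hsmall

/-- The congruence modulo `R`, multiplied by `q q'`, splits into an equation between the rational
parts and one between the remainders. -/
lemma eq_and_eq_of_sub_eq (hx : |x| ≤ L) (hx' : |x'| ≤ L) (hh : |h| ≤ H)
    (heq : k * x - k' * x' = h + R * n) :
    q' * (a * x) = q * (a' * x') + q * q' * n ∧ q * q' * h = q' * (b * x) - q * (b' * x') := by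
  have hmul : (R : ℤ) * (q' * (a * x) - q * (a' * x') - q * q' * n) =
      q * q' * h - q' * (b * x) + q * (b' * x') := by
    linear_combination -q' * x * hk.mul_eq + q * x' * hk'.mul_eq + q * q' * heq
  have hqabs : |q| ≤ T := abs_le.2 ⟨by linarith [hk.one_le], hq⟩
  have hqabs' : |q'| ≤ T := abs_le.2 ⟨by linarith [hk'.one_le], hq'⟩
  have hh' := abs_mul_le_mul (abs_mul_le_mul hqabs hqabs') hh
  have hb₁ := abs_mul_le_mul hqabs' (abs_mul_le_mul hb hx)
  have hb₂ := abs_mul_le_mul hqabs (abs_mul_le_mul hb' hx')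
  have hlt : |q * q' * h - q' * (b * x) + q * (b' * x')| < R := by
    rw [abs_le] at hh' hb₁ hb₂
    rw [abs_lt]
    constructor <;> linarith
  have hzero := eq_zero_of_mul_eq_of_abs_lt hmul hlt
  constructor <;> linarith [hzero.1, hzero.2]

lemma denominator_eq (hcol : IsCollision R L H k x y k' x' y') : q = q' := by
  obtain ⟨h₁, n₁, hh₁, heq₁⟩ := hcol.sub_fst
  obtain ⟨h₂, n₂, hh₂, heq₂⟩ := hcol.sub_snd
  have hfst := (eq_and_eq_of_sub_eq hk hk' hq hq' hb hb' hsmall hcol.abs_fst_le hcol.abs_fst_le'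
    hh₁ heq₁).1
  have hsnd := (eq_and_eq_of_sub_eq hk hk' hq hq' hb hb' hsmall hcol.abs_snd_le hcol.abs_snd_le'
    hh₂ heq₂).1
  have hdvd : q ∣ q' * a := dvd_of_dvd_mul_of_isCoprime hcol.isCoprime
    ⟨a' * x' + q' * n₁, by linear_combination hfst⟩ ⟨a' * y' + q' * n₂, by linear_combination hsnd⟩
  have hdvd' : q' ∣ q * a' := dvd_of_dvd_mul_of_isCoprime hcol.isCoprime'
    ⟨a * x - q * n₁, by linear_combination -hfst⟩ ⟨a * y - q * n₂, by linear_combination -hsnd⟩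
  exact Int.dvd_antisymm (by linarith [hk.one_le]) (by linarith [hk'.one_le])
    (hk.isCoprime.symm.dvd_of_dvd_mul_right hdvd) (hk'.isCoprime.symm.dvd_of_dvd_mul_right hdvd')

lemma exists_reduced_equations (hcol : IsCollision R L H k x y k' x' y') :
    ∃ h₁ h₂ n₁ n₂, |h₁| ≤ H ∧ |h₂| ≤ H ∧ a * x - a' * x' = q * n₁ ∧ a * y - a' * y' = q * n₂ ∧
      q * h₁ = b * x - b' * x' ∧ q * h₂ = b * y - b' * y' := by
  obtain rfl := denominator_eq hk hk' hq hq' hb hb' hsmall hcol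
  obtain ⟨h₁, n₁, hh₁, heq₁⟩ := hcol.sub_fst
  obtain ⟨h₂, n₂, hh₂, heq₂⟩ := hcol.sub_snd
  have hfst := eq_and_eq_of_sub_eq hk hk' hq hq' hb hb' hsmall hcol.abs_fst_le hcol.abs_fst_le'
    hh₁ heq₁
  have hsnd := eq_and_eq_of_sub_eq hk hk' hq hq' hb hb' hsmall hcol.abs_snd_le hcol.abs_snd_le'
    hh₂ heq₂
  have hq₀ : q ≠ 0 := by linarith [hk.one_le]
  refine ⟨h₁, h₂, n₁, n₂, hh₁, hh₂, ?_, ?_, ?_, ?_⟩ <;> apply mul_left_cancel₀ hq₀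
  · linear_combination hfst.1
  · linear_combination hsnd.1
  · linear_combination hfst.2
  · linear_combination hsnd.2

lemma dvd_cross_of_small (hcol : IsCollision R L H k x y k' x' y') :
    q ∣ x * y' - y * x' ∧ |b| * |x * y' - y * x'| ≤ q * (2 * (L * H)) := by
  obtain ⟨h₁, h₂, n₁, n₂, hh₁, hh₂, ha₁, ha₂, hb₁, hb₂⟩ :=
    exists_reduced_equations hk hk' hq hq' hb hb' hsmall hcol
  constructor
  · exact hk.isCoprime.symm.dvd_of_dvd_mul_left
      ⟨n₁ * y' - n₂ * x', by linear_combination y' * ha₁ - x' * ha₂⟩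
  · exact abs_mul_abs_le (by linear_combination -y' * hb₁ + x' * hb₂) hk.one_le hh₁ hh₂
      hcol.abs_fst_le' hcol.abs_snd_le'

lemma exists_sub_eq_of_small (hcol : IsCollision R L H k x y k' x y) :
    ∃ t s : ℤ, k - k' = t + R * s ∧ |t * x| ≤ H := by
  obtain rfl := denominator_eq hk hk' hq hq' hb hb' hsmall hcol
  obtain ⟨h₁, h₂, n₁, n₂, hh₁, -, ha₁, ha₂, hb₁, -⟩ :=
    exists_reduced_equations hk hk' hq hq' hb hb' hsmall hcol
  have hq₀ : q ≠ 0 := by linarith [hk.one_le]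
  obtain ⟨s, hs⟩ : q ∣ a - a' := dvd_of_dvd_mul_of_isCoprime hcol.isCoprime
    ⟨n₁, by linear_combination ha₁⟩ ⟨n₂, by linear_combination ha₂⟩
  refine ⟨k - k' - R * s, s, by ring, ?_⟩
  suffices (k - k' - R * s) * x = h₁ by rwa [this]
  apply mul_left_cancel₀ hq₀
  linear_combination x * hk.mul_eq - x * hk'.mul_eq + x * R * hs - hb₁

end Small

lemma dvd_cross_of_large (hk : IsApprox R Q k q a b) (hcol : IsCollision R L H k x y k' x' y')
    (hlarge : Q * (2 * (L * H)) * (Q + 1) + 2 * R * L ^ 2 < R * (Q + 1)) :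
    q ∣ x * y' - y * x' ∧ |b| * |x * y' - y * x'| ≤ q * (2 * (L * H)) := by
  obtain ⟨h₁, n₁, hh₁, heq₁⟩ := hcol.sub_fst
  obtain ⟨h₂, n₂, hh₂, heq₂⟩ := hcol.sub_snd
  have hx' := hcol.abs_fst_le'
  have hy' := hcol.abs_snd_le'
  set D := x * y' - y * x' with hD
  have hmul : (R : ℤ) * (a * D - q * (n₁ * y' - n₂ * x')) =
      q * (h₁ * y' - h₂ * x') - b * D := by
    linear_combination -D * hk.mul_eq + q * y' * heq₁ - q * x' * heq₂ + q * k * hD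
  have hmain : |q * (h₁ * y' - h₂ * x')| ≤ Q * (2 * (H * L)) :=
    abs_mul_le_mul (abs_le.2 ⟨by linarith [hk.one_le, hk.le], hk.le⟩)
      (abs_mul_sub_mul_le hh₁ hh₂ hx' hy')
  have herror : |b * D| * (Q + 1) ≤ R * (2 * (L * L)) := by
    calc |b * D| * (Q + 1) = |b| * (Q + 1) * |D| := by
          rw [abs_mul]
          ring
      _ ≤ R * (2 * (L * L)) :=
          mul_le_mul hk.abs_mul_le (abs_mul_sub_mul_le hcol.abs_fst_le hcol.abs_snd_le hx' hy')
            (abs_nonneg _) (by positivity)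
  have hlt : |q * (h₁ * y' - h₂ * x') - b * D| < R := by
    refine lt_of_mul_lt_mul_right ?_ (show (0 : ℤ) ≤ Q + 1 by positivity)
    nlinarith [abs_sub (q * (h₁ * y' - h₂ * x')) (b * D)]
  obtain ⟨hrational, hremainder⟩ := eq_zero_of_mul_eq_of_abs_lt hmul hlt
  exact ⟨hk.isCoprime.symm.dvd_of_dvd_mul_left ⟨n₁ * y' - n₂ * x', by linarith⟩,
    abs_mul_abs_le (by linarith) hk.one_le hh₁ hh₂ hx' hy'⟩

lemma exists_sub_eq_of_large (hcol : IsCollision R L H k x y k' x y) (hlarge : 2 * (L * H) < R) :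
    ∃ t s : ℤ, k - k' = t + R * s ∧ |t * x| ≤ H := by
  obtain ⟨h₁, n₁, hh₁, heq₁⟩ := hcol.sub_fst
  obtain ⟨h₂, n₂, hh₂, heq₂⟩ := hcol.sub_snd
  have hmul : (R : ℤ) * (n₂ * x - n₁ * y) = h₁ * y - h₂ * x := by
    linear_combination y * heq₁ - x * heq₂
  have hle := abs_mul_sub_mul_le hh₁ hh₂ hcol.abs_fst_le hcol.abs_snd_le
  have hzero := (eq_zero_of_mul_eq_of_abs_lt hmul (hle.trans_lt (by linarith))).2
  obtain ⟨s, t, hst⟩ := hcol.isCoprime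
  refine ⟨s * h₁ + t * h₂, s * n₁ + t * n₂, ?_, ?_⟩
  · linear_combination -(k - k') * hst + s * heq₁ + t * heq₂
  · suffices (s * h₁ + t * h₂) * x = h₁ by rwa [this]
    linear_combination h₁ * hst - t * hzero

end Collision

/-- The sizes `L` and `H` for which collisions between multiples by frequencies in `Θ`, with
approximations `q` and `b`, are controlled: either all of `q`, `b` are small, or `L` and `H` are. -/
def IsSeparating (R Q : ℕ) (L H : ℤ) (Θ : Finset (ZMod R)) (q b : ZMod R → ℤ) : Prop :=
  (∃ T : ℤ, (∀ k ∈ Θ, q k ≤ T ∧ |b k| ≤ T) ∧ T ^ 2 * (H + 2 * L) < R) ∨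
    Q * (2 * (L * H)) * (Q + 1) + 2 * R * L ^ 2 < R * (Q + 1)

namespace IsSeparating

variable {R Q : ℕ} {L H : ℤ} {Θ : Finset (ZMod R)} {q a b : ZMod R → ℤ} {k k' : ZMod R}
  {x y x' y' : ℤ} (hsep : IsSeparating R Q L H Θ q b)
  (hap : ∀ k : ZMod R, IsApprox R Q k.val (q k) (a k) (b k)) (hk : k ∈ Θ) (hk' : k' ∈ Θ)

include hsep hap hk hk'

lemma dvd_cross (hcol : IsCollision R L H k.val x y k'.val x' y') :
    q k ∣ x * y' - y * x' ∧ |b k| * |x * y' - y * x'| ≤ q k * (2 * (L * H)) := by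
  rcases hsep with ⟨T, hT, hsmall⟩ | hlarge
  · exact dvd_cross_of_small (hap k) (hap k') (hT k hk).1 (hT k' hk').1 (hT k hk).2 (hT k' hk').2
      hsmall hcol
  · exact dvd_cross_of_large (hap k) hcol hlarge

lemma exists_sub_eq (hcol : IsCollision R L H k.val x y k'.val x y) :
    ∃ t s : ℤ, (k.val : ℤ) - k'.val = t + R * s ∧ |t * x| ≤ H := by
  rcases hsep with ⟨T, hT, hsmall⟩ | hlarge
  · exact exists_sub_eq_of_small (hap k) (hap k') (hT k hk).1 (hT k' hk').1 (hT k hk).2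
      (hT k' hk').2 hsmall hcol
  · refine exists_sub_eq_of_large hcol ?_
    by_contra! hle
    have hQ : (1 : ℤ) ≤ Q := (hap k).one_le.trans (hap k).le
    have hL : 0 ≤ 2 * (R : ℤ) * L ^ 2 := by positivity
    have hLH : (R : ℤ) * 1 ≤ 2 * (L * H) * Q :=
      mul_le_mul hle hQ zero_le_one ((Int.natCast_nonneg R).trans hle)
    linarith [mul_le_mul_of_nonneg_right hLH (show (0 : ℤ) ≤ Q + 1 by positivity)]

end IsSeparating

/-! ### Exponential sums over products -/

/-- All words `u ++ v` with `u ∈ U`, `v ∈ V` have continuant between `N / C` and `N`. -/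
structure IsFactorPair (N C : ℕ) (U V : Finset (List ℕ)) : Prop where
  length_eq : ∃ l, ∀ u ∈ U, u.length = l
  isPositive_left : ∀ u ∈ U, IsPositive u
  isPositive_right : ∀ v ∈ V, IsPositive v
  nonempty_left : U.Nonempty
  nonempty_right : V.Nonempty
  le_mul_den : ∀ u ∈ U, ∀ v ∈ V, (N : ℤ) ≤ C * den (u ++ v)
  den_le : ∀ u ∈ U, ∀ v ∈ V, den (u ++ v) ≤ N

/-- The parameters of the large sieve: `M` is the largest continuant in `U`, all continuants in `V`
are about `L = N / M`, and the smoothing length `H` is about `N / (6 M)`. -/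
structure IsSieveScale (N C : ℕ) (U V : Finset (List ℕ)) (M L H : ℕ) : Prop where
  exists_den_eq : ∃ u ∈ U, den u = M
  den_left_le : ∀ u ∈ U, den u ≤ M
  den_right_le : ∀ v ∈ V, den v ≤ L
  le_mul_den_right : ∀ v ∈ V, (L : ℤ) ≤ 2 * C * den v
  le : M ≤ N
  mul_le : M * L ≤ N
  smoothing_mul_le : (H - 1) * (6 * M) ≤ N + 1
  le_mul_smoothing : N + 1 ≤ 6 * M * H
  smoothing_le : H ≤ 2 * L

section FactorPair

variable {N C : ℕ} {U V : Finset (List ℕ)}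

lemma IsFactorPair.exists_isSieveScale (h : IsFactorPair N C U V) :
    ∃ M L H, IsSieveScale N C U V M L H := by
  obtain ⟨u₀, hu₀, hmax⟩ := U.exists_max_image den h.nonempty_left
  obtain ⟨v₀, hv₀⟩ := h.nonempty_right
  obtain ⟨M, hM⟩ := Int.eq_ofNat_of_zero_le (den_nonneg u₀)
  have hM₁ : 1 ≤ M := by
    have := (h.isPositive_left u₀ hu₀).one_le_den
    lia
  have hmul_le : ∀ v ∈ V, M * den v ≤ N := fun v hv =>
    hM ▸ (den_mul_den_le u₀ v).trans (h.den_le u₀ hu₀ v hv)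
  have hMN : M ≤ N := by
    have hone := mul_le_mul_of_nonneg_left (h.isPositive_right v₀ hv₀).one_le_den
      (Int.natCast_nonneg M)
    exact_mod_cast (by linarith [hmul_le v₀ hv₀] : (M : ℤ) ≤ N)
  refine ⟨M, N / M, (N + 1) / (6 * M) + 1, ⟨u₀, hu₀, hM⟩, fun u hu => hM ▸ hmax u hu, ?_, ?_, hMN,
    Nat.mul_div_le N M, Nat.div_mul_le_self _ _, (Nat.lt_mul_div_succ _ (by lia)).le, ?_⟩
  · intro v hv
    rw [Int.natCast_div, Int.le_ediv_iff_mul_le (by exact_mod_cast hM₁), mul_comm]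
    exact hmul_le v hv
  · intro v hv
    have happend := (h.isPositive_left u₀ hu₀).den_append_le (h.isPositive_right v hv)
    have hdiv : (M : ℤ) * (N / M : ℕ) ≤ N := by exact_mod_cast Nat.mul_div_le N M
    refine le_of_mul_le_mul_left ?_ (show (0 : ℤ) < M by exact_mod_cast hM₁)
    calc (M : ℤ) * (N / M : ℕ) ≤ C * den (u₀ ++ v) := hdiv.trans (h.le_mul_den u₀ hu₀ v hv)
      _ ≤ C * (2 * (den u₀ * den v)) := by gcongr
      _ = M * (2 * C * den v) := by
          rw [hM]
          ring
  · have hdiv : (N + 1) / (6 * M) ≤ N / M := by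
      rw [Nat.le_div_iff_mul_le hM₁]
      nlinarith [Nat.div_mul_le_self (N + 1) (6 * M)]
    have : 1 ≤ N / M := Nat.div_pos hMN hM₁
    lia

namespace IsSieveScale

variable {M L H Q : ℕ} (s : IsSieveScale N C U V M L H) {Θ : Finset (ZMod (N + 1))}
  {q b : ZMod (N + 1) → ℤ}
include s

lemma isSeparating_of_small {T : ℤ} (hΘ : ∀ k ∈ Θ, q k ≤ T ∧ |b k| ≤ T)
    (hT : ∀ u ∈ U, 4 * T ^ 2 ≤ den u) : IsSeparating (N + 1) Q L H Θ q b := by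
  obtain ⟨u₀, hu₀, hM⟩ := s.exists_den_eq
  have hTM := hT u₀ hu₀
  have hH : (H : ℤ) ≤ 2 * L := by exact_mod_cast s.smoothing_le
  have hML : (M : ℤ) * L ≤ N := by exact_mod_cast s.mul_le
  refine Or.inl ⟨T, hΘ, ?_⟩
  calc T ^ 2 * ((H : ℤ) + 2 * L) ≤ T ^ 2 * (4 * L) := by
        gcongr
        linarith
    _ = 4 * T ^ 2 * L := by ring
    _ ≤ M * L := by
        gcongr
        linarith
    _ < ((N + 1 : ℕ) : ℤ) := by
        push_cast
        linarith

lemma isSeparating_of_large (hV : V.Nonempty) (hlarge : ∀ v ∈ V, 100 * (2 * C * den v) ^ 4 ≤ N) :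
    IsSeparating (N + 1) (Nat.sqrt (N + 1)) L H Θ q b := by
  obtain ⟨v, hv⟩ := hV
  set S := Nat.sqrt (N + 1)
  have hL₄ : 100 * L ^ 4 ≤ N := by
    have hpow : (L : ℤ) ^ 4 ≤ (2 * C * den v) ^ 4 :=
      pow_le_pow_left₀ (by positivity) (s.le_mul_den_right v hv) 4
    exact_mod_cast (by linarith [hlarge v hv] : 100 * (L : ℤ) ^ 4 ≤ N)
  have hS_le : S * S ≤ N + 1 := Nat.sqrt_le _
  have hlt_S : N + 1 < (S + 1) * (S + 1) := Nat.lt_succ_sqrt _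
  have hL₂ : 10 * L ^ 2 < S + 1 := by nlinarith
  have hLH : L * H ≤ 2 * L ^ 2 := by nlinarith [s.smoothing_le]
  have hSS : S * (S + 1) ≤ 2 * (N + 1) := by nlinarith [Nat.sqrt_le_self (N + 1)]
  have hnat : S * (2 * (L * H)) * (S + 1) + 2 * (N + 1) * L ^ 2 < (N + 1) * (S + 1) := by
    calc S * (2 * (L * H)) * (S + 1) + 2 * (N + 1) * L ^ 2
        = S * (S + 1) * (2 * (L * H)) + 2 * (N + 1) * L ^ 2 := by ring
      _ ≤ 2 * (N + 1) * (2 * (2 * L ^ 2)) + 2 * (N + 1) * L ^ 2 := by gcongr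
      _ = (N + 1) * (10 * L ^ 2) := by ring
      _ < _ := by gcongr
  exact Or.inr (by exact_mod_cast hnat)

end IsSieveScale

/-- The determinant `den v * num v' - num v * den v'`. -/
def cross (v v' : List ℕ) : ℤ := den v * num v' - num v * den v'

/-- The words `v'` of `V` that can collide with `v` at a frequency with approximation `q`, `b`. -/
def competitors (V : Finset (List ℕ)) (C : ℕ) (q b : ℤ) (v : List ℕ) : Finset (List ℕ) :=
  V.filter fun v' => q ∣ cross v v' ∧ |b| * |cross v v'| ≤ q * (16 * C ^ 2 * den v ^ 2)

lemma exists_sub_eq_of_add_eq {R : ℕ} [NeZero R] {k k' z : ZMod R} {x x' : ℤ} {m m' H : ℕ}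
    (hm : m < H) (hm' : m' < H) (h : k * x + m = z) (h' : k' * x' + m' = z) :
    ∃ j n : ℤ, |j| ≤ H ∧ (k.val : ℤ) * x - (k'.val : ℤ) * x' = j + R * n := by
  have hcast : (((k.val : ℤ) * x - (k'.val : ℤ) * x' - ((m' : ℤ) - m) : ℤ) : ZMod R) = 0 := by
    push_cast
    rw [ZMod.natCast_zmod_val, ZMod.natCast_zmod_val]
    linear_combination h - h'
  obtain ⟨n, hn⟩ := (ZMod.intCast_zmod_eq_zero_iff_dvd _ _).1 hcast
  refine ⟨(m' : ℤ) - m, n, ?_, by linarith⟩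
  rw [abs_le]
  constructor <;> lia

section Nearby

variable {M L H Q : ℕ} (h : IsFactorPair N C U V) (s : IsSieveScale N C U V M L H)
  {Θ : Finset (ZMod (N + 1))} {q a b : ZMod (N + 1) → ℤ}
  (hsep : IsSeparating (N + 1) Q L H Θ q b)
  (hap : ∀ k : ZMod (N + 1), IsApprox (N + 1) Q k.val (q k) (a k) (b k))
  {z : ZMod (N + 1) × ZMod (N + 1)} {t t' : ZMod (N + 1) × List ℕ}
  (ht : t ∈ nearby (Θ ×ˢ V) suffixPoint H z)

lemma mem_of_mem_nearby {R : ℕ} {Θ : Finset (ZMod R)} {z : ZMod R × ZMod R}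
    {t : ZMod R × List ℕ} (ht : t ∈ nearby (Θ ×ˢ V) suffixPoint H z) : t.1 ∈ Θ ∧ t.2 ∈ V :=
  Finset.mem_product.1 (Finset.mem_filter.1 ht).1

include h s ht in
lemma isCollision_of_mem_nearby (ht' : t' ∈ nearby (Θ ×ˢ V) suffixPoint H z) :
    IsCollision (N + 1) L H t.1.val (den t.2) (num t.2) t'.1.val (den t'.2) (num t'.2) := by
  have hden : ∀ v ∈ V, |den v| ≤ (L : ℤ) := fun v hv => by
    rw [abs_of_nonneg (den_nonneg v)]
    exact s.den_right_le v hv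
  have hnum : ∀ v ∈ V, |num v| ≤ (L : ℤ) := fun v hv => by
    rw [abs_of_nonneg (num_nonneg v)]
    exact (h.isPositive_right v hv).num_le_den.trans (s.den_right_le v hv)
  have hv := (mem_of_mem_nearby ht).2
  have hv' := (mem_of_mem_nearby ht').2
  obtain ⟨-, m₁, hm₁, m₂, hm₂, heq₁, heq₂⟩ := Finset.mem_filter.1 ht
  obtain ⟨-, m₁', hm₁', m₂', hm₂', heq₁', heq₂'⟩ := Finset.mem_filter.1 ht'
  exact ⟨isCoprime_den_num _, isCoprime_den_num _, hden _ hv, hnum _ hv, hden _ hv', hnum _ hv',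
    exists_sub_eq_of_add_eq hm₁ hm₁' heq₁ heq₁', exists_sub_eq_of_add_eq hm₂ hm₂' heq₂ heq₂'⟩

include h s hsep hap ht

lemma snd_mem_competitors (ht' : t' ∈ nearby (Θ ×ˢ V) suffixPoint H z) :
    t'.2 ∈ competitors V C (q t.1) (b t.1) t.2 := by
  obtain ⟨hdvd, hle⟩ := hsep.dvd_cross hap (mem_of_mem_nearby ht).1 (mem_of_mem_nearby ht').1
    (isCollision_of_mem_nearby h s ht ht')
  refine Finset.mem_filter.2 ⟨(mem_of_mem_nearby ht').2, hdvd, hle.trans ?_⟩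
  have hq := (hap t.1).one_le
  have hH : (H : ℤ) ≤ 2 * L := by exact_mod_cast s.smoothing_le
  have hL := s.le_mul_den_right t.2 (mem_of_mem_nearby ht).2
  refine mul_le_mul_of_nonneg_left ?_ (by linarith)
  calc 2 * ((L : ℤ) * H) ≤ 2 * (L * (2 * L)) := by gcongr
    _ = 4 * (L : ℤ) ^ 2 := by ring
    _ ≤ 4 * (2 * C * den t.2) ^ 2 := by gcongr
    _ = _ := by ring

lemma card_fiber_nearby_le :
    {t' ∈ nearby (Θ ×ˢ V) suffixPoint H z | t'.2 = t.2}.card ≤ 8 * C + 1 := by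
  have hsub : {t' ∈ nearby (Θ ×ˢ V) suffixPoint H z | t'.2 = t.2} ⊆
      (Finset.Icc (-(4 * C : ℤ)) (4 * C)).image
        fun j : ℤ => (t.1 - (j : ZMod (N + 1)), t.2) := by
    intro t' ht'
    obtain ⟨ht', heq⟩ := Finset.mem_filter.1 ht'
    have hcol := isCollision_of_mem_nearby h s ht ht'
    rw [heq] at hcol
    obtain ⟨j, r, hsub, hj⟩ := hsep.exists_sub_eq hap (mem_of_mem_nearby ht).1
      (mem_of_mem_nearby ht').1 hcol
    refine Finset.mem_image.2 ⟨j, ?_, Prod.ext ?_ heq.symm⟩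
    · have hpos : 0 < den t.2 := by
        linarith [(h.isPositive_right _ (mem_of_mem_nearby ht).2).one_le_den]
      have hH : (H : ℤ) ≤ 2 * L := by exact_mod_cast s.smoothing_le
      have hL := s.le_mul_den_right t.2 (mem_of_mem_nearby ht).2
      rw [abs_mul, abs_of_pos hpos] at hj
      rw [Finset.mem_Icc, ← abs_le]
      exact le_of_mul_le_mul_right (by linarith) hpos
    · have hcast := congrArg (Int.cast : ℤ → ZMod (N + 1)) hsub
      rw [Int.cast_sub, Int.cast_add, Int.cast_mul, Int.cast_natCast, Int.cast_natCast,
        Int.cast_natCast, ZMod.natCast_zmod_val, ZMod.natCast_zmod_val, ZMod.natCast_self,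
        zero_mul, add_zero] at hcast
      rw [← hcast, sub_sub_cancel]
  refine (Finset.card_le_card hsub).trans (Finset.card_image_le.trans ?_)
  rw [Int.card_Icc]
  lia

lemma card_nearby_le_mul : (nearby (Θ ×ˢ V) suffixPoint H z).card ≤
    (8 * C + 1) * (competitors V C (q t.1) (b t.1) t.2).card := by
  refine Finset.card_le_mul_card_image_of_maps_to (f := Prod.snd)
    (fun t' ht' => snd_mem_competitors h s hsep hap ht ht') _ fun v _ => ?_
  rcases {t' ∈ nearby (Θ ×ˢ V) suffixPoint H z | t'.2 = v}.eq_empty_or_nonempty with he | ⟨t', ht'⟩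
  · rw [he, Finset.card_empty]
    exact Nat.zero_le _
  · obtain ⟨hmem, rfl⟩ := Finset.mem_filter.1 ht'
    exact card_fiber_nearby_le h s hsep hap hmem

end Nearby

lemma IsFactorPair.sum_normSq_wordSum_le (h : IsFactorPair N C U V) {Q : ℕ}
    {q a b : ZMod (N + 1) → ℤ}
    (hap : ∀ k : ZMod (N + 1), IsApprox (N + 1) Q k.val (q k) (a k) (b k))
    {Θ : Finset (ZMod (N + 1))}
    (hsep : ∀ {M L H}, IsSieveScale N C U V M L H → IsSeparating (N + 1) Q L H Θ q b)
    {X D : ℝ} (hX : ∀ u ∈ U, (den u : ℝ) ≤ X) (hD₀ : 0 ≤ D)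
    (hD : ∀ k ∈ Θ, ∀ v ∈ V, ((competitors V C (q k) (b k) v).card : ℝ) ≤ D) :
    ∑ k ∈ Θ, ‖wordSum (N + 1) (concat U V) k‖ ^ 2 ≤
      576 * X ^ 2 * U.card * V.card * ((8 * C + 1) * D) := by
  obtain ⟨M, L, H, s⟩ := h.exists_isSieveScale
  obtain ⟨l, hl⟩ := h.length_eq
  have hnearby (z : ZMod (N + 1) × ZMod (N + 1)) :
      ((nearby (Θ ×ˢ V) suffixPoint H z).card : ℝ) ≤ (8 * C + 1) * D := by
    rcases (nearby (Θ ×ˢ V) suffixPoint H z).eq_empty_or_nonempty with he | ⟨t, ht⟩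
    · rw [he, Finset.card_empty, Nat.cast_zero]
      positivity
    · obtain ⟨hk, hv⟩ := mem_of_mem_nearby ht
      calc _ ≤ (8 * (C : ℝ) + 1) * (competitors V C (q t.1) (b t.1) t.2).card := by
            exact_mod_cast card_nearby_le_mul h s (hsep s) hap ht
        _ ≤ _ := by
            gcongr
            exact hD _ hk _ hv
  have hMX : (M : ℝ) ≤ X := by
    obtain ⟨u₀, hu₀, hM⟩ := s.exists_den_eq
    simpa only [hM, Int.cast_natCast] using hX u₀ hu₀
  refine (Continuant.sum_normSq_wordSum_le hl Θ h.isPositive_left s.den_left_le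
    (Nat.lt_succ_of_le s.le) s.smoothing_mul_le s.le_mul_smoothing hnearby).trans ?_
  gcongr

end FactorPair

/-! ### Counting collisions -/

/-- A set of positive words of length `l` whose continuants are at most `Y` and agree up to the
factor `C`. -/
structure IsComparable (l C : ℕ) (Y : ℝ) (V : Finset (List ℕ)) : Prop where
  length_eq : ∀ v ∈ V, v.length = l
  isPositive : ∀ v ∈ V, IsPositive v
  den_le_mul : ∀ v ∈ V, ∀ v' ∈ V, den v ≤ C * den v'
  den_le : ∀ v ∈ V, (den v : ℝ) ≤ Y

lemma IsPositive.abs_cross_le {v v' : List ℕ} (hv : IsPositive v) (hv' : IsPositive v') {Y : ℝ}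
    (hY : (den v : ℝ) ≤ Y) (hY' : (den v' : ℝ) ≤ Y) : |(cross v v' : ℝ)| ≤ 2 * Y ^ 2 := by
  have hY₀ : 0 ≤ Y := hv.den_pos.le.trans hY
  have hnum : (num v : ℝ) ≤ Y := (by exact_mod_cast hv.num_le_den : (num v : ℝ) ≤ den v).trans hY
  have hnum' : (num v' : ℝ) ≤ Y :=
    (by exact_mod_cast hv'.num_le_den : (num v' : ℝ) ≤ den v').trans hY'
  have hnum₀ : (0 : ℝ) ≤ num v := by exact_mod_cast num_nonneg v
  have hnum₀' : (0 : ℝ) ≤ num v' := by exact_mod_cast num_nonneg v'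
  calc |(cross v v' : ℝ)| = |(den v : ℝ) * num v' - num v * den v'| := by
        rw [cross]
        push_cast
        rfl
    _ ≤ |(den v : ℝ) * num v'| + |(num v : ℝ) * den v'| := abs_sub _ _
    _ = den v * num v' + num v * den v' := by
        rw [abs_of_nonneg (mul_nonneg hv.den_pos.le hnum₀'),
          abs_of_nonneg (mul_nonneg hnum₀ hv'.den_pos.le)]
    _ ≤ Y * Y + Y * Y := add_le_add (mul_le_mul hY hnum' hnum₀' hY₀)
        (mul_le_mul hnum hY' hv'.den_pos.le hY₀)
    _ = 2 * Y ^ 2 := by ring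

namespace IsComparable

variable {l C : ℕ} {Y : ℝ} {V S : Finset (List ℕ)} {v₀ : List ℕ} {q : ℤ}

/- `den v` modulo `den v₀` is determined by `cross v₀ v`, and `den v / den v₀` gives the rest. -/
lemma injOn_cross_ediv (h : IsComparable l C Y V) (hv₀ : v₀ ∈ V)
    (hd : ∀ v ∈ V, q ∣ cross v₀ v) :
    Set.InjOn (fun v => (cross v₀ v / q, den v / den v₀)) V := by
  intro v hv v' hv' heq
  obtain ⟨hquot, hdiv⟩ : cross v₀ v / q = cross v₀ v' / q ∧ den v / den v₀ = den v' / den v₀ :=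
    Prod.ext_iff.1 heq
  have hpos : 0 < den v₀ := (h.isPositive v₀ hv₀).one_le_den
  have hcross : cross v₀ v = cross v₀ v' := by
    rw [← Int.mul_ediv_cancel' (hd v hv), hquot, Int.mul_ediv_cancel' (hd v' hv')]
  rw [cross, cross] at hcross
  have hmod : den v ≡ den v' [ZMOD den v₀] := by
    refine (Int.modEq_iff_dvd.2 ((isCoprime_den_num v₀).dvd_of_dvd_mul_left ?_)).symm
    exact ⟨num v - num v', by linarith⟩
  have hden : den v = den v' := by
    rw [← Int.mul_ediv_add_emod (den v) (den v₀), hdiv, hmod, Int.mul_ediv_add_emod]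
  rw [hden] at hcross
  exact (h.isPositive v hv).eq_of_den_eq_of_num_eq (h.isPositive v' hv')
    ((h.length_eq v hv).trans (h.length_eq v' hv').symm) hden
    (mul_left_cancel₀ hpos.ne' (by linarith))

lemma mono (h : IsComparable l C Y V) (hS : S ⊆ V) : IsComparable l C Y S where
  length_eq v hv := h.length_eq v (hS hv)
  isPositive v hv := h.isPositive v (hS hv)
  den_le_mul v hv v' hv' := h.den_le_mul v (hS hv) v' (hS hv')
  den_le v hv := h.den_le v (hS hv)

lemma card_le_of_dvd_cross (h : IsComparable l C Y V) (hv₀ : v₀ ∈ V) (hq : 1 ≤ q) {T : ℝ}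
    (hT : 0 ≤ T) (hd : ∀ v ∈ V, q ∣ cross v₀ v) (hle : ∀ v ∈ V, |(cross v₀ v : ℝ)| ≤ T) :
    (V.card : ℝ) ≤ (2 * T / q + 1) * (C + 1) := by
  have hq₀ : (0 : ℝ) < q := by exact_mod_cast hq
  have hden₀ := (h.isPositive v₀ hv₀).one_le_den
  set t := ⌊T / q⌋
  have ht₀ : 0 ≤ t := Int.floor_nonneg.2 (by positivity)
  have hcard : V.card ≤ (Finset.Icc (-t) t ×ˢ Finset.Icc (0 : ℤ) C).card := by
    refine Finset.card_le_card_of_injOn _ (fun v hv => ?_) (h.injOn_cross_ediv hv₀ hd)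
    refine Finset.mem_product.2 ⟨Finset.mem_Icc.2 (abs_le.1 ?_), Finset.mem_Icc.2
      ⟨Int.ediv_nonneg (den_nonneg v) (by linarith),
        Int.ediv_le_of_le_mul (by linarith) (h.den_le_mul v hv v₀ hv₀)⟩⟩
    obtain ⟨d, hd⟩ := hd v hv
    have hv := hle v hv
    rw [hd, Int.cast_mul, abs_mul, abs_of_pos hq₀] at hv
    rw [hd, Int.mul_ediv_cancel_left _ (by linarith), Int.le_floor, le_div_iff₀ hq₀, Int.cast_abs]
    linarith
  rw [Finset.card_product, Int.card_Icc, Int.card_Icc,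
    show (t + 1 - -t).toNat = 2 * t.toNat + 1 by lia,
    show ((C : ℤ) + 1 - 0).toNat = C + 1 by lia] at hcard
  have ht : ((t.toNat : ℕ) : ℝ) ≤ T / q := by
    rw [← Int.cast_natCast, Int.toNat_of_nonneg ht₀]
    exact Int.floor_le _
  calc (V.card : ℝ) ≤ (2 * t.toNat + 1) * (C + 1) := by exact_mod_cast hcard
    _ ≤ (2 * (T / q) + 1) * (C + 1) := by gcongr
    _ = _ := by ring

end IsComparable

section Competitors

variable {l C C₁ : ℕ} {Y : ℝ} {G V Z : Finset (List ℕ)} {v w : List ℕ} {q b : ℤ}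

lemma self_mem_competitors (hq : 0 ≤ q) (hv : v ∈ V) : v ∈ competitors V C q b v := by
  have hcross : cross v v = 0 := by
    rw [cross]
    ring
  refine Finset.mem_filter.2 ⟨hv, hcross ▸ dvd_zero q, ?_⟩
  rw [hcross, abs_zero, mul_zero]
  positivity

lemma IsComparable.card_competitors_le (h : IsComparable l C Y V) (hC₁ : 1 ≤ C₁) (hq : 1 ≤ q)
    {P : ℝ} (hP : 0 < P) (hqb : P ≤ q ∨ P ≤ |b|) (hv : v ∈ V) :
    ((competitors V C₁ q b v).card : ℝ) ≤ (32 * C₁ ^ 2 * Y ^ 2 / P + 1) * (C + 1) := by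
  have : (0 : ℝ) < q := by exact_mod_cast hq
  have hsub := h.mono (Finset.filter_subset _ _ : competitors V C₁ q b v ⊆ V)
  have hself := self_mem_competitors (C := C₁) (b := b) (by linarith : 0 ≤ q) hv
  have hdvd : ∀ w ∈ competitors V C₁ q b v, q ∣ cross v w := fun w hw =>
    (Finset.mem_filter.1 hw).2.1
  rcases hqb with hPq | hPb
  · refine (hsub.card_le_of_dvd_cross hself hq (by positivity : 0 ≤ 2 * Y ^ 2) hdvd fun w hw =>
      (h.isPositive v hv).abs_cross_le (hsub.isPositive w hw) (h.den_le v hv)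
        (hsub.den_le w hw)).trans ?_
    have hone : (1 : ℝ) ≤ C₁ ^ 2 := one_le_pow₀ (by exact_mod_cast hC₁)
    gcongr (?_ / ?_ + 1) * _
    nlinarith [sq_nonneg Y]
  · have hPb : P ≤ |(b : ℝ)| := by exact_mod_cast hPb
    have hb₀ : 0 < |(b : ℝ)| := hP.trans_le hPb
    refine (hsub.card_le_of_dvd_cross hself hq
      (by positivity : 0 ≤ q * (16 * C₁ ^ 2 * Y ^ 2) / |(b : ℝ)|) hdvd fun w hw => ?_).trans ?_
    · rw [le_div_iff₀ hb₀, mul_comm]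
      have hle : |(b : ℝ)| * |(cross v w : ℝ)| ≤ q * (16 * C₁ ^ 2 * (den v : ℝ) ^ 2) := by
        exact_mod_cast (Finset.mem_filter.1 hw).2.2
      refine hle.trans ?_
      have := (h.isPositive v hv).den_pos.le
      gcongr
      exact h.den_le v hv
    · have heq : 2 * (q * (16 * (C₁ : ℝ) ^ 2 * Y ^ 2) / |(b : ℝ)|) / q =
          32 * C₁ ^ 2 * Y ^ 2 / |(b : ℝ)| := by
        field_simp
        ring
      rw [heq]
      gcongr

lemma card_filter_concat (hG : ∀ g ∈ G, g.length = l) (p : List ℕ → Prop) [DecidablePred p] :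
    ((concat G Z).filter p).card = ∑ g ∈ G, (Z.filter fun z => p (g ++ z)).card := by
  simp only [Finset.card_filter, sum_concat hG]

lemma cross_append (v g z : List ℕ) :
    cross v (g ++ z) = cross v g * den z + (den v * prevNum g - num v * prevDen g) * num z := by
  rw [cross, cross, num_append, den_append]
  ring

lemma isCoprime_cross (v g : List ℕ) :
    IsCoprime (cross v g) (den v * prevNum g - num v * prevDen g) := by
  obtain ⟨s, t, hst⟩ := isCoprime_den_num v
  have hdet := den_mul_prevNum_sub g
  have hsign : (-1 : ℤ) ^ g.length * (-1) ^ g.length = 1 := by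
    rw [← mul_pow, neg_one_mul, neg_neg, one_pow]
  refine ⟨(-1) ^ g.length * (-(s * prevDen g) - t * prevNum g),
    (-1) ^ g.length * (s * den g + t * num g), ?_⟩
  rw [cross]
  linear_combination ((-1) ^ g.length * (s * den v + t * num v)) * hdet +
    hsign * (s * den v + t * num v) + hst

lemma dvd_cross_of_dvd_cross_append {g z z' : List ℕ} (h : q ∣ cross v (g ++ z))
    (h' : q ∣ cross v (g ++ z')) : q ∣ cross z z' := by
  rw [cross_append] at h h'
  obtain ⟨d, hd⟩ := h
  obtain ⟨d', hd'⟩ := h'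
  refine dvd_of_dvd_mul_of_isCoprime (isCoprime_cross v g)
    ⟨d * num z' - d' * num z, ?_⟩ ⟨d' * den z - d * den z', ?_⟩
  · rw [cross]
    linear_combination num z' * hd - num z * hd'
  · rw [cross]
    linear_combination den z * hd' - den z' * hd

lemma IsComparable.card_competitors_concat_le_left (h : IsComparable l C Y Z) {l' : ℕ}
    (hG : ∀ g ∈ G, g.length = l') (hq : 1 ≤ q) :
    ((competitors (concat G Z) C₁ q b v).card : ℝ) ≤
      G.card * ((4 * Y ^ 2 / q + 1) * (C + 1)) := by
  have : (0 : ℝ) < q := by exact_mod_cast hq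
  rw [competitors, card_filter_concat hG, Nat.cast_sum, ← nsmul_eq_mul]
  refine Finset.sum_le_card_nsmul _ _ _ fun g _ => ?_
  rcases (Z.filter fun z => q ∣ cross v (g ++ z) ∧ |b| * |cross v (g ++ z)| ≤
    q * (16 * C₁ ^ 2 * den v ^ 2)).eq_empty_or_nonempty with he | ⟨z₀, hz₀⟩
  · rw [he, Finset.card_empty, Nat.cast_zero]
    positivity
  · have hsub := h.mono (Finset.filter_subset (fun z => q ∣ cross v (g ++ z) ∧
      |b| * |cross v (g ++ z)| ≤ q * (16 * C₁ ^ 2 * den v ^ 2)) Z)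
    refine (hsub.card_le_of_dvd_cross hz₀ hq (by positivity : 0 ≤ 2 * Y ^ 2) (fun z hz =>
      dvd_cross_of_dvd_cross_append (Finset.mem_filter.1 hz₀).2.1 (Finset.mem_filter.1 hz).2.1)
      fun z hz => (hsub.isPositive z₀ hz₀).abs_cross_le (hsub.isPositive z hz)
        (hsub.den_le z₀ hz₀) (hsub.den_le z hz)).trans_eq ?_
    ring

lemma IsPositive.value_sub_value (hv : IsPositive v) (hw : IsPositive w) :
    value w - value v = cross v w / (den v * den w) := by
  have := hv.den_pos
  have := hw.den_pos
  rw [value, value, cross]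
  push_cast
  field_simp

lemma IsPositive.abs_value_sub_le_of_mem_competitors (hv : IsPositive v) (hw : IsPositive w)
    (hmem : w ∈ competitors V C₁ q b v) (hq : 1 ≤ q) {Q : ℝ} (hQ : 0 < Q) (hQb : Q * q ≤ |b|)
    (hvw : den v ≤ C * den w) : |value w - value v| ≤ 16 * C₁ ^ 2 * C / Q := by
  have hv₀ := hv.den_pos
  have hw₀ := hw.den_pos
  have hvw : (den v : ℝ) ≤ C * den w := by exact_mod_cast hvw
  have hle : |(b : ℝ)| * |(cross v w : ℝ)| ≤ q * (16 * C₁ ^ 2 * (den v : ℝ) ^ 2) := by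
    exact_mod_cast (Finset.mem_filter.1 hmem).2.2
  have hQb : Q * q ≤ |(b : ℝ)| := by exact_mod_cast hQb
  rw [hv.value_sub_value hw, abs_div, abs_of_pos (mul_pos hv₀ hw₀),
    div_le_div_iff₀ (mul_pos hv₀ hw₀) hQ]
  refine le_of_mul_le_mul_left ?_ (by exact_mod_cast hq : (0 : ℝ) < q)
  calc (q : ℝ) * (|(cross v w : ℝ)| * Q) = Q * q * |(cross v w : ℝ)| := by ring
    _ ≤ |(b : ℝ)| * |(cross v w : ℝ)| := by gcongr
    _ ≤ q * (16 * C₁ ^ 2 * (den v : ℝ) ^ 2) := hle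
    _ = q * (16 * C₁ ^ 2 * (den v * den v)) := by ring
    _ ≤ q * (16 * C₁ ^ 2 * (den v * (C * den w))) := by gcongr
    _ = q * (16 * C₁ ^ 2 * C * (den v * den w)) := by ring

lemma IsComparable.abs_cross_le_of_abs_value_sub_le (h : IsComparable l C Y V) {g g' : List ℕ}
    (hg : g ∈ V) (hg' : g' ∈ V) {r ε : ℝ} (hε : 0 ≤ ε)
    (hgr : |value g - r| ≤ ε + 1 / (den g : ℝ) ^ 2)
    (hgr' : |value g' - r| ≤ ε + 1 / (den g' : ℝ) ^ 2) :
    |(cross g g' : ℝ)| ≤ 2 * ε * Y ^ 2 + 2 * C := by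
  have hpos := (h.isPositive g hg).den_pos
  have hpos' := (h.isPositive g' hg').den_pos
  have hcross : (cross g g' : ℝ) = den g * den g' * (value g' - value g) := by
    rw [(h.isPositive g hg).value_sub_value (h.isPositive g' hg')]
    field_simp
  have hratio : (den g : ℝ) ≤ C * den g' := by exact_mod_cast h.den_le_mul g hg g' hg'
  have hratio' : (den g' : ℝ) ≤ C * den g := by exact_mod_cast h.den_le_mul g' hg' g hg
  calc |(cross g g' : ℝ)| = den g * den g' * |(value g' - r) - (value g - r)| := by
        rw [hcross, abs_mul, abs_of_pos (mul_pos hpos hpos'), sub_sub_sub_cancel_right]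
    _ ≤ den g * den g' * ((ε + 1 / (den g' : ℝ) ^ 2) + (ε + 1 / (den g : ℝ) ^ 2)) := by
        gcongr
        exact (abs_sub _ _).trans (add_le_add hgr' hgr)
    _ = 2 * ε * (den g * den g') + (den g / den g' + den g' / den g) := by
        field_simp
        ring
    _ ≤ 2 * ε * (Y * Y) + (C + C) := by
        have hY := (hpos.le.trans (h.den_le g hg))
        gcongr
        exacts [h.den_le g hg, h.den_le g' hg', (div_le_iff₀ hpos').2 hratio,
          (div_le_iff₀ hpos).2 hratio']
    _ = 2 * ε * Y ^ 2 + 2 * C := by ring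

lemma card_competitors_concat_eq_sum (hG : ∀ g ∈ G, g.length = l) :
    (competitors (concat G Z) C₁ q b v).card =
      ∑ z ∈ Z, {g ∈ G | g ++ z ∈ competitors (concat G Z) C₁ q b v}.card := by
  have hswap : ∀ g ∈ G, ∀ z ∈ Z, (g ++ z ∈ competitors (concat G Z) C₁ q b v ↔
      q ∣ cross v (g ++ z) ∧ |b| * |cross v (g ++ z)| ≤ q * (16 * C₁ ^ 2 * den v ^ 2)) :=
    fun g hg z hz => Finset.mem_filter.trans
      (and_iff_right (mem_concat.2 ⟨g, hg, z, hz, rfl⟩))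
  rw [competitors, card_filter_concat hG]
  simp only [Finset.card_filter]
  rw [Finset.sum_comm]
  refine Finset.sum_congr rfl fun z hz => Finset.sum_congr rfl fun g hg => ?_
  exact if_congr (hswap g hg z hz).symm rfl rfl

lemma IsComparable.card_competitors_concat_le_right (h : IsComparable l C Y G)
    (hZ : ∀ z ∈ Z, IsPositive z) {C₂ : ℕ}
    (hC₂ : ∀ w ∈ concat G Z, den v ≤ C₂ * den w) (hq : 1 ≤ q) {Q : ℝ} (hQ : 0 < Q)
    (hQb : Q * q ≤ |b|) (hv : IsPositive v) :
    ((competitors (concat G Z) C₁ q b v).card : ℝ) ≤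
      Z.card * ((2 * (32 * C₁ ^ 2 * C₂ * Y ^ 2 / Q + 2 * C) + 1) * (C + 1)) := by
  rw [card_competitors_concat_eq_sum h.length_eq, Nat.cast_sum, ← nsmul_eq_mul]
  refine Finset.sum_le_card_nsmul _ _ _ fun z hz => ?_
  set S := {g ∈ G | g ++ z ∈ competitors (concat G Z) C₁ q b v}
  have hS := h.mono (Finset.filter_subset _ _ : S ⊆ G)
  have hvalue : ∀ g ∈ S, |value g - value v| ≤ 16 * C₁ ^ 2 * C₂ / Q + 1 / (den g : ℝ) ^ 2 := by
    intro g hg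
    have hmem := (Finset.mem_filter.1 hg).2
    have hgz := (hS.isPositive g hg).append (hZ z hz)
    have hnear := hv.abs_value_sub_le_of_mem_competitors hgz hmem hq hQ hQb
      (hC₂ _ (Finset.mem_filter.1 hmem).1)
    have hext := (hS.isPositive g hg).abs_value_append_sub_le (hZ z hz)
    rw [abs_sub_comm] at hext
    linarith [abs_sub_le (value g) (value (g ++ z)) (value v)]
  rcases S.eq_empty_or_nonempty with he | ⟨g₀, hg₀⟩
  · rw [he, Finset.card_empty, Nat.cast_zero]
    positivity
  · refine (hS.card_le_of_dvd_cross hg₀ le_rfl (T := 32 * C₁ ^ 2 * C₂ * Y ^ 2 / Q + 2 * C)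
      (by positivity) (fun g _ => one_dvd _) fun g hg => ?_).trans_eq ?_
    · refine (hS.abs_cross_le_of_abs_value_sub_le hg₀ hg (by positivity) (hvalue g₀ hg₀)
        (hvalue g hg)).trans_eq ?_
      ring
    · rw [Int.cast_one, div_one]

end Competitors

/-! ### The symmetric ensemble -/

namespace IsComparable

variable {l l' C C' : ℕ} {Y Y' : ℝ} {U V : Finset (List ℕ)}

lemma concat (hU : IsComparable l C Y U) (hV : IsComparable l' C' Y' V) :
    IsComparable (l + l') (2 * (C * C')) (2 * (Y * Y')) (concat U V) where
  length_eq w hw := by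
    obtain ⟨u, hu, v, hv, rfl⟩ := mem_concat.1 hw
    rw [List.length_append, hU.length_eq u hu, hV.length_eq v hv]
  isPositive w hw := by
    obtain ⟨u, hu, v, hv, rfl⟩ := mem_concat.1 hw
    exact (hU.isPositive u hu).append (hV.isPositive v hv)
  den_le_mul w hw w' hw' := by
    obtain ⟨u, hu, v, hv, rfl⟩ := mem_concat.1 hw
    obtain ⟨u', hu', v', hv', rfl⟩ := mem_concat.1 hw'
    calc den (u ++ v) ≤ 2 * (den u * den v) :=
          (hU.isPositive u hu).den_append_le (hV.isPositive v hv)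
      _ ≤ 2 * ((C * den u') * (C' * den v')) := by
          gcongr ?_ * ?_
          exact mul_le_mul (hU.den_le_mul u hu u' hu') (hV.den_le_mul v hv v' hv') (den_nonneg v)
            (mul_nonneg (Int.natCast_nonneg C) (den_nonneg u'))
      _ = (2 * (C * C') : ℕ) * (den u' * den v') := by
          push_cast
          ring
      _ ≤ (2 * (C * C') : ℕ) * den (u' ++ v') := by
          gcongr
          exact den_mul_den_le u' v'
  den_le w hw := by
    obtain ⟨u, hu, v, hv, rfl⟩ := mem_concat.1 hw
    have hu₀ := (hU.isPositive u hu).den_pos.le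
    calc (den (u ++ v) : ℝ) ≤ 2 * (den u * den v) := by
          exact_mod_cast (hU.isPositive u hu).den_append_le (hV.isPositive v hv)
      _ ≤ 2 * (Y * Y') := by
          gcongr ?_ * ?_
          exact mul_le_mul (hU.den_le u hu) (hV.den_le v hv) (hV.isPositive v hv).den_pos.le
            (hu₀.trans (hU.den_le u hu))

lemma image_reverse (hV : IsComparable l C Y V) : IsComparable l C Y (V.image List.reverse) where
  length_eq := Finset.forall_mem_image.2 fun v hv => by
    rw [List.length_reverse, hV.length_eq v hv]
  isPositive := Finset.forall_mem_image.2 fun v hv => (hV.isPositive v hv).reverse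
  den_le_mul := Finset.forall_mem_image.2 fun v hv => Finset.forall_mem_image.2 fun v' hv' => by
    rw [den_reverse, den_reverse]
    exact hV.den_le_mul v hv v' hv'
  den_le := Finset.forall_mem_image.2 fun v hv => by
    rw [den_reverse]
    exact hV.den_le v hv

end IsComparable

lemma IsPositive.isComparable_singleton {v : List ℕ} (hv : IsPositive v) :
    IsComparable v.length 1 (den v) {v} where
  length_eq w hw := by rw [Finset.mem_singleton.1 hw]
  isPositive w hw := Finset.mem_singleton.1 hw ▸ hv
  den_le_mul w hw w' hw' := by
    rw [Finset.mem_singleton.1 hw, Finset.mem_singleton.1 hw', Nat.cast_one, one_mul]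
  den_le w hw := by rw [Finset.mem_singleton.1 hw]

/-- An upper bound for the ratio of the continuants of two words of the same chain. -/
def spread : ℕ := ⌈exp 10⌉₊

lemma one_le_spread : 1 ≤ spread :=
  Nat.one_le_ceil_iff.2 (exp_pos 10)

namespace IsBlockChain

variable {A : Finset ℕ} {K k₀ : ℕ} {B : ℕ → Finset (List ℕ)} {W : ℕ → ℝ}
  (h : IsBlockChain A K k₀ B W)
include h

lemma isComparable (i n : ℕ) :
    IsComparable (∑ j ∈ Finset.range n, (k₀ + (i + j))) spread (chainScale W i n)
      (chainWords B i n) where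
  length_eq _ hw := h.length_eq hw
  isPositive _ hw := h.isPositive hw
  den_le_mul w hw w' hw' := by
    have := (h.isPositive hw').den_pos.le
    have hle : (den w : ℝ) ≤ spread * den w' :=
      (h.den_le_exp_mul hw hw').trans (by gcongr; exact Nat.le_ceil _)
    exact_mod_cast hle
  den_le _ hw := h.den_le_chainScale hw

lemma chainWords_nonempty (i n : ℕ) : (chainWords B i n).Nonempty := by
  rw [← Finset.card_pos]
  exact_mod_cast (rpow_pos_of_pos (h.chainScale_pos i n) 1.9).trans_le (h.rpow_le_card i n)

end IsBlockChain

/-- The words `u ++ F ++ v`, where `u` and the reversal of `v` belong to the chain of length `J`. -/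
def ensemble (B : ℕ → Finset (List ℕ)) (J : ℕ) (F : List ℕ) : Finset (List ℕ) :=
  concat (chainWords B 0 J) (concat {F} ((chainWords B 0 J).image List.reverse))

/-- The filler `F` and the length `J` are such that the continuants of the ensemble lie between
`N / C` and `N`, and the ensemble consists of two halves of scale about `√N`. -/
structure IsEnsemble (A : Finset ℕ) (B : ℕ → Finset (List ℕ)) (W : ℕ → ℝ) (C N J : ℕ)
    (F : List ℕ) : Prop where
  letter_mem : ∀ x ∈ F, x ∈ A
  one_le : 1 ≤ C
  le_mul_den : ∀ w ∈ ensemble B J F, (N : ℤ) ≤ C * den w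
  den_le : ∀ w ∈ ensemble B J F, den w ≤ N
  rpow_le_scale : (N : ℝ) ^ (0.499 : ℝ) ≤ chainScale W 0 J
  scale_le_rpow : chainScale W 0 J ≤ (N : ℝ) ^ (0.5 : ℝ)
  den_filler_le : (den F : ℝ) ≤ (N : ℝ) ^ (0.004 : ℝ)

lemma eventually_mul_rpow_le_rpow (C : ℝ) {a b : ℝ} (hab : a < b) :
    ∀ᶠ N : ℕ in atTop, C * (N : ℝ) ^ a ≤ (N : ℝ) ^ b := by
  have hlim : Tendsto (fun N : ℕ => (N : ℝ) ^ (b - a)) atTop atTop :=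
    (tendsto_rpow_atTop (sub_pos.2 hab)).comp tendsto_natCast_atTop_atTop
  filter_upwards [hlim.eventually_ge_atTop C, eventually_gt_atTop 0] with N hC hN
  calc C * (N : ℝ) ^ a ≤ (N : ℝ) ^ (b - a) * (N : ℝ) ^ a := by gcongr
    _ = (N : ℝ) ^ b := by rw [← rpow_add (by exact_mod_cast hN), sub_add_cancel]

lemma exists_replicate_den_le {a : ℕ} (ha : 0 < a) {D N : ℤ} (hD : 1 ≤ D) (hDN : D ≤ N) :
    ∃ m, D * den (List.replicate m a) ≤ N ∧ N ≤ D * ((a + 1) * den (List.replicate m a)) := by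
  have hpos (m : ℕ) : IsPositive (List.replicate m a) := fun x hx =>
    List.eq_of_mem_replicate hx ▸ ha
  by_contra! hgap
  have hle (m : ℕ) : D * den (List.replicate m a) ≤ N := by
    induction m with
    | zero => rwa [List.replicate_zero, den_nil, mul_one]
    | succ m ih =>
      refine le_trans (mul_le_mul_of_nonneg_left ?_ (by linarith)) (hgap m ih).le
      rw [List.replicate_succ, den_cons]
      linarith [(hpos m).num_le_den]
  have hpow := (hpos (2 * N.toNat)).two_pow_le_den
  rw [List.length_replicate, Nat.mul_div_cancel_left _ two_pos] at hpow
  have hlt : (N.toNat : ℤ) < 2 ^ N.toNat := by exact_mod_cast Nat.lt_two_pow_self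
  nlinarith [hle (2 * N.toNat), Int.self_le_toNat N]

namespace IsBlockChain

variable {A : Finset ℕ} {K k₀ : ℕ} {B : ℕ → Finset (List ℕ)} {W : ℕ → ℝ}
  (h : IsBlockChain A K k₀ B W) {J N : ℕ} {F w₀ : List ℕ}
include h

lemma sq_mul_den_le_of_mem_ensemble (hF : IsPositive F) (hw₀ : w₀ ∈ chainWords B 0 J)
    {w : List ℕ} (hw : w ∈ ensemble B J F) :
    den w₀ ^ 2 * den F ≤ spread ^ 2 * den w ∧
      den w ≤ 4 * spread ^ 2 * den w₀ ^ 2 * den F := by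
  obtain ⟨u, hu, v, hv, rfl⟩ := mem_concat.1 hw
  obtain ⟨f, hf, r, hr, rfl⟩ := mem_concat.1 hv
  obtain rfl := Finset.mem_singleton.1 hf
  have hchain := h.isComparable 0 J
  have hr' := (hchain.image_reverse.isPositive r hr)
  have hu' := hchain.isPositive u hu
  obtain ⟨t, ht, rfl⟩ := Finset.mem_image.1 hr
  have hlower := den_mul_den_le u (f ++ t.reverse)
  have hupper := hu'.den_append_le (hF.append hr')
  have hlower' := den_mul_den_le f t.reverse
  have hupper' := hF.den_append_le hr'
  rw [den_reverse] at hlower' hupper'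
  have hf₀ := den_nonneg f
  have ht₀ := den_nonneg t
  have hu₀ := den_nonneg u
  have hw₀' := den_nonneg w₀
  constructor
  · calc den w₀ ^ 2 * den f = den w₀ * (den f * den w₀) := by ring
      _ ≤ spread * den u * (den f * (spread * den t)) := by
          gcongr
          exacts [hchain.den_le_mul w₀ hw₀ u hu, hchain.den_le_mul w₀ hw₀ t ht]
      _ = spread ^ 2 * (den u * (den f * den t)) := by ring
      _ ≤ _ := by
          gcongr
          exact (mul_le_mul_of_nonneg_left hlower' hu₀).trans hlower
  · calc _ ≤ 2 * (den u * (2 * (den f * den t))) := hupper.trans (by gcongr)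
      _ ≤ 2 * (spread * den w₀ * (2 * (den f * (spread * den w₀)))) := by
          gcongr
          exacts [hchain.den_le_mul u hu w₀ hw₀, hchain.den_le_mul t ht w₀ hw₀]
      _ = _ := by ring

lemma eventually_exists_scale (C : ℝ) : ∀ᶠ N : ℕ in atTop, ∃ J,
    (N : ℝ) ^ (0.499 : ℝ) ≤ chainScale W 0 J ∧ C * chainScale W 0 J ≤ (N : ℝ) ^ (0.5 : ℝ) := by
  obtain ⟨C', -, hC'⟩ := h.exists_least_chainScale
  filter_upwards [eventually_mul_rpow_le_rpow (|C| * C') (show (0.4995 : ℝ) < 0.5 by norm_num),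
    eventually_ge_atTop 1] with N hN hN₁
  have hN₁ : (1 : ℝ) ≤ N := by exact_mod_cast hN₁
  obtain ⟨J, hle, hge, -⟩ := hC' ((N : ℝ) ^ (0.499 : ℝ)) (one_le_rpow hN₁ (by norm_num))
  refine ⟨J, hle, le_trans ?_ hN⟩
  have hC'₀ : 0 ≤ C' := by
    by_contra! hneg
    have := mul_nonpos_of_nonpos_of_nonneg hneg.le
      (rpow_nonneg (rpow_nonneg (zero_le_one.trans hN₁) 0.499) 1.001)
    linarith [h.chainScale_pos 0 J]
  calc C * chainScale W 0 J ≤ |C| * (C' * ((N : ℝ) ^ (0.499 : ℝ)) ^ (1.001 : ℝ)) :=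
        mul_le_mul (le_abs_self C) hge (h.chainScale_pos 0 J).le (abs_nonneg C)
    _ = |C| * C' * (N : ℝ) ^ (0.499 * 1.001 : ℝ) := by
        rw [← rpow_mul (zero_le_one.trans hN₁), mul_assoc]
    _ ≤ _ := by
        gcongr
        norm_num

lemma den_le_rpow_of_sq_mul_den_le (hN : 1 ≤ N) (hJ : (N : ℝ) ^ (0.499 : ℝ) ≤ chainScale W 0 J)
    (hw₀ : w₀ ∈ chainWords B 0 J) (hF : (den w₀ : ℝ) ^ 2 * den F ≤ N) :
    (den F : ℝ) ≤ (N : ℝ) ^ (0.004 : ℝ) := by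
  have hN₁ : (1 : ℝ) ≤ N := by exact_mod_cast hN
  have hN₀ : (0 : ℝ) < N := one_pos.trans_le hN₁
  have hF₀ : (0 : ℝ) ≤ den F := by exact_mod_cast den_nonneg F
  have hden : (N : ℝ) ^ (0.498 : ℝ) ≤ den w₀ :=
    calc (N : ℝ) ^ (0.498 : ℝ) ≤ ((N : ℝ) ^ (0.499 : ℝ)) ^ (0.999 : ℝ) := by
          rw [← rpow_mul hN₀.le]
          exact rpow_le_rpow_of_exponent_le hN₁ (by norm_num)
      _ ≤ chainScale W 0 J ^ (0.999 : ℝ) := by gcongr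
      _ ≤ den w₀ := h.rpow_le_den hw₀
  refine le_of_mul_le_mul_left ?_ (rpow_pos_of_pos hN₀ 0.996)
  calc (N : ℝ) ^ (0.996 : ℝ) * den F = ((N : ℝ) ^ (0.498 : ℝ)) ^ 2 * den F := by
        rw [← rpow_mul_natCast hN₀.le]
        norm_num
    _ ≤ (den w₀ : ℝ) ^ 2 * den F := by gcongr
    _ ≤ N := hF
    _ = (N : ℝ) ^ (0.996 : ℝ) * (N : ℝ) ^ (0.004 : ℝ) := by
        rw [← rpow_add hN₀]
        norm_num

lemma sq_mul_den_le_of_scale_le {D : ℕ} (hw : w ∈ chainWords B 0 J)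
    (hJ : D * chainScale W 0 J ≤ (N : ℝ) ^ (0.5 : ℝ)) : (D * den w) ^ 2 ≤ (N : ℤ) := by
  have hreal : (D * den w : ℝ) ^ 2 ≤ N :=
    calc ((D : ℝ) * den w) ^ 2 ≤ ((N : ℝ) ^ (0.5 : ℝ)) ^ 2 := by
          have := (h.isPositive hw).den_pos.le
          gcongr
          exact (mul_le_mul_of_nonneg_left (h.den_le_chainScale hw) (by positivity)).trans hJ
      _ = (N : ℝ) := by
          rw [← rpow_mul_natCast (Nat.cast_nonneg N)]
          norm_num
  exact_mod_cast hreal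

lemma eventually_exists_isEnsemble (hA : A.Nonempty) :
    ∃ C, ∀ᶠ N : ℕ in atTop, ∃ J F, IsEnsemble A B W C N J F := by
  obtain ⟨a, ha⟩ := hA
  set E := spread
  have hE : 1 ≤ E := one_le_spread
  refine ⟨4 * E ^ 4 * (a + 1), ?_⟩
  filter_upwards [h.eventually_exists_scale (2 * E), eventually_ge_atTop 1] with N ⟨J, hJ, hJ'⟩ hN
  obtain ⟨w₀, hw₀⟩ := h.chainWords_nonempty 0 J
  have hscale := h.one_le_chainScale 0 J
  have hpos := h.isPositive hw₀
  have hE₁ : (1 : ℝ) ≤ E := by exact_mod_cast hE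
  have hD : 1 ≤ 4 * (E : ℤ) ^ 2 * den w₀ ^ 2 := by
    have := hpos.one_le_den
    have : 0 < 4 * (E : ℤ) ^ 2 * den w₀ ^ 2 := by positivity
    exact this
  have hDN : 4 * (E : ℤ) ^ 2 * den w₀ ^ 2 ≤ N :=
    calc 4 * (E : ℤ) ^ 2 * den w₀ ^ 2 = ((2 * E : ℕ) * den w₀) ^ 2 := by push_cast; ring
      _ ≤ (N : ℤ) := h.sq_mul_den_le_of_scale_le hw₀ (by exact_mod_cast hJ')
  obtain ⟨m, hle, hge⟩ := exists_replicate_den_le (h.letter_pos a ha) hD hDN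
  set F := List.replicate m a
  have hmem : ∀ x ∈ F, x ∈ A := fun x hx => List.eq_of_mem_replicate hx ▸ ha
  have hF : IsPositive F := fun x hx => h.letter_pos x (hmem x hx)
  refine ⟨J, F, hmem, Nat.one_le_iff_ne_zero.2 (by positivity), fun w hw => ?_, fun w hw =>
    (h.sq_mul_den_le_of_mem_ensemble hF hw₀ hw).2.trans hle, hJ, le_trans ?_ hJ', ?_⟩
  · calc (N : ℤ) ≤ 4 * E ^ 2 * (a + 1) * (den w₀ ^ 2 * den F) := hge.trans_eq (by ring)
      _ ≤ 4 * E ^ 2 * (a + 1) * (E ^ 2 * den w) := by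
          gcongr ?_ * ?_
          exact (h.sq_mul_den_le_of_mem_ensemble hF hw₀ hw).1
      _ = (4 * E ^ 4 * (a + 1) : ℕ) * den w := by
          push_cast
          ring
  · nlinarith
  · refine h.den_le_rpow_of_sq_mul_den_le hN hJ hw₀ (le_trans ?_ (by exact_mod_cast hle :
      4 * (E : ℝ) ^ 2 * den w₀ ^ 2 * den F ≤ N))
    have := hF.den_pos.le
    gcongr
    have : (1 : ℝ) ≤ E ^ 2 := one_le_pow₀ hE₁
    nlinarith [sq_nonneg (den w₀ : ℝ)]

end IsBlockChain

section Ensemble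

variable {B : ℕ → Finset (List ℕ)} {W : ℕ → ℝ} {J i j : ℕ} {F : List ℕ}

lemma chainWords_eq_concat (hij : i ≤ j) :
    chainWords B 0 j = concat (chainWords B 0 i) (chainWords B i (j - i)) := by
  simpa only [zero_add, Nat.add_sub_cancel' hij] using chainWords_add B 0 i (j - i)

lemma chainScale_eq_mul (hij : i ≤ j) :
    chainScale W 0 j = chainScale W 0 i * chainScale W i (j - i) := by
  simpa only [zero_add, Nat.add_sub_cancel' hij] using chainScale_add W 0 i (j - i)

lemma ensemble_eq_concat_reverse (hi : i ≤ J) :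
    ensemble B J F = concat
      (concat (chainWords B 0 J) (concat {F} ((chainWords B i (J - i)).image List.reverse)))
      ((chainWords B 0 i).image List.reverse) := by
  rw [concat_assoc, concat_assoc, ← image_reverse_concat, ← chainWords_eq_concat hi, ensemble]

lemma ensemble_eq_concat_middle_reverse (hi : i ≤ J) :
    ensemble B J F = concat (chainWords B 0 i) (concat
      (concat (chainWords B i (J - i)) (concat {F} ((chainWords B i (J - i)).image List.reverse)))
      ((chainWords B 0 i).image List.reverse)) := by
  rw [ensemble_eq_concat_reverse hi, chainWords_eq_concat (B := B) hi, concat_assoc, concat_assoc,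
    concat_assoc, concat_assoc, concat_assoc]

lemma ensemble_eq_concat_concat (hij : i ≤ j) (hj : j ≤ J) :
    ensemble B J F = concat (chainWords B 0 i) (concat (chainWords B i (j - i))
      (concat (chainWords B j (J - j)) (concat {F} ((chainWords B 0 J).image List.reverse)))) := by
  rw [← concat_assoc, ← chainWords_eq_concat hij, ← concat_assoc, ← chainWords_eq_concat hj,
    ensemble]

end Ensemble

namespace IsBlockChain

variable {A : Finset ℕ} {K k₀ : ℕ} {B : ℕ → Finset (List ℕ)} {W : ℕ → ℝ}
  (h : IsBlockChain A K k₀ B W) {J : ℕ} {F : List ℕ}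
include h

lemma card_ensemble : (ensemble B J F).card = (chainWords B 0 J).card ^ 2 := by
  rw [ensemble, card_concat (h.isComparable 0 J).length_eq,
    card_concat (a := F.length) fun w hw => by rw [Finset.mem_singleton.1 hw],
    Finset.card_singleton, one_mul, Finset.card_image_of_injective _ List.reverse_injective, sq]

lemma ensemble_nonempty : (ensemble B J F).Nonempty := by
  rw [← Finset.card_pos, h.card_ensemble]
  exact pow_pos (h.chainWords_nonempty 0 J).card_pos 2

lemma sq_mul_sq_le_card_mul_card (i m j n : ℕ) :
    chainScale W i m ^ 2 * chainScale W j n ^ 2 ≤ (chainWords B i m).card *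
      (chainWords B j n).card * (chainScale W i m * chainScale W j n) ^ (0.1 : ℝ) := by
  have hX := h.chainScale_pos i m
  have hY := h.chainScale_pos j n
  have hsq {Z : ℝ} (hZ : 0 < Z) : Z ^ 2 = Z ^ (1.9 : ℝ) * Z ^ (0.1 : ℝ) := by
    rw [← rpow_add hZ, ← rpow_natCast]
    norm_num
  calc _ = chainScale W i m ^ (1.9 : ℝ) * chainScale W j n ^ (1.9 : ℝ) *
        (chainScale W i m * chainScale W j n) ^ (0.1 : ℝ) := by
        rw [hsq hX, hsq hY, mul_rpow hX.le hY.le]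
        ring
    _ ≤ _ := by
        gcongr
        exacts [h.rpow_le_card i m, h.rpow_le_card j n]

end IsBlockChain

namespace IsEnsemble

variable {A : Finset ℕ} {K k₀ : ℕ} {B : ℕ → Finset (List ℕ)} {W : ℕ → ℝ} {C N J : ℕ}
  {F : List ℕ} (hE : IsEnsemble A B W C N J F) (h : IsBlockChain A K k₀ B W)
  {U V : Finset (List ℕ)} (hΩ : ensemble B J F = concat U V)
include hE h

lemma isPositive_filler : IsPositive F :=
  fun x hx => h.letter_pos x (hE.letter_mem x hx)

include hΩ

lemma isFactorPair {l c : ℕ} {X : ℝ} (hU : IsComparable l c X U)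
    (hV : ∀ v ∈ V, IsPositive v) : IsFactorPair N C U V where
  length_eq := ⟨l, hU.length_eq⟩
  isPositive_left := hU.isPositive
  isPositive_right := hV
  nonempty_left := (Finset.image₂_nonempty_iff.1 (hΩ ▸ h.ensemble_nonempty)).1
  nonempty_right := (Finset.image₂_nonempty_iff.1 (hΩ ▸ h.ensemble_nonempty)).2
  le_mul_den u hu v hv := hE.le_mul_den _ (hΩ ▸ mem_concat.2 ⟨u, hu, v, hv, rfl⟩)
  den_le u hu v hv := hE.den_le _ (hΩ ▸ mem_concat.2 ⟨u, hu, v, hv, rfl⟩)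

lemma sum_normSq_wordSum_le {l c : ℕ} {X : ℝ} (hU : IsComparable l c X U)
    (hV : ∀ v ∈ V, IsPositive v) {Q : ℕ} {q a b : ZMod (N + 1) → ℤ}
    (hap : ∀ k : ZMod (N + 1), IsApprox (N + 1) Q k.val (q k) (a k) (b k))
    {Θ : Finset (ZMod (N + 1))}
    (hsep : ∀ {M L H}, IsSieveScale N C U V M L H → IsSeparating (N + 1) Q L H Θ q b)
    {T D : ℝ} (hT₀ : 0 ≤ T)
    (hT : ∀ k ∈ Θ, ∀ v ∈ V, ((competitors V C (q k) (b k) v).card : ℝ) ≤ T)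
    (hD : X ^ 2 * T ≤ D * (U.card * V.card)) :
    ∑ k ∈ Θ, ‖wordSum (N + 1) (ensemble B J F) k‖ ^ 2 ≤
      576 * (8 * C + 1) * D * ((ensemble B J F).card : ℝ) ^ 2 := by
  rw [hΩ, card_concat hU.length_eq]
  push_cast
  calc _ ≤ 576 * X ^ 2 * U.card * V.card * ((8 * C + 1) * T) :=
        (hE.isFactorPair h hΩ hU hV).sum_normSq_wordSum_le hap hsep hU.den_le hT₀ hT
    _ = 576 * (8 * C + 1) * (U.card * V.card) * (X ^ 2 * T) := by ring
    _ ≤ 576 * (8 * C + 1) * (U.card * V.card) * (D * (U.card * V.card)) := by gcongr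
    _ = _ := by ring

lemma den_le_two_mul {l c : ℕ} {X : ℝ} (hU : IsComparable l c X U)
    (hV : ∀ v ∈ V, IsPositive v) :
    ∀ v ∈ V, ∀ v' ∈ V, den v ≤ (2 * C : ℕ) * den v' := by
  have hpair := hE.isFactorPair h hΩ hU hV
  obtain ⟨u, hu⟩ := hpair.nonempty_left
  intro v hv v' hv'
  refine le_of_mul_le_mul_left ?_ (show 0 < den u from (hU.isPositive u hu).one_le_den)
  calc den u * den v ≤ N := (den_mul_den_le u v).trans (hpair.den_le u hu v hv)
    _ ≤ C * den (u ++ v') := hpair.le_mul_den u hu v' hv'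
    _ ≤ C * (2 * (den u * den v')) := by
        gcongr
        exact (hU.isPositive u hu).den_append_le (hV v' hv')
    _ = den u * ((2 * C : ℕ) * den v') := by
        push_cast
        ring

end IsEnsemble

/-! ### Frequencies with a large denominator or remainder -/

namespace IsEnsemble

variable {A : Finset ℕ} {K k₀ : ℕ} {B : ℕ → Finset (List ℕ)} {W : ℕ → ℝ} {C N J i : ℕ}
  {F : List ℕ} (hE : IsEnsemble A B W C N J F) (h : IsBlockChain A K k₀ B W)
include hE h

/-- The exponents fit because the loss `(X ^ 4 / card) * den F ^ 2 ≤ N ^ (0.1 + 0.008)` is below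
the gain `N ^ 0.12`. -/
lemma sq_den_filler_mul_pow_four_le (hN : 1 ≤ N) :
    (den F : ℝ) ^ 2 * chainScale W 0 J ^ 4 ≤
      (N : ℝ) ^ (0.12 : ℝ) * (chainWords B 0 J).card ^ 2 := by
  have hN₁ : (1 : ℝ) ≤ N := by exact_mod_cast hN
  have hN₀ : (0 : ℝ) < N := one_pos.trans_le hN₁
  have hX₀ := h.chainScale_pos 0 J
  have hfiller : (den F : ℝ) ^ 2 ≤ (N : ℝ) ^ (0.008 : ℝ) :=
    calc (den F : ℝ) ^ 2 ≤ ((N : ℝ) ^ (0.004 : ℝ)) ^ 2 :=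
          pow_le_pow_left₀ (hE.isPositive_filler h).den_pos.le hE.den_filler_le 2
      _ = (N : ℝ) ^ (0.008 : ℝ) := by
          rw [← rpow_mul_natCast hN₀.le]
          norm_num
  have hscale : (chainScale W 0 J * chainScale W 0 J) ^ (0.1 : ℝ) ≤ (N : ℝ) ^ (0.1 : ℝ) := by
    gcongr
    calc chainScale W 0 J * chainScale W 0 J ≤ (N : ℝ) ^ (0.5 : ℝ) * (N : ℝ) ^ (0.5 : ℝ) := by
          gcongr <;> exact hE.scale_le_rpow
      _ = N := by
          rw [← rpow_add hN₀]
          norm_num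
  calc (den F : ℝ) ^ 2 * chainScale W 0 J ^ 4
      = (den F : ℝ) ^ 2 * (chainScale W 0 J ^ 2 * chainScale W 0 J ^ 2) := by ring
    _ ≤ (N : ℝ) ^ (0.008 : ℝ) * ((chainWords B 0 J).card * (chainWords B 0 J).card *
          (N : ℝ) ^ (0.1 : ℝ)) :=
        mul_le_mul hfiller ((h.sq_mul_sq_le_card_mul_card 0 J 0 J).trans (by gcongr))
          (by positivity) (by positivity)
    _ = (N : ℝ) ^ (0.108 : ℝ) * (chainWords B 0 J).card ^ 2 := by
        rw [show (0.108 : ℝ) = 0.008 + 0.1 by norm_num, rpow_add hN₀]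
        ring
    _ ≤ _ := by
        gcongr ?_ * _
        exact rpow_le_rpow_of_exponent_le hN₁ (by norm_num)

lemma sq_mul_competitors_le (hN : 1 ≤ N) (hi : i ≤ J)
    (hle : (N : ℝ) ^ (0.12 : ℝ) ≤ chainScale W 0 i) :
    (2 * (chainScale W 0 J * (2 * (den F * chainScale W i (J - i))))) ^ 2 *
        ((32 * C ^ 2 * chainScale W 0 i ^ 2 / (N : ℝ) ^ (0.12 : ℝ) + 1) * (spread + 1)) ≤
      1024 * C ^ 2 * (spread + 1) * (chainWords B 0 J).card ^ 2 := by
  set P := (N : ℝ) ^ (0.12 : ℝ)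
  set X := chainScale W 0 J
  set Y := chainScale W 0 i
  set Z := chainScale W i (J - i)
  have hP : 1 ≤ P := one_le_rpow (by exact_mod_cast hN) (by norm_num)
  have hone : 1 ≤ 32 * (C : ℝ) ^ 2 * Y ^ 2 / P := by
    have hC : (1 : ℝ) ≤ C ^ 2 := one_le_pow₀ (by exact_mod_cast hE.one_le)
    have hPY : P ≤ Y ^ 2 := by nlinarith
    rw [one_le_div (one_pos.trans_le hP)]
    nlinarith
  calc (2 * (X * (2 * (den F * Z)))) ^ 2 * ((32 * C ^ 2 * Y ^ 2 / P + 1) * (spread + 1))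
      ≤ (2 * (X * (2 * (den F * Z)))) ^ 2 *
          ((32 * C ^ 2 * Y ^ 2 / P + 32 * C ^ 2 * Y ^ 2 / P) * (spread + 1)) := by gcongr
    _ = 1024 * C ^ 2 * (spread + 1) * ((den F ^ 2 * X ^ 4) / P) := by
        rw [show X = Y * Z from chainScale_eq_mul hi]
        ring
    _ ≤ _ := by
        gcongr
        rw [div_le_iff₀' (one_pos.trans_le hP)]
        exact hE.sq_den_filler_mul_pow_four_le h hN

lemma sum_normSq_wordSum_le_of_large (hN : 1 ≤ N) (hi : i ≤ J)
    (hle : (N : ℝ) ^ (0.12 : ℝ) ≤ chainScale W 0 i)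
    (hge : 100 * (2 * C * chainScale W 0 i) ^ 4 ≤ N) {q a b : ZMod (N + 1) → ℤ}
    (hap : ∀ k : ZMod (N + 1), IsApprox (N + 1) (Nat.sqrt (N + 1)) k.val (q k) (a k) (b k))
    {Θ : Finset (ZMod (N + 1))}
    (hΘ : ∀ k ∈ Θ, (N : ℝ) ^ (0.12 : ℝ) ≤ q k ∨ (N : ℝ) ^ (0.12 : ℝ) ≤ |b k|) :
    ∑ k ∈ Θ, ‖wordSum (N + 1) (ensemble B J F) k‖ ^ 2 ≤
      576 * (8 * C + 1) * (1024 * C ^ 2 * (spread + 1)) * ((ensemble B J F).card : ℝ) ^ 2 := by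
  have hP : 1 ≤ (N : ℝ) ^ (0.12 : ℝ) := one_le_rpow (by exact_mod_cast hN) (by norm_num)
  have hU := (h.isComparable 0 J).concat ((hE.isPositive_filler h).isComparable_singleton.concat
    (h.isComparable i (J - i)).image_reverse)
  have hV := (h.isComparable 0 i).image_reverse
  have hΩ := ensemble_eq_concat_reverse (B := B) (F := F) hi
  refine hE.sum_normSq_wordSum_le h hΩ hU hV.isPositive hap (fun hs => hs.isSeparating_of_large
    ((h.chainWords_nonempty 0 i).image _) fun v hv => ?_)
    (T := (32 * C ^ 2 * chainScale W 0 i ^ 2 / (N : ℝ) ^ (0.12 : ℝ) + 1) * (spread + 1))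
    (by positivity)
    (fun k hk v hv => hV.card_competitors_le hE.one_le (hap k).one_le (by linarith) (hΘ k hk) hv) ?_
  · have hvY : 100 * (2 * C * (den v : ℝ)) ^ 4 ≤ N := by
      refine le_trans ?_ hge
      have := (hV.isPositive v hv).den_pos
      gcongr
      exact hV.den_le v hv
    exact_mod_cast hvY
  · have hcard := congrArg (Nat.cast (R := ℝ)) (h.card_ensemble (J := J) (F := F))
    rw [hΩ, card_concat hU.length_eq] at hcard
    push_cast at hcard
    rw [hcard]
    exact hE.sq_mul_competitors_le h hN hi hle

end IsEnsemble

lemma IsBlockChain.eventually_sum_normSq_wordSum_le_of_large {A : Finset ℕ} {K k₀ : ℕ}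
    {B : ℕ → Finset (List ℕ)} {W : ℕ → ℝ} (h : IsBlockChain A K k₀ B W) (C : ℕ) :
    ∃ D : ℝ, 0 ≤ D ∧ ∀ᶠ N : ℕ in atTop, ∀ J F, IsEnsemble A B W C N J F →
      ∀ q a b : ZMod (N + 1) → ℤ,
      (∀ k : ZMod (N + 1), IsApprox (N + 1) (Nat.sqrt (N + 1)) k.val (q k) (a k) (b k)) →
      ∀ Θ : Finset (ZMod (N + 1)),
      (∀ k ∈ Θ, (N : ℝ) ^ (0.12 : ℝ) ≤ q k ∨ (N : ℝ) ^ (0.12 : ℝ) ≤ |b k|) →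
      ∑ k ∈ Θ, ‖wordSum (N + 1) (ensemble B J F) k‖ ^ 2 ≤
        D * ((ensemble B J F).card : ℝ) ^ 2 := by
  obtain ⟨C', hC', hscale⟩ := h.exists_least_chainScale
  refine ⟨576 * (8 * C + 1) * (1024 * C ^ 2 * (spread + 1)), by positivity, ?_⟩
  filter_upwards [eventually_ge_atTop 1, eventually_mul_rpow_le_rpow (100 * (2 * C * C') ^ 4)
    (show (0.5 : ℝ) < 1 by norm_num)] with N hN hlarge J F hE q a b hap Θ hΘ
  have hN₁ : (1 : ℝ) ≤ N := by exact_mod_cast hN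
  have hN₀ : (0 : ℝ) < N := one_pos.trans_le hN₁
  obtain ⟨i, hle, hge, hleast⟩ := hscale ((N : ℝ) ^ (0.12 : ℝ)) (one_le_rpow hN₁ (by norm_num))
  have hi : i ≤ J := hleast J
    ((rpow_le_rpow_of_exponent_le hN₁ (by norm_num)).trans hE.rpow_le_scale)
  refine hE.sum_normSq_wordSum_le_of_large h hN hi hle ?_ hap hΘ
  have := h.chainScale_pos 0 i
  calc 100 * (2 * C * chainScale W 0 i) ^ 4
      ≤ 100 * (2 * C * (C' * (N : ℝ) ^ (0.125 : ℝ))) ^ 4 := by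
        gcongr
        refine hge.trans ?_
        rw [← rpow_mul hN₀.le]
        gcongr
        norm_num
    _ = 100 * (2 * C * C') ^ 4 * (N : ℝ) ^ (0.5 : ℝ) := by
        rw [show (0.5 : ℝ) = 0.125 * (4 : ℕ) by norm_num, rpow_mul_natCast hN₀.le]
        ring
    _ ≤ N := hlarge.trans_eq (rpow_one _)

/-! ### Frequencies with denominator and remainder of order `P` -/

/-- Cuts `j₀ ≤ j₁` of the chain of length `J`. The prefix up to `j₀` has scale about `P ^ 2.1`, long
enough for the large sieve to separate frequencies of order `P`; the middle part from `j₀` to `j₁`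
has scale about `P`, long enough to resolve them. -/
structure IsCut (W : ℕ → ℝ) (J : ℕ) (C P : ℝ) (j₀ j₁ : ℕ) : Prop where
  one_le : 1 ≤ C
  le : j₀ ≤ j₁
  le_length : j₁ ≤ J
  rpow_le : 256 * P ^ (2.1 : ℝ) ≤ chainScale W 0 j₀
  le_rpow : chainScale W 0 j₀ ≤ C * P ^ (2.2 : ℝ)
  mul_le : P * chainScale W 0 j₀ ≤ chainScale W 0 j₁
  le_rpow_right : chainScale W 0 j₁ ≤ C * P ^ (3.3 : ℝ)

lemma rpow_le_mul_rpow {C P X e t d : ℝ} (hC : 1 ≤ C) (hP : 1 ≤ P) (hX₀ : 0 ≤ X)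
    (hX : X ≤ C * P ^ e) (ht₀ : 0 ≤ t) (ht₁ : t ≤ 1) (hd : e * t ≤ d) : X ^ t ≤ C * P ^ d := by
  have hP₀ : 0 ≤ P := zero_le_one.trans hP
  calc X ^ t ≤ (C * P ^ e) ^ t := by gcongr
    _ = C ^ t * P ^ (e * t) := by
        rw [mul_rpow (zero_le_one.trans hC) (by positivity), ← rpow_mul hP₀]
    _ ≤ C ^ (1 : ℝ) * P ^ d := by gcongr
    _ = C * P ^ d := by rw [rpow_one]

namespace IsBlockChain

variable {A : Finset ℕ} {K k₀ : ℕ} {B : ℕ → Finset (List ℕ)} {W : ℕ → ℝ}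
  (h : IsBlockChain A K k₀ B W)
include h

lemma exists_isCut : ∃ C : ℝ, 1 ≤ C ∧ ∀ (P : ℝ) (J : ℕ), 1 ≤ P →
    C * P ^ (3.2 : ℝ) ≤ chainScale W 0 J → ∃ j₀ j₁, IsCut W J C P j₀ j₁ := by
  obtain ⟨C, hC, hscale⟩ := h.exists_least_chainScale
  set C₀ := C * 256 ^ (1.001 : ℝ)
  have hC₀ : 1 ≤ C₀ := one_le_mul_of_one_le_of_one_le hC (one_le_rpow (by norm_num) (by norm_num))
  set C₁ := C * C₀ ^ (1.001 : ℝ)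
  have hC₀₁ : C₀ ≤ C₁ :=
    calc C₀ ≤ C₀ ^ (1.001 : ℝ) := self_le_rpow_of_one_le hC₀ (by norm_num)
      _ ≤ C₁ := le_mul_of_one_le_left (by positivity) hC
  refine ⟨C₁, hC₀.trans hC₀₁, fun P J hP hJ => ?_⟩
  have hP₀ : 0 < P := one_pos.trans_le hP
  obtain ⟨j₀, hle₀, hge₀, hleast₀⟩ := hscale (256 * P ^ (2.1 : ℝ))
    (one_le_mul_of_one_le_of_one_le (by norm_num) (one_le_rpow hP (by norm_num)))
  obtain ⟨j₁, hle₁, hge₁, hleast₁⟩ := hscale (P * chainScale W 0 j₀)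
    (one_le_mul_of_one_le_of_one_le hP (h.one_le_chainScale 0 j₀))
  have hupper₀ : chainScale W 0 j₀ ≤ C₀ * P ^ (2.2 : ℝ) := by
    refine hge₀.trans ?_
    rw [mul_rpow (by norm_num) (by positivity), ← rpow_mul hP₀.le, ← mul_assoc]
    gcongr
    norm_num
  have hupper₁ : P * chainScale W 0 j₀ ≤ C₀ * P ^ (3.2 : ℝ) :=
    calc P * chainScale W 0 j₀ ≤ P * (C₀ * P ^ (2.2 : ℝ)) := by gcongr
      _ = C₀ * P ^ (3.2 : ℝ) := by
          rw [show (3.2 : ℝ) = 1 + 2.2 by norm_num, rpow_add hP₀, rpow_one]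
          ring
  refine ⟨j₀, j₁, hC₀.trans hC₀₁, hleast₀ j₁ ?_, hleast₁ J (hupper₁.trans (le_trans ?_ hJ)), hle₀,
    hupper₀.trans (by gcongr), hle₁, ?_⟩
  · exact hle₀.trans ((le_mul_of_one_le_left (h.chainScale_pos 0 j₀).le hP).trans hle₁)
  · gcongr
  · have := h.chainScale_pos 0 j₀
    calc chainScale W 0 j₁ ≤ C * (C₀ * P ^ (3.2 : ℝ)) ^ (1.001 : ℝ) := hge₁.trans (by gcongr)
      _ = C₁ * P ^ (3.2 * 1.001 : ℝ) := by
          rw [mul_rpow (by positivity) (by positivity), ← rpow_mul hP₀.le, ← mul_assoc]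
      _ ≤ C₁ * P ^ (3.3 : ℝ) := by
          gcongr
          norm_num

lemma eventually_exists_isCut : ∃ C : ℝ, ∀ᶠ N : ℕ in atTop, ∀ (P : ℝ) (J : ℕ), 1 ≤ P →
    P ≤ (N : ℝ) ^ (0.12 : ℝ) → (N : ℝ) ^ (0.499 : ℝ) ≤ chainScale W 0 J →
    ∃ j₀ j₁, IsCut W J C P j₀ j₁ := by
  obtain ⟨C, hC, hcut⟩ := h.exists_isCut
  refine ⟨C, ?_⟩
  filter_upwards [eventually_mul_rpow_le_rpow C (show (0.12 * 3.2 : ℝ) < 0.499 by norm_num)]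
    with N hN P J hP hPN hJ
  refine hcut P J hP (le_trans ?_ (hN.trans hJ))
  rw [rpow_mul (Nat.cast_nonneg N)]
  gcongr

end IsBlockChain

namespace IsCut

variable {A : Finset ℕ} {K k₀ : ℕ} {B : ℕ → Finset (List ℕ)} {W : ℕ → ℝ} {J : ℕ} {C P : ℝ}
  {j₀ j₁ : ℕ} (hc : IsCut W J C P j₀ j₁) (h : IsBlockChain A K k₀ B W) (hP : 1 ≤ P)
include hc h hP

lemma sq_le_den {u : List ℕ} (hu : u ∈ chainWords B 0 j₀) : 4 * (2 * P) ^ 2 ≤ den u := by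
  have hP₀ : 0 < P := one_pos.trans_le hP
  refine le_trans ?_ (h.rpow_le_den hu)
  calc 4 * (2 * P) ^ 2 = 16 * P ^ 2 := by ring
    _ ≤ (256 * P ^ (2.1 : ℝ)) ^ (20 / 21 : ℝ) := by
        have hconst : (16 : ℝ) ≤ 256 ^ (20 / 21 : ℝ) := by
          rw [show (256 : ℝ) = 16 ^ (2 : ℝ) by norm_num, ← rpow_mul (by norm_num)]
          exact self_le_rpow_of_one_le (by norm_num) (by norm_num)
        rw [mul_rpow (by norm_num) (by positivity), ← rpow_mul hP₀.le,
          show (2.1 * (20 / 21) : ℝ) = (2 : ℕ) by norm_num, rpow_natCast]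
        gcongr
    _ ≤ chainScale W 0 j₀ ^ (20 / 21 : ℝ) := by
        gcongr
        exact hc.rpow_le
    _ ≤ chainScale W 0 j₀ ^ (0.999 : ℝ) :=
        rpow_le_rpow_of_exponent_le (h.one_le_chainScale 0 j₀) (by norm_num)

lemma sqrt_le_scale : P ^ (0.5 : ℝ) ≤ chainScale W 0 j₀ ^ 2 := by
  calc P ^ (0.5 : ℝ) ≤ P ^ (2.1 : ℝ) := rpow_le_rpow_of_exponent_le hP (by norm_num)
    _ ≤ 256 * P ^ (2.1 : ℝ) :=
        le_mul_of_one_le_left (rpow_nonneg (zero_le_one.trans hP) 2.1) (by norm_num)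
    _ ≤ chainScale W 0 j₀ := hc.rpow_le
    _ ≤ chainScale W 0 j₀ ^ 2 := le_self_pow₀ (h.one_le_chainScale 0 j₀) two_ne_zero

lemma sqrt_le_middle_scale : P ^ (0.5 : ℝ) ≤ chainScale W j₀ (j₁ - j₀) ^ 2 := by
  have hmul := hc.mul_le
  rw [chainScale_eq_mul hc.le, mul_comm] at hmul
  calc P ^ (0.5 : ℝ) ≤ P ^ (1 : ℝ) := rpow_le_rpow_of_exponent_le hP (by norm_num)
    _ = P := rpow_one P
    _ ≤ chainScale W j₀ (j₁ - j₀) := le_of_mul_le_mul_left hmul (h.chainScale_pos 0 j₀)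
    _ ≤ chainScale W j₀ (j₁ - j₀) ^ 2 := le_self_pow₀ (h.one_le_chainScale _ _) two_ne_zero

lemma pow_four_div_le : chainScale W 0 j₀ ^ 4 / P ^ (0.5 : ℝ) ≤
    C ^ 2 * P ^ (-0.05 : ℝ) * (chainWords B 0 j₀).card ^ 2 := by
  have hP₀ : 0 < P := one_pos.trans_le hP
  have hX := h.chainScale_pos 0 j₀
  have hsq : chainScale W 0 j₀ * chainScale W 0 j₀ ≤ C ^ 2 * P ^ (4.4 : ℝ) :=
    calc _ ≤ (C * P ^ (2.2 : ℝ)) * (C * P ^ (2.2 : ℝ)) :=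
          mul_self_le_mul_self hX.le hc.le_rpow
      _ = C ^ 2 * P ^ (4.4 : ℝ) := by
          rw [show (4.4 : ℝ) = 2.2 + 2.2 by norm_num, rpow_add hP₀]
          ring
  have hloss := rpow_le_mul_rpow (one_le_pow₀ hc.one_le) hP (by positivity) hsq
    (t := 0.1) (d := -0.05 + 0.5) (by norm_num) (by norm_num) (by norm_num)
  rw [div_le_iff₀ (by positivity)]
  calc chainScale W 0 j₀ ^ 4 = chainScale W 0 j₀ ^ 2 * chainScale W 0 j₀ ^ 2 := by ring
    _ ≤ (chainWords B 0 j₀).card * (chainWords B 0 j₀).card *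
        (C ^ 2 * P ^ (-0.05 + 0.5 : ℝ)) :=
      (h.sq_mul_sq_le_card_mul_card 0 j₀ 0 j₀).trans (by gcongr)
    _ = _ := by
        rw [rpow_add hP₀]
        ring

lemma sq_mul_sq_div_le :
    chainScale W 0 j₀ ^ 2 * chainScale W j₀ (j₁ - j₀) ^ 2 / P ^ (0.5 : ℝ) ≤
      C * P ^ (-0.05 : ℝ) * ((chainWords B 0 j₀).card * (chainWords B j₀ (j₁ - j₀)).card) := by
  have hP₀ : 0 < P := one_pos.trans_le hP
  have hmul : chainScale W 0 j₀ * chainScale W j₀ (j₁ - j₀) ≤ C * P ^ (3.3 : ℝ) :=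
    chainScale_eq_mul (W := W) hc.le ▸ hc.le_rpow_right
  have hX := h.chainScale_pos 0 j₀
  have hY := h.chainScale_pos j₀ (j₁ - j₀)
  have hloss := rpow_le_mul_rpow hc.one_le hP (by positivity) hmul
    (t := 0.1) (d := -0.05 + 0.5) (by norm_num) (by norm_num) (by norm_num)
  rw [div_le_iff₀ (by positivity)]
  calc _ ≤ (chainWords B 0 j₀).card * (chainWords B j₀ (j₁ - j₀)).card *
        (C * P ^ (-0.05 + 0.5 : ℝ)) :=
      (h.sq_mul_sq_le_card_mul_card 0 j₀ j₀ (j₁ - j₀)).trans (by gcongr)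
    _ = _ := by
        rw [rpow_add hP₀]
        ring

end IsCut

section SmallFrequencies

variable {A : Finset ℕ} {K k₀ : ℕ} {B : ℕ → Finset (List ℕ)} {W : ℕ → ℝ} {C N J P : ℕ}
  {F : List ℕ} {j₀ j₁ Q : ℕ} {C' : ℝ} (h : IsBlockChain A K k₀ B W)
  (hE : IsEnsemble A B W C N J F) (hP : 1 ≤ P) (hc : IsCut W J C' P j₀ j₁)
  {q a b : ZMod (N + 1) → ℤ}
  (hap : ∀ k : ZMod (N + 1), IsApprox (N + 1) Q k.val (q k) (a k) (b k))
  {Θ : Finset (ZMod (N + 1))} (hΘ : ∀ k ∈ Θ, q k ≤ 2 * P ∧ |b k| ≤ 2 * P)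
include h hE hP hc hap hΘ

/-- For frequencies with a large denominator, fix everything but the last part of the word, which is
then determined modulo the denominator. -/
lemma sum_normSq_wordSum_le_of_sqrt_le (hq : ∀ k ∈ Θ, (P : ℝ) ^ (0.5 : ℝ) ≤ q k) :
    ∑ k ∈ Θ, ‖wordSum (N + 1) (ensemble B J F) k‖ ^ 2 ≤
      576 * (8 * C + 1) * (5 * (spread + 1) * C' ^ 2 * (P : ℝ) ^ (-0.05 : ℝ)) *
        ((ensemble B J F).card : ℝ) ^ 2 := by
  have hP₁ : (1 : ℝ) ≤ P := by exact_mod_cast hP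
  have hU := h.isComparable 0 j₀
  have hG := (h.isComparable j₀ (J - j₀)).concat
    ((hE.isPositive_filler h).isComparable_singleton.concat
      (h.isComparable j₀ (J - j₀)).image_reverse)
  have hΩ := ensemble_eq_concat_middle_reverse (B := B) (F := F) (hc.le.trans hc.le_length)
  set G := concat (chainWords B j₀ (J - j₀))
    (concat {F} ((chainWords B j₀ (J - j₀)).image List.reverse))
  set X := chainScale W 0 j₀
  set s := (P : ℝ) ^ (0.5 : ℝ)
  have hs : 0 < s := by positivity
  refine hE.sum_normSq_wordSum_le h hΩ hU (hG.concat hU.image_reverse).isPositive hap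
    (fun hs => hs.isSeparating_of_small hΘ fun u hu => by
      exact_mod_cast hc.sq_le_den h hP₁ hu)
    (T := G.card * ((4 * X ^ 2 / s + 1) * (spread + 1))) (by positivity) (fun k hk v _ => ?_) ?_
  · refine (hU.image_reverse.card_competitors_concat_le_left hG.length_eq (hap k).one_le).trans ?_
    gcongr
    exact hq k hk
  · rw [card_concat hG.length_eq, Finset.card_image_of_injective _ List.reverse_injective]
    have hone : 1 ≤ X ^ 2 / s := (one_le_div hs).2 (hc.sqrt_le_scale h hP₁)
    push_cast
    calc X ^ 2 * (G.card * ((4 * X ^ 2 / s + 1) * (spread + 1)))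
        ≤ X ^ 2 * (G.card * ((4 * X ^ 2 / s + X ^ 2 / s) * (spread + 1))) := by gcongr
      _ = 5 * (spread + 1) * G.card * (X ^ 4 / s) := by ring
      _ ≤ 5 * (spread + 1) * G.card *
          (C' ^ 2 * (P : ℝ) ^ (-0.05 : ℝ) * (chainWords B 0 j₀).card ^ 2) := by
          gcongr
          exact hc.pow_four_div_le h hP₁
      _ = _ := by ring

/-- For frequencies with a large remainder, fix everything but the middle part of the word, which is
then confined to a short interval. -/
lemma sum_normSq_wordSum_le_of_sqrt_mul_le (hb : ∀ k ∈ Θ, (P : ℝ) ^ (0.5 : ℝ) * q k ≤ |b k|) :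
    ∑ k ∈ Θ, ‖wordSum (N + 1) (ensemble B J F) k‖ ^ 2 ≤
      576 * (8 * C + 1) *
        ((128 * C ^ 3 + 4 * spread + 1) * (spread + 1) * C' * (P : ℝ) ^ (-0.05 : ℝ)) *
        ((ensemble B J F).card : ℝ) ^ 2 := by
  have hP₁ : (1 : ℝ) ≤ P := by exact_mod_cast hP
  have hU := h.isComparable 0 j₀
  have hG := h.isComparable j₀ (j₁ - j₀)
  have hZ := (h.isComparable j₁ (J - j₁)).concat
    ((hE.isPositive_filler h).isComparable_singleton.concat (h.isComparable 0 J).image_reverse)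
  have hΩ := ensemble_eq_concat_concat (B := B) (F := F) hc.le hc.le_length
  set Z := concat (chainWords B j₁ (J - j₁))
    (concat {F} ((chainWords B 0 J).image List.reverse))
  have hV := (hG.concat hZ).isPositive
  set X := chainScale W 0 j₀
  set Y := chainScale W j₀ (j₁ - j₀)
  set s := (P : ℝ) ^ (0.5 : ℝ)
  have hs : 0 < s := by positivity
  refine hE.sum_normSq_wordSum_le h hΩ hU hV hap (fun hs => hs.isSeparating_of_small hΘ
    fun u hu => by exact_mod_cast hc.sq_le_den h hP₁ hu)
    (T := Z.card * ((2 * (32 * C ^ 2 * (2 * C : ℕ) * Y ^ 2 / s + 2 * spread) + 1) * (spread + 1)))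
    (by positivity) (fun k hk v hv => hG.card_competitors_concat_le_right hZ.isPositive
      (hE.den_le_two_mul h hΩ hU hV v hv) (hap k).one_le hs (hb k hk) (hV v hv)) ?_
  rw [card_concat hG.length_eq]
  have hone : 1 ≤ Y ^ 2 / s := (one_le_div hs).2 (hc.sqrt_le_middle_scale h hP₁)
  push_cast
  calc X ^ 2 * (Z.card * ((2 * (32 * C ^ 2 * (2 * C) * Y ^ 2 / s + 2 * spread) + 1) * (spread + 1)))
      = X ^ 2 * (Z.card * ((128 * C ^ 3 * (Y ^ 2 / s) + (4 * spread + 1) * 1) * (spread + 1))) := by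
        ring
    _ ≤ X ^ 2 * (Z.card *
          ((128 * C ^ 3 * (Y ^ 2 / s) + (4 * spread + 1) * (Y ^ 2 / s)) * (spread + 1))) := by
        gcongr
    _ = (128 * C ^ 3 + 4 * spread + 1) * (spread + 1) * Z.card * (X ^ 2 * Y ^ 2 / s) := by ring
    _ ≤ (128 * C ^ 3 + 4 * spread + 1) * (spread + 1) * Z.card * (C' * (P : ℝ) ^ (-0.05 : ℝ) *
          ((chainWords B 0 j₀).card * (chainWords B j₀ (j₁ - j₀)).card)) := by
        gcongr
        exact hc.sq_mul_sq_div_le h hP₁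
    _ = _ := by ring

end SmallFrequencies

/-! ### Summation over all frequencies -/

/-- The index `j` of the dyadic range `2 ^ j ≤ max q |b| < 2 ^ (j + 1)`. -/
def dyadicLevel (q b : ℤ) : ℕ := Nat.log 2 (max q.natAbs b.natAbs)

lemma dyadicLevel_spec {q b : ℤ} (hq : 1 ≤ q) :
    (q ≤ 2 * (2 ^ dyadicLevel q b : ℕ) ∧ |b| ≤ 2 * (2 ^ dyadicLevel q b : ℕ)) ∧
      (((2 ^ dyadicLevel q b : ℕ) : ℤ) ≤ q ∨ ((2 ^ dyadicLevel q b : ℕ) : ℤ) ≤ |b|) := by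
  have hle : 2 ^ dyadicLevel q b ≤ max q.natAbs b.natAbs := Nat.pow_log_le_self 2 (by lia)
  have hlt : max q.natAbs b.natAbs < 2 ^ dyadicLevel q b * 2 :=
    Nat.lt_pow_succ_log_self one_lt_two _
  have := Int.abs_eq_natAbs b
  have := le_max_iff.1 hle
  have := max_lt_iff.1 hlt
  lia

lemma summable_two_pow_rpow {d : ℝ} (hd : d < 0) :
    Summable fun j : ℕ => ((2 ^ j : ℕ) : ℝ) ^ d := by
  simp_rw [Nat.cast_pow, Nat.cast_ofNat, ← rpow_pow_comm (zero_le_two (α := ℝ)) d]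
  exact summable_geometric_of_lt_one (by positivity) (rpow_lt_one_of_one_lt_of_neg one_lt_two hd)

lemma sum_le_mul_tsum_of_fiberwise_le {ι : Type*} {Θ : Finset ι} {f : ι → ℝ} {g : ℕ → ℝ} {M : ℝ}
    (level : ι → ℕ) (hg₀ : ∀ j, 0 ≤ g j) (hg : Summable g) (hM : 0 ≤ M)
    (hf : ∀ j ∈ Θ.image level, ∑ k ∈ Θ with level k = j, f k ≤ M * g j) :
    ∑ k ∈ Θ, f k ≤ M * ∑' j, g j := by
  rw [← Finset.sum_fiberwise_of_maps_to fun k hk => Finset.mem_image_of_mem level hk]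
  calc _ ≤ ∑ j ∈ Θ.image level, M * g j := Finset.sum_le_sum hf
    _ = M * ∑ j ∈ Θ.image level, g j := (Finset.mul_sum ..).symm
    _ ≤ M * ∑' j, g j := by
        gcongr
        exact hg.sum_le_tsum _ fun j _ => hg₀ j

lemma sqrt_mul_le_abs {P : ℕ} {q b : ℤ} (hP : 1 ≤ P) (hPqb : P ≤ q ∨ P ≤ |b|)
    (hq : q < (P : ℝ) ^ (0.5 : ℝ)) : (P : ℝ) ^ (0.5 : ℝ) * q ≤ |b| := by
  have hP₁ : (1 : ℝ) ≤ P := by exact_mod_cast hP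
  have hqP : (q : ℝ) < P :=
    hq.trans_le ((rpow_le_rpow_of_exponent_le hP₁ (by norm_num)).trans_eq (rpow_one _))
  have hPb : (P : ℤ) ≤ |b| := hPqb.resolve_left (not_le.2 (by exact_mod_cast hqP))
  calc (P : ℝ) ^ (0.5 : ℝ) * q ≤ (P : ℝ) ^ (0.5 : ℝ) * (P : ℝ) ^ (0.5 : ℝ) := by gcongr
    _ = P := by
        rw [← rpow_add (by positivity)]
        norm_num
    _ ≤ |b| := by exact_mod_cast hPb

namespace IsBlockChain

variable {A : Finset ℕ} {K k₀ : ℕ} {B : ℕ → Finset (List ℕ)} {W : ℕ → ℝ}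
  (h : IsBlockChain A K k₀ B W)
include h

lemma eventually_sum_normSq_wordSum_le_of_dyadic (C : ℕ) :
    ∃ D : ℝ, 0 ≤ D ∧ ∀ᶠ N : ℕ in atTop, ∀ J F, IsEnsemble A B W C N J F →
      ∀ (Q : ℕ) (q a b : ZMod (N + 1) → ℤ),
      (∀ k : ZMod (N + 1), IsApprox (N + 1) Q k.val (q k) (a k) (b k)) →
      ∀ P : ℕ, 1 ≤ P → (P : ℝ) ≤ (N : ℝ) ^ (0.12 : ℝ) → ∀ Θ : Finset (ZMod (N + 1)),
      (∀ k ∈ Θ, (q k ≤ 2 * P ∧ |b k| ≤ 2 * P) ∧ (P ≤ q k ∨ P ≤ |b k|)) →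
      ∑ k ∈ Θ, ‖wordSum (N + 1) (ensemble B J F) k‖ ^ 2 ≤
        D * ((ensemble B J F).card : ℝ) ^ 2 * (P : ℝ) ^ (-0.05 : ℝ) := by
  obtain ⟨C', hcut⟩ := h.eventually_exists_isCut
  refine ⟨576 * (8 * C + 1) * (5 * (spread + 1) * C' ^ 2) +
    576 * (8 * C + 1) * ((128 * C ^ 3 + 4 * spread + 1) * (spread + 1) * |C'|), by positivity, ?_⟩
  filter_upwards [hcut] with N hcut J F hE Q q a b hap P hP hPN Θ hΘ
  have hP₁ : (1 : ℝ) ≤ P := by exact_mod_cast hP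
  obtain ⟨j₀, j₁, hc⟩ := hcut P J hP₁ hPN hE.rpow_le_scale
  have hdenominator := sum_normSq_wordSum_le_of_sqrt_le h hE hP hc hap
    (Θ := Θ.filter fun k => (P : ℝ) ^ (0.5 : ℝ) ≤ q k)
    (fun k hk => (hΘ k (Finset.mem_filter.1 hk).1).1) fun k hk => (Finset.mem_filter.1 hk).2
  have hremainder := sum_normSq_wordSum_le_of_sqrt_mul_le h hE hP hc hap
    (Θ := Θ.filter fun k => ¬(P : ℝ) ^ (0.5 : ℝ) ≤ q k)
    (fun k hk => (hΘ k (Finset.mem_filter.1 hk).1).1) fun k hk =>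
      have hk := Finset.mem_filter.1 hk
      sqrt_mul_le_abs hP (hΘ k hk.1).2 (not_le.1 hk.2)
  rw [← Finset.sum_filter_add_sum_filter_not Θ fun k => (P : ℝ) ^ (0.5 : ℝ) ≤ q k,
    abs_of_nonneg (zero_le_one.trans hc.one_le)]
  linarith

lemma eventually_sum_normSq_wordSum_le (C : ℕ) :
    ∃ D : ℝ, 0 ≤ D ∧ ∀ᶠ N : ℕ in atTop, ∀ J F, IsEnsemble A B W C N J F →
      ∑ k : ZMod (N + 1), ‖wordSum (N + 1) (ensemble B J F) k‖ ^ 2 ≤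
        D * ((ensemble B J F).card : ℝ) ^ 2 := by
  obtain ⟨D₁, hD₁, hlarge⟩ := h.eventually_sum_normSq_wordSum_le_of_large C
  obtain ⟨D₂, hD₂, hdyadic⟩ := h.eventually_sum_normSq_wordSum_le_of_dyadic C
  set S := ∑' j : ℕ, ((2 ^ j : ℕ) : ℝ) ^ (-0.05 : ℝ)
  refine ⟨D₁ + D₂ * S, add_nonneg hD₁ (mul_nonneg hD₂ (tsum_nonneg fun j => by positivity)), ?_⟩
  filter_upwards [hlarge, hdyadic] with N hlarge hdyadic J F hE
  choose q a b hap using fun k : ZMod (N + 1) =>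
    exists_isApprox N.succ_pos (Nat.sqrt_pos.2 N.succ_pos) k.val
  have hsmall : ∑ k with ¬((N : ℝ) ^ (0.12 : ℝ) ≤ q k ∨ (N : ℝ) ^ (0.12 : ℝ) ≤ |b k|),
      ‖wordSum (N + 1) (ensemble B J F) k‖ ^ 2 ≤ D₂ * ((ensemble B J F).card : ℝ) ^ 2 * S := by
    refine sum_le_mul_tsum_of_fiberwise_le (fun k => dyadicLevel (q k) (b k))
      (fun j => by positivity) (summable_two_pow_rpow (by norm_num)) (by positivity) fun j hj => ?_
    refine hdyadic J F hE _ q a b hap _ Nat.one_le_two_pow ?_ _ fun k hk => ?_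
    · obtain ⟨k, hk, rfl⟩ := Finset.mem_image.1 hj
      have hk := not_or.1 (Finset.mem_filter.1 hk).2
      rcases (dyadicLevel_spec (b := b k) (hap k).one_le).2 with hle | hle
      · exact le_trans (by exact_mod_cast hle) (not_le.1 hk.1).le
      · exact le_trans (by exact_mod_cast hle) (not_le.1 hk.2).le
    · rw [← (Finset.mem_filter.1 hk).2]
      exact dyadicLevel_spec (hap k).one_le
  rw [← Finset.sum_filter_add_sum_filter_not Finset.univ
    fun k => (N : ℝ) ^ (0.12 : ℝ) ≤ q k ∨ (N : ℝ) ^ (0.12 : ℝ) ≤ |b k|]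
  calc _ ≤ D₁ * ((ensemble B J F).card : ℝ) ^ 2 + D₂ * ((ensemble B J F).card : ℝ) ^ 2 * S :=
        add_le_add (hlarge J F hE q a b hap _ fun k hk => (Finset.mem_filter.1 hk).2) hsmall
    _ = _ := by ring

end IsBlockChain

/-! ### Counting continuants -/

lemma mul_sq_card_le_card_image_mul {R : ℕ} [NeZero R] (Ω : Finset (List ℕ)) :
    R * (Ω.card : ℝ) ^ 2 ≤
      (Ω.image fun w => (den w : ZMod R)).card * ∑ k, ‖wordSum R Ω k‖ ^ 2 := by
  set multiplicity : ZMod R → ℝ := fun z => (Ω.filter fun w => (den w : ZMod R) = z).card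
  have hfourier (k : ZMod R) :
      wordSum R Ω k = ∑ z, (multiplicity z : ℂ) * expChar (k * z) := by
    rw [wordSum, ← Finset.sum_fiberwise Ω fun w => (den w : ZMod R)]
    refine Finset.sum_congr rfl fun z _ => ?_
    rw [Finset.sum_congr rfl fun w hw => by rw [(Finset.mem_filter.1 hw).2]]
    simp [multiplicity]
  have hparseval : ∑ k, ‖wordSum R Ω k‖ ^ 2 = R * ∑ z, multiplicity z ^ 2 := by
    simp_rw [hfourier, sum_normSq_expChar, Complex.norm_real, norm_eq_abs, sq_abs]
  have hcard : ∑ z ∈ Ω.image fun w => (den w : ZMod R), multiplicity z = Ω.card := by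
    rw [Finset.card_eq_sum_card_image (fun w => (den w : ZMod R)) Ω, Nat.cast_sum]
  have hcauchy : (Ω.card : ℝ) ^ 2 ≤
      (Ω.image fun w => (den w : ZMod R)).card * ∑ z, multiplicity z ^ 2 := by
    rw [← hcard]
    refine sq_sum_le_card_mul_sum_sq.trans ?_
    gcongr
    exact Finset.subset_univ _
  rw [hparseval]
  linarith [mul_le_mul_of_nonneg_left hcauchy R.cast_nonneg]

lemma finite_DD (A : Finset ℕ) (N : ℕ) : (DD A N).Finite :=
  (Set.finite_Iic N).subset fun _ hd => hd.2.1

namespace IsEnsemble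

variable {A : Finset ℕ} {K k₀ : ℕ} {B : ℕ → Finset (List ℕ)} {W : ℕ → ℝ} {C N J : ℕ}
  {F : List ℕ} (hE : IsEnsemble A B W C N J F) (h : IsBlockChain A K k₀ B W) (hN : C < N)
include hE h hN

lemma cont_mem_DD {w : List ℕ} (hw : w ∈ ensemble B J F) : cont w ∈ DD A N := by
  have hge := hE.le_mul_den w hw
  have hle := hE.den_le w hw
  rw [← cont_eq_den] at hge hle
  norm_cast at hge hle
  refine ⟨Nat.pos_of_ne_zero fun hzero => ?_, hle, w, ?_, ?_, rfl⟩
  · rw [hzero] at hge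
    lia
  · rintro rfl
    rw [cont] at hge
    lia
  · obtain ⟨u, hu, _, hv, rfl⟩ := mem_concat.1 hw
    obtain ⟨_, hF, _, hr, rfl⟩ := mem_concat.1 hv
    obtain ⟨v, hv', rfl⟩ := Finset.mem_image.1 hr
    rw [Finset.mem_singleton.1 hF]
    intro x hx
    rw [List.mem_append, List.mem_append, List.mem_reverse] at hx
    rcases hx with hx | hx | hx
    exacts [h.letter_mem hu x hx, hE.letter_mem x hx, h.letter_mem hv' x hx]

lemma card_image_den_le :
    ((ensemble B J F).image fun w => (den w : ZMod (N + 1))).card ≤ (DD A N).ncard := by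
  have himage : ((ensemble B J F).image fun w => (den w : ZMod (N + 1))) =
      ((ensemble B J F).image cont).image fun d : ℕ => (d : ZMod (N + 1)) := by
    simp_rw [Finset.image_image, Function.comp_def, ← cont_eq_den, Int.cast_natCast]
  rw [himage]
  refine Finset.card_image_le.trans ?_
  rw [← Set.ncard_coe_finset]
  refine Set.ncard_le_ncard (fun d hd => ?_) (finite_DD A N)
  obtain ⟨w, hw, rfl⟩ := Finset.mem_image.1 hd
  exact hE.cont_mem_DD h hN hw

lemma succ_le_mul_ncard_DD {D : ℝ}
    (hD : ∑ k : ZMod (N + 1), ‖wordSum (N + 1) (ensemble B J F) k‖ ^ 2 ≤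
      D * ((ensemble B J F).card : ℝ) ^ 2) : (N + 1 : ℝ) ≤ (DD A N).ncard * D := by
  have hcard : (0 : ℝ) < (ensemble B J F).card ^ 2 := by
    have := h.ensemble_nonempty (J := J) (F := F)
    positivity
  have himage : ((((ensemble B J F).image fun w => (den w : ZMod (N + 1))).card : ℕ) : ℝ) ≤
      (DD A N).ncard := by
    exact_mod_cast hE.card_image_den_le h hN
  refine le_of_mul_le_mul_right ?_ hcard
  calc (N + 1 : ℝ) * (ensemble B J F).card ^ 2
      ≤ ((ensemble B J F).image fun w => (den w : ZMod (N + 1))).card *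
          ∑ k, ‖wordSum (N + 1) (ensemble B J F) k‖ ^ 2 := by
        exact_mod_cast mul_sq_card_le_card_image_mul (R := N + 1) (ensemble B J F)
    _ ≤ (DD A N).ncard * (D * (ensemble B J F).card ^ 2) := by gcongr
    _ = _ := by ring

end IsEnsemble

lemma nonempty_of_hdim_pos {A : Finset ℕ} (hδ : 0 < hdim A) : A.Nonempty := by
  by_contra hA
  rw [Finset.not_nonempty_iff_eq_empty] at hA
  have hempty : cfSet ∅ = ∅ :=
    Set.eq_empty_of_forall_notMem fun x ⟨d, hd, _⟩ => Finset.notMem_empty _ (hd 0)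
  rw [hA, hdim, hempty, dimH_empty] at hδ
  exact hδ.ne' rfl

end Continuant

open Continuant in
theorem bourgain_kontorovich_general
    (A : Finset ℕ) (hpos : ∀ a ∈ A, 0 < a) (hδ : 19 / 20 < hdim A) :
    ∃ c : ℝ, 0 < c ∧ ∃ N₀ : ℕ, ∀ N : ℕ, N₀ ≤ N →
      c * N ≤ ((DD A N).ncard : ℝ) := by
  obtain ⟨k₀, B, W, h⟩ := exists_isBlockChain hpos (fun a ha => Finset.le_sup (f := id) ha) hδ
  obtain ⟨C, hensemble⟩ := h.eventually_exists_isEnsemble (nonempty_of_hdim_pos (by linarith))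
  obtain ⟨D, hD, hmeanSquare⟩ := h.eventually_sum_normSq_wordSum_le C
  obtain ⟨N₀, hN₀⟩ := eventually_atTop.1
    ((hensemble.and hmeanSquare).and (eventually_gt_atTop C))
  refine ⟨1 / (D + 1), by positivity, N₀, fun N hN => ?_⟩
  obtain ⟨⟨⟨J, F, hE⟩, hsum⟩, hCN⟩ := hN₀ N hN
  have hcount := hE.succ_le_mul_ncard_DD h hCN (hsum J F hE)
  rw [one_div_mul_eq_div, div_le_iff₀ (by positivity)]
  linarith [Nat.cast_nonneg (α := ℝ) (DD A N).ncard]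

theorem bourgain_kontorovich
    (A : Finset ℕ) (hpos : ∀ a ∈ A, 0 < a) (hcard : 2 ≤ A.card)
    (hδ : 1 - 5/312 < hdim A) :
    ∃ c : ℝ, 0 < c ∧ ∃ N₀ : ℕ, ∀ N : ℕ, N₀ ≤ N →
      c * N ≤ ((DD A N).ncard : ℝ) :=
  bourgain_kontorovich_general A hpos (by linarith)

end
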